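/- Let F : ℝ² × ℝ⁹ → ℝ be given by F(x,y,λ) = xy(x+y)(y−x) + λ₁ + λ₂x + λ₃y + λ₄x² + λ₅xy + λ₆y² + λ₇x²y + λ₈xy² + λ₉x²y². Then there exists ε₀ > 0 such that for every ε with 0 < ε ≤ ε₀ there exists δ > 0 with the following property: writing Σ = {λ ∈ ℝ⁹ : ‖λ‖ < δ and there exists p ∈ ℝ² with ‖p‖ ≤ ε, F(p,λ) = 0 and the gradient of F(·,λ) vanishes at p}, there exist 52 points of the set {λ ∈ ℝ⁹ : ‖λ‖ < δ} \ Σ lying pairwise in distinct connected components of this set (i.e. the complement of the local discriminant has at least 52 connected components). -/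

import Mathlib

/-!
The eight vertices of a regular octagon centred at the origin are placed on the bisectors of the
sectors cut out by the four lines `xy(x+y)(y-x) = 0`. On the boundary of the octagon every small
deformation behaves like the undeformed quartic (`Good`). If moreover it has no critical point on
the zero level (`NoCrit`), then the components of the regions `F < 0` and `F > 0` in the octagon do
not change under small changes of the parameter (`stable_reps`). Hence the following data are
constant on the connected components of the complement of the discriminant (`holds_of_connected`):
which pairs of vertices two steps apart lie in the same component, how many components of each sign
contain no vertex, and the relative position of two such components. The position is the sign of
an indefinite quadratic form on differences of their points; it is well defined because the
quartic, restricted to a line on which the form vanishes, would otherwise have too many sign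
changes (`quartic_signs`, `not_aligned`, `form_sign`). These data are recorded as truth values of
finitely many atomic properties (`Atom`).

The complement is then shown to be rich by nine explicit polynomials with a symmetry axis which, in
coordinates adapted to two opposite sectors, have quartic part `s⁴ - 6s²t² + t⁴` and are even in
`t` (`Cf`, `NF`); a translation brings any such polynomial into the family (`shift_exists`), and
quasihomogeneous rescaling makes the parameter arbitrarily small (`Facts.small`). For these
polynomials joined vertices are exhibited by explicit paths, vertices are separated by explicit
curves, vertex-free components are bounded from below in number by disjoint boxes (`NF.boxes`) and
from above by counting local extrema (`exists_pit`, `PitC`), and critical points on the zero level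
are excluded by coprimality of one-variable quartics with their derivatives (`nc_cert`). The
rotation by a right angle and a reflection combined with a change of sign of the function turn the
nine types into `2 + 2 + 4 + 4 + 5 * 8 = 52` lists of truth values, any two of which contradict each
other (`labels_conflict`).
-/


/-- The standard versal deformation of the `X₉²` singularity `xy(x+y)(y−x)`. -/
noncomputable def X92Def (p : EuclideanSpace ℝ (Fin 2)) (l : EuclideanSpace ℝ (Fin 9)) : ℝ :=
  p 0 * p 1 * (p 0 + p 1) * (p 1 - p 0) + l 0 + l 1 * p 0 + l 2 * p 1 + l 3 * (p 0) ^ 2 + l 4 * (p 0 * p 1) + l 5 * (p 1) ^ 2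
    + l 6 * ((p 0) ^ 2 * p 1) + l 7 * (p 0 * (p 1) ^ 2) + l 8 * ((p 0) ^ 2 * (p 1) ^ 2)

/-- The local discriminant: parameters `l` with `‖l‖ < δ` such that the corresponding
function has a real critical point `p` with `‖p‖ ≤ ε` and critical value `0`. -/
noncomputable def X92Disc (ε δ : ℝ) : Set (EuclideanSpace ℝ (Fin 9)) :=
  {l | ‖l‖ < δ ∧ ∃ p : EuclideanSpace ℝ (Fin 2), ‖p‖ ≤ ε ∧ X92Def p l = 0 ∧
    fderiv ℝ (fun q => X92Def q l) p = 0}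

namespace X92

open Set Filter Topology

/-! ### Stability of the components of a sign region -/

set_option linter.unusedSectionVars false

section Theory

variable {E : Type*} [NormedAddCommGroup E] [NormedSpace ℝ E]

/-- The part of the region `Q` on which `f` is negative. -/
def neg (Q : Set E) (f : E → ℝ) : Set E := {x | x ∈ Q ∧ f x < 0}

/-- `f` (with directional derivatives `D`) is regular on `Q`: at each zero `x ∈ Q` there is a
direction `v` in which `f` decreases and along which points of `Q` near `x` stay in `Q`. -/
def Regular (Q : Set E) (f : E → ℝ) (D : E → E → ℝ) : Prop :=
  ∀ x ∈ Q, f x = 0 → ∃ v, D x v < 0 ∧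
    ∃ r > 0, ∀ y ∈ Q, dist y x < r → ∀ τ : ℝ, 0 ≤ τ → τ ≤ r → y + τ • v ∈ Q

theorem joined_of_ball {Q : Set E} (hQ : Convex ℝ Q) {f : E → ℝ} {c x y : E} {r : ℝ}
    (hf : ∀ z ∈ Q, dist z c < r → f z < 0) (hx : x ∈ Q) (hy : y ∈ Q)
    (hxc : dist x c < r) (hyc : dist y c < r) : JoinedIn (neg Q f) x y := by
  apply JoinedIn.of_segment_subset
  intro z hz
  have hzQ := hQ.segment_subset hx hy hz
  exact ⟨hzQ, hf z hzQ ((convex_ball c r).segment_subset hxc hyc hz)⟩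

/-- Certificate for two points lying in different components: a continuous function that changes
sign between them and whose zero set avoids the set. -/
theorem not_joined_of_sep {X : Type*} [TopologicalSpace X] {U : Set X} {g : X → ℝ}
    (hg : Continuous g) {p q : X} (hp : g p < 0) (hq : 0 < g q)
    (h0 : ∀ x ∈ U, g x ≠ 0) : ¬ JoinedIn U p q := by
  rintro ⟨γ, hγ⟩
  have hc : Continuous (fun t => g (γ t)) := hg.comp γ.continuous
  have h := mem_range_of_exists_le_of_exists_ge (c := (0 : ℝ)) hc
    ⟨0, by simpa using hp.le⟩ ⟨1, by simpa using hq.le⟩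
  obtain ⟨t, ht⟩ := h
  exact h0 _ (hγ t) ht

variable {Λ : Type*} [TopologicalSpace Λ] {F : Λ → E → ℝ} {D : Λ → E → E → ℝ} {Q : Set E}

/-- A direction of descent at a point remains one at nearby points and parameters, with a uniform step
size. -/
theorem eventually_descend
    (hD : ∀ v, Continuous fun z : Λ × E => D z.1 z.2 v)
    (hd : ∀ l x v τ, HasDerivAt (fun τ : ℝ => F l (x + τ • v)) (D l (x + τ • v) v) τ)
    {l₀ : Λ} {x v : E} (hv : D l₀ x v < 0) :
    ∃ r > 0, ∀ᶠ l in 𝓝 l₀, ∀ y, dist y x < r → ∀ τ : ℝ, 0 < τ → τ ≤ r →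
      F l (y + τ • v) < F l y := by
  have h1 : ∀ᶠ z : Λ × E in 𝓝 (l₀, x), D z.1 z.2 v < 0 :=
    (hD v).continuousAt.eventually (gt_mem_nhds hv)
  rw [nhds_prod_eq, eventually_prod_iff] at h1
  obtain ⟨pa, hpa, pb, hpb, h⟩ := h1
  obtain ⟨R, hR, hball⟩ := Metric.eventually_nhds_iff.1 hpb
  refine ⟨R / (2 * (1 + ‖v‖)), by positivity, hpa.mono fun l hl y hy τ hτ hτr => ?_⟩
  have hden : (0 : ℝ) < 2 * (1 + ‖v‖) := by positivity
  have key : ∀ σ ∈ Icc 0 τ, D l (y + σ • v) v < 0 := by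
    intro σ hσ
    apply h hl
    apply hball
    have e1 : dist (y + σ • v) x ≤ dist y x + σ * ‖v‖ := by
      rw [dist_eq_norm, dist_eq_norm]
      calc ‖y + σ • v - x‖ = ‖(y - x) + σ • v‖ := by congr 1; abel
        _ ≤ ‖y - x‖ + ‖σ • v‖ := norm_add_le _ _
        _ = _ := by rw [norm_smul, Real.norm_of_nonneg hσ.1]
    have e2 : σ * ‖v‖ ≤ R / (2 * (1 + ‖v‖)) * ‖v‖ :=
      mul_le_mul_of_nonneg_right (hσ.2.trans hτr) (norm_nonneg _)
    have e3 : R / (2 * (1 + ‖v‖)) + R / (2 * (1 + ‖v‖)) * ‖v‖ = R / 2 := by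
      field_simp
    linarith
  have anti : StrictAntiOn (fun σ : ℝ => F l (y + σ • v)) (Icc 0 τ) := by
    apply strictAntiOn_of_deriv_neg (convex_Icc _ _)
    · exact fun σ _ => (hd l y v σ).continuousAt.continuousWithinAt
    · intro σ hσ
      rw [interior_Icc] at hσ
      rw [(hd l y v σ).deriv]
      exact key σ ⟨hσ.1.le, hσ.2.le⟩
  have := anti (left_mem_Icc.2 hτ.le) (right_mem_Icc.2 hτ.le) hτ
  simpa using this

/-- Zeros of a regular function are limits of points where it is negative. -/
theorem Regular.mem_closure
    (hD : ∀ v, Continuous fun z : Λ × E => D z.1 z.2 v)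
    (hd : ∀ l x v τ, HasDerivAt (fun τ : ℝ => F l (x + τ • v)) (D l (x + τ • v) v) τ)
    {l₀ : Λ} (hreg : Regular Q (F l₀) (D l₀)) {x : E} (hx : x ∈ Q) (h0 : F l₀ x = 0) :
    x ∈ closure (neg Q (F l₀)) := by
  obtain ⟨v, hv, r, hr, hQ⟩ := hreg x hx h0
  obtain ⟨r', hr', hev⟩ := eventually_descend hD hd hv
  have hdesc := hev.self_of_nhds x (by simpa using hr')
  have ht : Tendsto (fun τ : ℝ => x + τ • v) (𝓝[>] 0) (𝓝 x) := by
    have : Continuous fun τ : ℝ => x + τ • v := by fun_prop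
    have := this.tendsto 0
    simp only [zero_smul, add_zero] at this
    exact this.mono_left nhdsWithin_le_nhds
  refine mem_closure_of_tendsto ht ?_
  have : Ioc (0 : ℝ) (min r r') ∈ 𝓝[>] (0 : ℝ) := Ioc_mem_nhdsGT (lt_min hr hr')
  filter_upwards [this] with τ hτ
  refine ⟨hQ x hx (by simpa using hr) τ hτ.1.le (hτ.2.trans (min_le_left _ _)), ?_⟩
  rw [← h0]
  exact hdesc τ hτ.1 (hτ.2.trans (min_le_right _ _))

/-- Uniform local connectivity: near any point of `Q` and for parameters near `l₀`, the negative
regions are connected to finitely many fixed points (in fact at most one). -/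
theorem local_reps (hQ : Convex ℝ Q)
    (hF : Continuous fun z : Λ × E => F z.1 z.2)
    (hD : ∀ v, Continuous fun z : Λ × E => D z.1 z.2 v)
    (hd : ∀ l x v τ, HasDerivAt (fun τ : ℝ => F l (x + τ • v)) (D l (x + τ • v) v) τ)
    {l₀ : Λ} (hreg : Regular Q (F l₀) (D l₀)) {x : E} (hx : x ∈ Q) :
    ∃ N ∈ 𝓝 x, (∀ᶠ l in 𝓝 l₀, ∀ y ∈ N, y ∉ neg Q (F l)) ∨
      ∃ p ∈ neg Q (F l₀), ∀ᶠ l in 𝓝 l₀, ∀ y ∈ N, y ∈ neg Q (F l) → JoinedIn (neg Q (F l)) y p := by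
  -- a point where `F l₀` is negative has a ball on which all nearby `F l` are negative
  have hneg : ∀ p ∈ neg Q (F l₀), ∃ r > 0, ∀ᶠ l in 𝓝 l₀, ∀ y, dist y p < r → F l y < 0 := by
    intro p hp
    have h1 : ∀ᶠ z : Λ × E in 𝓝 (l₀, p), F z.1 z.2 < 0 :=
      hF.continuousAt.eventually (gt_mem_nhds hp.2)
    rw [nhds_prod_eq, eventually_prod_iff] at h1
    obtain ⟨pa, hpa, pb, hpb, h⟩ := h1
    obtain ⟨R, hR, hball⟩ := Metric.eventually_nhds_iff.1 hpb
    exact ⟨R, hR, hpa.mono fun l hl y hy => h hl (hball hy)⟩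
  rcases lt_trichotomy (F l₀ x) 0 with hlt | heq | hgt
  · obtain ⟨r, hr, hev⟩ := hneg x ⟨hx, hlt⟩
    refine ⟨Metric.ball x r, Metric.ball_mem_nhds x hr, Or.inr ⟨x, ⟨hx, hlt⟩, ?_⟩⟩
    filter_upwards [hev] with l hl y hy hyU
    exact joined_of_ball hQ (fun z _ hz => hl z hz) hyU.1 hx hy (by simpa using hr)
  · obtain ⟨v, hv, r, hr, hQv⟩ := hreg x hx heq
    obtain ⟨r', hr', hev⟩ := eventually_descend hD hd hv
    set τ := min r r' with hτ
    have hτ0 : 0 < τ := lt_min hr hr'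
    have hp : x + τ • v ∈ neg Q (F l₀) := by
      refine ⟨hQv x hx (by simpa using hr) τ hτ0.le (min_le_left _ _), ?_⟩
      rw [← heq]
      exact hev.self_of_nhds x (by simpa using hr') τ hτ0 (min_le_right _ _)
    obtain ⟨r₂, hr₂, hev₂⟩ := hneg _ hp
    refine ⟨Metric.ball x (min r₂ τ), Metric.ball_mem_nhds x (lt_min hr₂ hτ0),
      Or.inr ⟨x + τ • v, hp, ?_⟩⟩
    filter_upwards [hev, hev₂] with l hl hl₂ y hy hyU
    have hy1 : dist y x < τ := lt_of_lt_of_le hy (min_le_right _ _)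
    have hy2 : dist y x < r₂ := lt_of_lt_of_le hy (min_le_left _ _)
    have step1 : JoinedIn (neg Q (F l)) y (y + τ • v) := by
      apply JoinedIn.of_segment_subset
      intro z hz
      rw [segment_eq_image'] at hz
      obtain ⟨θ, hθ, rfl⟩ := hz
      have e : y + θ • (y + τ • v - y) = y + (θ * τ) • v := by
        rw [add_sub_cancel_left, smul_smul]
      simp only [e]
      have h2 : θ * τ ≤ τ := by nlinarith [hθ.2]
      have h1 : 0 ≤ θ * τ := mul_nonneg hθ.1 hτ0.le
      refine ⟨hQv y hyU.1 (hy1.trans_le (min_le_left _ _)) _ h1 (h2.trans (min_le_left _ _)), ?_⟩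
      rcases h1.eq_or_lt with h | h
      · rw [← h, zero_smul, add_zero]; exact hyU.2
      · exact (hl y (hy1.trans_le (min_le_right _ _)) _ h
          (h2.trans (min_le_right _ _))).trans hyU.2
    refine step1.trans (joined_of_ball hQ (fun z _ hz => hl₂ z hz) step1.target_mem.1 hp.1 ?_ ?_)
    · simpa [dist_eq_norm] using hy2
    · simpa using hr₂
  · have h1 : ∀ᶠ z : Λ × E in 𝓝 (l₀, x), 0 < F z.1 z.2 :=
      hF.continuousAt.eventually (lt_mem_nhds hgt)
    rw [nhds_prod_eq, eventually_prod_iff] at h1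
    obtain ⟨pa, hpa, pb, hpb, h⟩ := h1
    exact ⟨{y | pb y}, hpb, Or.inl (hpa.mono fun l hl y hy hyU => absurd hyU.2 (h hl hy).not_gt)⟩

/-- Finitely many points of the negative region of `F l₀` meet every component of the negative
region of `F l` for all `l` near `l₀`. -/
theorem finite_reps (hQ : Convex ℝ Q) (hQc : IsCompact Q)
    (hF : Continuous fun z : Λ × E => F z.1 z.2)
    (hD : ∀ v, Continuous fun z : Λ × E => D z.1 z.2 v)
    (hd : ∀ l x v τ, HasDerivAt (fun τ : ℝ => F l (x + τ • v)) (D l (x + τ • v) v) τ)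
    {l₀ : Λ} (hreg : Regular Q (F l₀) (D l₀)) :
    ∃ T : Set E, T.Finite ∧ T ⊆ neg Q (F l₀) ∧
      ∀ᶠ l in 𝓝 l₀, ∀ y ∈ neg Q (F l), ∃ p ∈ T, JoinedIn (neg Q (F l)) y p := by
  have main : ∃ T : Set E, T.Finite ∧ T ⊆ neg Q (F l₀) ∧
      ∀ᶠ l in 𝓝 l₀, ∀ y ∈ Q, y ∈ neg Q (F l) → ∃ p ∈ T, JoinedIn (neg Q (F l)) y p := by
    refine hQc.induction_on (p := fun N => ∃ T : Set E, T.Finite ∧ T ⊆ neg Q (F l₀) ∧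
      ∀ᶠ l in 𝓝 l₀, ∀ y ∈ N, y ∈ neg Q (F l) → ∃ p ∈ T, JoinedIn (neg Q (F l)) y p) ?_ ?_ ?_ ?_
    · exact ⟨∅, finite_empty, empty_subset _, by simp⟩
    · rintro s t hst ⟨T, h1, h2, h3⟩
      exact ⟨T, h1, h2, h3.mono fun l hl y hy => hl y (hst hy)⟩
    · rintro s t ⟨T, h1, h2, h3⟩ ⟨T', h1', h2', h3'⟩
      refine ⟨T ∪ T', h1.union h1', union_subset h2 h2', ?_⟩
      filter_upwards [h3, h3'] with l hl hl' y hy hyU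
      rcases hy with hy | hy
      · obtain ⟨p, hp, hj⟩ := hl y hy hyU
        exact ⟨p, Or.inl hp, hj⟩
      · obtain ⟨p, hp, hj⟩ := hl' y hy hyU
        exact ⟨p, Or.inr hp, hj⟩
    · intro x hx
      obtain ⟨N, hN, h⟩ := local_reps hQ hF hD hd hreg hx
      refine ⟨N, mem_nhdsWithin_of_mem_nhds hN, ?_⟩
      rcases h with h | ⟨p, hp, h⟩
      · exact ⟨∅, finite_empty, empty_subset _, h.mono fun l hl y hy hyU => absurd hyU (hl y hy)⟩
      · exact ⟨{p}, finite_singleton p, by simpa using hp,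
          h.mono fun l hl y hy hyU => ⟨p, rfl, hl y hy hyU⟩⟩
  obtain ⟨T, h1, h2, h3⟩ := main
  exact ⟨T, h1, h2, h3.mono fun l hl y hy => hl y hy.1 hy⟩

theorem eventually_joined (hF : Continuous fun z : Λ × E => F z.1 z.2)
    {l₀ : Λ} {p q : E} (h : JoinedIn (neg Q (F l₀)) p q) :
    ∀ᶠ l in 𝓝 l₀, JoinedIn (neg Q (F l)) p q := by
  obtain ⟨γ, hγ⟩ := h
  have : ∀ᶠ l in 𝓝 l₀, ∀ t ∈ (univ : Set unitInterval), F l (γ t) < 0 := by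
    apply isCompact_univ.eventually_forall_of_forall_eventually
    intro t _
    have hc : Continuous fun z : Λ × unitInterval => F z.1 (γ z.2) :=
      hF.comp (continuous_fst.prodMk (γ.continuous.comp continuous_snd))
    exact hc.continuousAt.eventually (gt_mem_nhds (hγ t).2)
  exact this.mono fun l hl => ⟨γ, fun t => ⟨(hγ t).1, hl t (mem_univ t)⟩⟩

/-- Two points in different components of a regular negative region stay in different components
when the parameter is perturbed. -/
theorem eventually_not_joined (hQ : Convex ℝ Q) (hQc : IsCompact Q)
    (hF : Continuous fun z : Λ × E => F z.1 z.2)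
    (hD : ∀ v, Continuous fun z : Λ × E => D z.1 z.2 v)
    (hd : ∀ l x v τ, HasDerivAt (fun τ : ℝ => F l (x + τ • v)) (D l (x + τ • v) v) τ)
    {l₀ : Λ} (hreg : Regular Q (F l₀) (D l₀)) {p q : E}
    (hp : p ∈ neg Q (F l₀)) (hq : q ∈ neg Q (F l₀))
    (h : ¬ JoinedIn (neg Q (F l₀)) p q) :
    ∀ᶠ l in 𝓝 l₀, ¬ JoinedIn (neg Q (F l)) p q := by
  set U := neg Q (F l₀) with hU
  set A : Set E := {y | JoinedIn U p y} with hA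
  set B : Set E := U \ A with hB
  have hpA : p ∈ A := JoinedIn.refl hp
  have hqB : q ∈ B := ⟨hq, h⟩
  have hAU : A ⊆ U := fun y hy => hy.target_mem
  have hcl : closure U ⊆ Q := by
    have : closure U ⊆ closure Q := closure_mono fun y hy => hy.1
    rwa [hQc.isClosed.closure_eq] at this
  have hdisj : ∀ x ∈ closure A, x ∉ closure B := by
    intro x hxA hxB
    have hxQ : x ∈ Q := hcl (closure_mono hAU hxA)
    obtain ⟨N, hN, hloc⟩ := local_reps hQ hF hD hd hreg hxQ
    obtain ⟨a, haN, haA⟩ := mem_closure_iff_nhds.1 hxA N hN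
    obtain ⟨b, hbN, hbB⟩ := mem_closure_iff_nhds.1 hxB N hN
    rcases hloc with h1 | ⟨c, _, h1⟩
    · exact h1.self_of_nhds a haN (hAU haA)
    · have ja := h1.self_of_nhds a haN (hAU haA)
      have jb := h1.self_of_nhds b hbN hbB.1
      exact hbB.2 ((show JoinedIn U p a from haA).trans (ja.trans jb.symm))
  set g : E → ℝ := fun x => Metric.infDist x A - Metric.infDist x B with hg
  have hgc : Continuous g := (Metric.continuous_infDist_pt A).sub (Metric.continuous_infDist_pt B)
  have hgp : g p < 0 := by
    have h1 : Metric.infDist p A = 0 := Metric.infDist_zero_of_mem hpA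
    have h2 : 0 < Metric.infDist p B := by
      have := (Metric.mem_closure_iff_infDist_zero (x := p) ⟨q, hqB⟩).not.1
        (hdisj p (subset_closure hpA))
      exact lt_of_le_of_ne Metric.infDist_nonneg (Ne.symm this)
    simp only [hg, h1]; linarith
  have hgq : 0 < g q := by
    have h1 : Metric.infDist q B = 0 := Metric.infDist_zero_of_mem hqB
    have h2 : 0 < Metric.infDist q A := by
      have := (Metric.mem_closure_iff_infDist_zero (x := q) ⟨p, hpA⟩).not.1
        (fun hqA => hdisj q hqA (subset_closure hqB))
      exact lt_of_le_of_ne Metric.infDist_nonneg (Ne.symm this)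
    simp only [hg, h1]; linarith
  have hpos : ∀ x ∈ Q ∩ {x | g x = 0}, 0 < F l₀ x := by
    rintro x ⟨hxQ, hx0⟩
    have hx0' : Metric.infDist x A = Metric.infDist x B := sub_eq_zero.1 hx0
    have hnot : x ∉ closure U := by
      have hUAB : U = A ∪ B := by rw [hB, union_sdiff_cancel hAU]
      rw [hUAB, closure_union]
      rintro (hx | hx)
      · have h0 := (Metric.mem_closure_iff_infDist_zero (x := x) ⟨p, hpA⟩).1 hx
        rw [h0] at hx0'
        exact hdisj x hx ((Metric.mem_closure_iff_infDist_zero ⟨q, hqB⟩).2 hx0'.symm)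
      · have h0 := (Metric.mem_closure_iff_infDist_zero (x := x) ⟨q, hqB⟩).1 hx
        rw [h0] at hx0'
        exact hdisj x ((Metric.mem_closure_iff_infDist_zero ⟨p, hpA⟩).2 hx0') hx
    rcases lt_trichotomy (F l₀ x) 0 with h1 | h1 | h1
    · exact absurd (subset_closure (show x ∈ U from ⟨hxQ, h1⟩)) hnot
    · exact absurd (Regular.mem_closure hD hd hreg hxQ h1) hnot
    · exact h1
  have hK : IsCompact (Q ∩ {x | g x = 0}) :=
    hQc.inter_right (isClosed_eq hgc continuous_const)
  have hev : ∀ᶠ l in 𝓝 l₀, ∀ x ∈ Q ∩ {x | g x = 0}, 0 < F l x := by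
    apply hK.eventually_forall_of_forall_eventually
    intro x hx
    exact hF.continuousAt.eventually (lt_mem_nhds (hpos x hx))
  filter_upwards [hev] with l hl
  exact not_joined_of_sep hgc hgp hgq fun x hx h0 => (hl x ⟨hx.1, h0⟩).not_gt hx.2

/-- The component structure of the negative region is locally constant in the parameter:
there is a finite set `T` meeting all components for nearby parameters, and on `T` together with a
prescribed finite set `T₀` the relation of being joined does not change. -/
theorem stable_reps (hQ : Convex ℝ Q) (hQc : IsCompact Q)
    (hF : Continuous fun z : Λ × E => F z.1 z.2)
    (hD : ∀ v, Continuous fun z : Λ × E => D z.1 z.2 v)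
    (hd : ∀ l x v τ, HasDerivAt (fun τ : ℝ => F l (x + τ • v)) (D l (x + τ • v) v) τ)
    {l₀ : Λ} (hreg : Regular Q (F l₀) (D l₀)) {T₀ : Set E} (hT₀ : T₀.Finite)
    (hne : ∀ p ∈ T₀, F l₀ p ≠ 0) :
    ∃ T : Set E, T ⊆ neg Q (F l₀) ∧
      ∀ᶠ l in 𝓝 l₀, T ⊆ neg Q (F l) ∧ (∀ y ∈ neg Q (F l), ∃ p ∈ T, JoinedIn (neg Q (F l)) y p) ∧
        ∀ p ∈ T ∪ T₀, ∀ q ∈ T ∪ T₀, (JoinedIn (neg Q (F l)) p q ↔ JoinedIn (neg Q (F l₀)) p q) := by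
  obtain ⟨T, hTf, hTU, hT⟩ := finite_reps hQ hQc hF hD hd hreg
  refine ⟨T, hTU, ?_⟩
  have hFl : ∀ p, Continuous fun l => F l p := fun p =>
    hF.comp (continuous_id.prodMk continuous_const)
  have hfin : (T ∪ T₀).Finite := hTf.union hT₀
  have h1 : ∀ᶠ l in 𝓝 l₀, ∀ p ∈ T, p ∈ neg Q (F l) := by
    rw [hTf.eventually_all]
    intro p hp
    filter_upwards [(hFl p).continuousAt.eventually (gt_mem_nhds (hTU hp).2)] with l hl
    exact ⟨(hTU hp).1, hl⟩
  have hst : ∀ p ∈ T ∪ T₀, p ∈ neg Q (F l₀) ∨ ∀ᶠ l in 𝓝 l₀, p ∉ neg Q (F l) := by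
    intro p hp
    by_cases hpU : p ∈ neg Q (F l₀)
    · exact Or.inl hpU
    · right
      have hp0 : p ∈ T₀ := hp.resolve_left fun h => hpU (hTU h)
      by_cases hpQ : p ∈ Q
      · have : 0 < F l₀ p :=
          lt_of_le_of_ne (not_lt.1 fun h => hpU ⟨hpQ, h⟩) (Ne.symm (hne p hp0))
        filter_upwards [(hFl p).continuousAt.eventually (lt_mem_nhds this)] with l hl hh
        exact hl.not_gt hh.2
      · exact Eventually.of_forall fun l hh => hpQ hh.1
  have h2 : ∀ᶠ l in 𝓝 l₀, ∀ p ∈ T ∪ T₀, ∀ q ∈ T ∪ T₀,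
      (JoinedIn (neg Q (F l)) p q ↔ JoinedIn (neg Q (F l₀)) p q) := by
    rw [hfin.eventually_all]
    intro p hp
    rw [hfin.eventually_all]
    intro q hq
    by_cases hj : JoinedIn (neg Q (F l₀)) p q
    · filter_upwards [eventually_joined hF hj] with l hl
      exact ⟨fun _ => hj, fun _ => hl⟩
    · have : ∀ᶠ l in 𝓝 l₀, ¬ JoinedIn (neg Q (F l)) p q := by
        rcases hst p hp with hpU | hpU
        · rcases hst q hq with hqU | hqU
          · exact eventually_not_joined hQ hQc hF hD hd hreg hpU hqU hj
          · exact hqU.mono fun l hl hh => hl hh.target_mem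
        · exact hpU.mono fun l hl hh => hl hh.source_mem
      filter_upwards [this] with l hl
      exact ⟨fun hh => absurd hh hl, fun hh => absurd hh hj⟩
  filter_upwards [h1, hT, h2] with l a b c
  exact ⟨a, b, c⟩

end Theory

end X92

namespace X92

open Set Filter Topology

/-! ### The octagon -/

/-- The silver ratio `1 + √2`, the slope of the bisectors between the four lines. -/
noncomputable def bt : ℝ := 1 + √2

theorem bt_sq : bt ^ 2 = 2 * bt + 1 := by
  have h : √2 ^ 2 = (2 : ℝ) := Real.sq_sqrt (by norm_num)
  unfold bt; nlinarith

theorem bt_gt : 2 < bt := by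
  have h : (1 : ℝ) < √2 := by
    rw [Real.lt_sqrt (by norm_num)]; norm_num
  unfold bt; linarith

theorem bt_lt : bt < 5 / 2 := by
  have h : √2 < (3 / 2 : ℝ) := by
    rw [Real.sqrt_lt' (by norm_num)]; norm_num
  unfold bt; linarith

/-- The eight directions bisecting the sectors cut out by the lines `xy(x+y)(y-x) = 0`, in
counterclockwise order; the quartic form is negative on even ones and positive on odd ones. -/
noncomputable def vv : Fin 8 → ℝ × ℝ :=
  ![(bt, 1), (1, bt), (-1, bt), (-bt, 1), (-bt, -1), (-1, -bt), (1, -bt), (bt, -1)]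

/-- The Euclidean inner product on `ℝ × ℝ`. -/
def ip (a b : ℝ × ℝ) : ℝ := a.1 * b.1 + a.2 * b.2

theorem ip_add (a b c : ℝ × ℝ) : ip a (b + c) = ip a b + ip a c := by
  simp only [ip, Prod.fst_add, Prod.snd_add]; ring

theorem ip_sub (a b c : ℝ × ℝ) : ip a (b - c) = ip a b - ip a c := by
  simp only [ip, Prod.fst_sub, Prod.snd_sub]; ring

theorem ip_smul (a b : ℝ × ℝ) (r : ℝ) : ip a (r • b) = r * ip a b := by
  simp only [ip, Prod.smul_fst, Prod.smul_snd, smul_eq_mul]; ring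

theorem continuous_ip (a : ℝ × ℝ) : Continuous (ip a) := by
  unfold ip; fun_prop

/-- Outer normal of the side of the octagon between the vertices `j` and `j + 1`. -/
noncomputable def nn (j : Fin 8) : ℝ × ℝ := vv j + vv (j + 1)

/-- Direction of the side of the octagon between the vertices `j` and `j + 1`. -/
noncomputable def ee (j : Fin 8) : ℝ × ℝ := vv (j + 1) - vv j

/-- The regular octagon with vertices `ρ • vv j`. -/
def Oct (ρ : ℝ) : Set (ℝ × ℝ) := {p | ∀ j, ip (nn j) p ≤ 2 * bt ^ 2 * ρ}

theorem nn_vv (j k : Fin 8) : ip (nn j) (vv k) = 2 * bt ^ 2 ∧ (k = j ∨ k = j + 1) ∨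
    ip (nn j) (vv k) < 2 * bt ^ 2 := by
  have h1 := bt_sq
  have h2 := bt_gt
  rw [h1]
  fin_cases j <;> fin_cases k <;>
    first
    | (left; refine ⟨?_, by decide⟩; simp [ip, nn, vv]; nlinarith)
    | (right; simp [ip, nn, vv]; nlinarith)

theorem nn_vv_le (j k : Fin 8) : ip (nn j) (vv k) ≤ 2 * bt ^ 2 := by
  rcases nn_vv j k with h | h
  · exact h.1.le
  · exact h.le

theorem nn_vv_self (j : Fin 8) : ip (nn j) (vv j) = 2 * bt ^ 2 := by
  have h1 := bt_sq
  fin_cases j <;> simp [ip, nn, vv] <;> nlinarith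

theorem nn_vv_succ (j : Fin 8) : ip (nn j) (vv (j + 1)) = 2 * bt ^ 2 := by
  have h1 := bt_sq
  fin_cases j <;> simp [ip, nn, vv] <;> nlinarith

theorem nn_ee (j : Fin 8) : ip (nn j) (ee j) = 0 := by
  rw [ee, ip_sub, nn_vv_self, nn_vv_succ, sub_self]

theorem eq_smul_ee (j : Fin 8) (w : ℝ × ℝ) (h : ip (nn j) w = 0) :
    w = (ip (ee j) w / 4) • ee j := by
  have h1 := bt_sq
  have h2 := bt_gt
  obtain ⟨a, b⟩ := w
  have hab : ∀ z : ℝ, (bt + 1) * z = 0 → z = 0 := fun z hz => by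
    rcases mul_eq_zero.1 hz with h | h
    · linarith
    · exact h
  have hodd : ∀ a : ℝ, (bt = 0 ∨ a = 0) → a = 0 := fun a h => h.resolve_left (by linarith)
  fin_cases j <;> simp [ip, nn, ee, vv] at h ⊢
  · have hb : b = -a := by linarith [hab (a + b) (by linarith)]
    subst hb
    constructor <;> first | linear_combination (-a / 2) * h1 | linear_combination (a / 2) * h1
  · rw [hodd _ h]; constructor <;> ring
  · have hb : b = a := by linarith [hab (a - b) (by linarith)]
    subst hb
    constructor <;> linear_combination (-b / 2) * h1
  · rw [hodd _ h]; constructor <;> ring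
  · have hb : b = -a := by linarith [hab (a + b) (by linarith)]
    subst hb
    constructor <;> first | linear_combination (-a / 2) * h1 | linear_combination (a / 2) * h1
  · rw [hodd _ h]; constructor <;> ring
  · have hb : b = a := by linarith [hab (a - b) (by linarith)]
    subst hb
    constructor <;> linear_combination (-b / 2) * h1
  · rw [hodd _ h]; constructor <;> ring

theorem oct_convex (ρ : ℝ) : Convex ℝ (Oct ρ) := by
  intro p hp q hq a b ha hb hab j
  rw [ip_add, ip_smul, ip_smul]
  have h1 := mul_le_mul_of_nonneg_left (hp j) ha
  have h2 := mul_le_mul_of_nonneg_left (hq j) hb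
  have h3 : a * (2 * bt ^ 2 * ρ) + b * (2 * bt ^ 2 * ρ) = 2 * bt ^ 2 * ρ := by
    rw [← add_mul, hab, one_mul]
  linarith

theorem oct_closed (ρ : ℝ) : IsClosed (Oct ρ) := by
  have : Oct ρ = ⋂ j, {p | ip (nn j) p ≤ 2 * bt ^ 2 * ρ} := by
    ext p; simp [Oct]
  rw [this]
  exact isClosed_iInter fun j => isClosed_le (continuous_ip _) continuous_const

theorem oct_abs {ρ : ℝ} {p : ℝ × ℝ} (hp : p ∈ Oct ρ) : |p.1| ≤ bt * ρ ∧ |p.2| ≤ bt * ρ := by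
  have h2 := bt_gt
  have h1 := hp 1
  have h3 := hp 3
  have h5 := hp 5
  have h7 := hp 7
  simp [ip, nn, vv] at h1 h3 h5 h7
  have key : ∀ z : ℝ, 2 * bt * z ≤ 2 * bt ^ 2 * ρ → z ≤ bt * ρ := by
    intro z hz
    have : 2 * bt * (z - bt * ρ) ≤ 0 := by nlinarith
    by_contra hc
    push Not at hc
    have : 0 < 2 * bt * (z - bt * ρ) := by
      apply mul_pos <;> linarith
    linarith
  refine ⟨abs_le.2 ⟨?_, ?_⟩, abs_le.2 ⟨?_, ?_⟩⟩
  · have := key (-p.1) (by linarith); linarith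
  · exact key _ (by linarith)
  · have := key (-p.2) (by linarith); linarith
  · exact key _ (by linarith)

theorem oct_compact (ρ : ℝ) : IsCompact (Oct ρ) := by
  refine (isCompact_Icc (a := ((-(bt * ρ), -(bt * ρ)) : ℝ × ℝ))
    (b := ((bt * ρ, bt * ρ) : ℝ × ℝ))).of_isClosed_subset (oct_closed ρ) ?_
  intro p hp
  obtain ⟨h1, h2⟩ := oct_abs hp
  rw [abs_le] at h1 h2
  exact ⟨⟨h1.1, h2.1⟩, ⟨h1.2, h2.2⟩⟩

theorem vertex_mem {ρ : ℝ} (hρ : 0 ≤ ρ) (k : Fin 8) : ρ • vv k ∈ Oct ρ := by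
  intro j
  rw [ip_smul]
  nlinarith [mul_le_mul_of_nonneg_left (nn_vv_le j k) hρ]

/-- Every point of a side of the octagon lies between two consecutive vertices. -/
theorem exists_edge {ρ : ℝ} (hρ : 0 < ρ) {x : ℝ × ℝ} (hx : x ∈ Oct ρ) {j : Fin 8}
    (hj : ip (nn j) x = 2 * bt ^ 2 * ρ) :
    ∃ t : ℝ, 0 ≤ t ∧ t ≤ 1 ∧ x = ρ • vv j + (t * ρ) • ee j := by
  have h0 : ip (nn j) (x - ρ • vv j) = 0 := by
    rw [ip_sub, ip_smul, nn_vv_self, hj]; ring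
  have h1 := eq_smul_ee j _ h0
  set c := ip (ee j) (x - ρ • vv j) / 4 with hc
  have hx' : x = ρ • vv j + c • ee j := by rw [← h1]; abel
  have hm : (j - 1) + 1 = j := by omega
  have e1 : ip (nn (j - 1)) (vv j) = 2 * bt ^ 2 := by
    have := nn_vv_succ (j - 1); rwa [hm] at this
  have e2 : ip (nn (j - 1)) (vv (j + 1)) < 2 * bt ^ 2 := by
    rcases nn_vv (j - 1) (j + 1) with h | h
    · exact ((show ∀ j : Fin 8, ¬ (j + 1 = j - 1 ∨ j + 1 = j - 1 + 1) by decide) j h.2).elim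
    · exact h
  have e3 : ip (nn (j + 1)) (vv (j + 1)) = 2 * bt ^ 2 := nn_vv_self _
  have e4 : ip (nn (j + 1)) (vv j) < 2 * bt ^ 2 := by
    rcases nn_vv (j + 1) j with h | h
    · exact ((show ∀ j : Fin 8, ¬ (j = j + 1 ∨ j = j + 1 + 1) by decide) j h.2).elim
    · exact h
  have i1 := hx (j - 1)
  have i2 := hx (j + 1)
  rw [hx', ip_add, ip_smul, ip_smul, ee, ip_sub] at i1 i2
  have c0 : 0 ≤ c := by
    by_contra hneg
    push Not at hneg
    nlinarith
  have c1 : c ≤ ρ := by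
    by_contra hneg
    push Not at hneg
    nlinarith
  refine ⟨c / ρ, by positivity, (div_le_one hρ).2 c1, ?_⟩
  rw [div_mul_cancel₀ _ hρ.ne', ← hx']

theorem edge_mem {ρ : ℝ} (hρ : 0 ≤ ρ) (j : Fin 8) {t : ℝ} (h0 : 0 ≤ t) (h1 : t ≤ 1) :
    ρ • vv j + (t * ρ) • ee j ∈ Oct ρ := by
  have h := oct_convex ρ (vertex_mem hρ j) (vertex_mem hρ (j + 1)) (sub_nonneg.2 h1) h0 (by ring)
  convert h using 1
  rw [ee]
  module

/-- Moving from near `x` in a direction tangent to all sides through `x` does not leave `Oct ρ`. -/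
theorem tangent_stays {ρ : ℝ} {x v : ℝ × ℝ} (hx : x ∈ Oct ρ)
    (hv : ∀ j, ip (nn j) x = 2 * bt ^ 2 * ρ → ip (nn j) v = 0) :
    ∃ r > 0, ∀ y ∈ Oct ρ, dist y x < r → ∀ τ : ℝ, 0 ≤ τ → τ ≤ r → y + τ • v ∈ Oct ρ := by
  have hev : ∀ᶠ z : (ℝ × ℝ) × ℝ in 𝓝 (x, 0), ∀ j, ip (nn j) x < 2 * bt ^ 2 * ρ →
      ip (nn j) (z.1 + z.2 • v) < 2 * bt ^ 2 * ρ := by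
    rw [eventually_all]
    intro j
    by_cases hj : ip (nn j) x < 2 * bt ^ 2 * ρ
    · have hc : Continuous fun z : (ℝ × ℝ) × ℝ => ip (nn j) (z.1 + z.2 • v) :=
        (continuous_ip _).comp (by fun_prop)
      have := (hc.tendsto (x, (0 : ℝ))).eventually (gt_mem_nhds (by simpa using hj))
      exact this.mono fun z hz _ => hz
    · exact Eventually.of_forall fun z h => absurd h hj
  obtain ⟨r, hr, h⟩ := Metric.eventually_nhds_iff.1 hev
  refine ⟨r / 2, by positivity, fun y hy hyx τ h0 hτ j => ?_⟩
  rcases (hx j).lt_or_eq with hj | hj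
  · have hd : dist (y, τ) (x, (0 : ℝ)) < r := by
      rw [Prod.dist_eq, max_lt_iff]
      refine ⟨by simp only; linarith, ?_⟩
      simp only [Real.dist_eq, sub_zero, abs_of_nonneg h0]; linarith
    exact (h hd j hj).le
  · rw [ip_add, ip_smul, hv j hj, mul_zero, add_zero]
    exact hy j

end X92

namespace X92

open Set Filter Topology

/-! ### The deformation on the octagon -/

/-- The parameter space of the deformation. -/
abbrev Par := EuclideanSpace ℝ (Fin 9)

/-- The deformation as a function on `ℝ × ℝ`. -/
noncomputable def FF (l : Par) (p : ℝ × ℝ) : ℝ :=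
  p.1 * p.2 * (p.1 + p.2) * (p.2 - p.1) + l 0 + l 1 * p.1 + l 2 * p.2 + l 3 * p.1 ^ 2 +
    l 4 * (p.1 * p.2) + l 5 * p.2 ^ 2 + l 6 * (p.1 ^ 2 * p.2) + l 7 * (p.1 * p.2 ^ 2) +
    l 8 * (p.1 ^ 2 * p.2 ^ 2)

/-- The partial derivative of `FF l` in the first variable. -/
noncomputable def gx (l : Par) (p : ℝ × ℝ) : ℝ :=
  p.2 ^ 3 - 3 * p.1 ^ 2 * p.2 + l 1 + 2 * l 3 * p.1 + l 4 * p.2 + 2 * l 6 * (p.1 * p.2) +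
    l 7 * p.2 ^ 2 + 2 * l 8 * (p.1 * p.2 ^ 2)

/-- The partial derivative of `FF l` in the second variable. -/
noncomputable def gy (l : Par) (p : ℝ × ℝ) : ℝ :=
  3 * p.1 * p.2 ^ 2 - p.1 ^ 3 + l 2 + l 4 * p.1 + 2 * l 5 * p.2 + l 6 * p.1 ^ 2 +
    2 * l 7 * (p.1 * p.2) + 2 * l 8 * (p.1 ^ 2 * p.2)

/-- The sign attached to a Boolean: `false` is `+`, `true` is `-`. -/
def sg (σ : Bool) : ℝ := if σ then -1 else 1

@[simp] theorem sg_false : sg false = 1 := rfl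
@[simp] theorem sg_true : sg true = -1 := rfl

theorem sg_not (σ : Bool) : sg (!σ) = -sg σ := by cases σ <;> simp

theorem sg_xor (σ τ : Bool) : sg (σ ^^ τ) = sg σ * sg τ := by cases σ <;> cases τ <;> simp

theorem sg_mul_self (σ : Bool) : sg σ * sg σ = 1 := by cases σ <;> simp

/-- The function `FF l` with the sign `σ`; its negative region is where `FF l` has sign `-σ`. -/
noncomputable def GG (σ : Bool) (l : Par) (p : ℝ × ℝ) : ℝ := sg σ * FF l p

/-- Directional derivative of `GG σ l`. -/
noncomputable def DD (σ : Bool) (l : Par) (p v : ℝ × ℝ) : ℝ :=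
  sg σ * (gx l p * v.1 + gy l p * v.2)

theorem continuous_FF : Continuous fun z : Par × (ℝ × ℝ) => FF z.1 z.2 := by
  unfold FF; fun_prop

theorem continuous_gx : Continuous fun z : Par × (ℝ × ℝ) => gx z.1 z.2 := by
  unfold gx; fun_prop

theorem continuous_gy : Continuous fun z : Par × (ℝ × ℝ) => gy z.1 z.2 := by
  unfold gy; fun_prop

theorem continuous_GG (σ : Bool) : Continuous fun z : Par × (ℝ × ℝ) => GG σ z.1 z.2 :=
  continuous_const.mul continuous_FF

theorem continuous_DD (σ : Bool) (v : ℝ × ℝ) :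
    Continuous fun z : Par × (ℝ × ℝ) => DD σ z.1 z.2 v :=
  continuous_const.mul ((continuous_gx.mul continuous_const).add
    (continuous_gy.mul continuous_const))

theorem continuous_DD_comp {X : Type*} [TopologicalSpace X] (σ : Bool) (v : ℝ × ℝ) {a : X → Par}
    {b : X → ℝ × ℝ} (ha : Continuous a) (hb : Continuous b) :
    Continuous fun x => DD σ (a x) (b x) v := by
  unfold DD gx gy; fun_prop

theorem hasDerivAt_FF (l : Par) (x v : ℝ × ℝ) (τ : ℝ) :
    HasDerivAt (fun τ : ℝ => FF l (x + τ • v))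
      (gx l (x + τ • v) * v.1 + gy l (x + τ • v) * v.2) τ := by
  have hx : HasDerivAt (fun τ : ℝ => x.1 + τ * v.1) v.1 τ := by
    simpa using ((hasDerivAt_id τ).mul_const v.1).const_add x.1
  have hy : HasDerivAt (fun τ : ℝ => x.2 + τ * v.2) v.2 τ := by
    simpa using ((hasDerivAt_id τ).mul_const v.2).const_add x.2
  have h := (((((((((hx.mul hy).mul (hx.add hy)).mul (hy.sub hx)).add_const (l 0)).add
    (hx.const_mul (l 1))).add (hy.const_mul (l 2))).add ((hx.pow 2).const_mul (l 3))).add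
    ((hx.mul hy).const_mul (l 4))).add ((hy.pow 2).const_mul (l 5))).add
    (((hx.pow 2).mul hy).const_mul (l 6)) |>.add ((hx.mul (hy.pow 2)).const_mul (l 7)) |>.add
    (((hx.pow 2).mul (hy.pow 2)).const_mul (l 8))
  refine (h.congr_deriv ?_).congr_of_eventuallyEq (Eventually.of_forall fun z => ?_)
  · simp [gx, gy]; ring
  · simp [FF]

theorem hasDerivAt_GG (σ : Bool) (l : Par) (x v : ℝ × ℝ) (τ : ℝ) :
    HasDerivAt (fun τ : ℝ => GG σ l (x + τ • v)) (DD σ l (x + τ • v) v) τ :=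
  (hasDerivAt_FF l x v τ).const_mul (sg σ)

attribute [irreducible] FF gx gy GG DD

/-- Sign type of the sector of the direction `vv j`: `GG (sv j) 0 (vv j) < 0`. -/
def sv (j : Fin 8) : Bool := j.val % 2 == 1

theorem sv_succ (j : Fin 8) : sv (j + 1) = !sv j := by revert j; decide

theorem sv_pred (j : Fin 8) : sv (j - 1) = !sv j := by revert j; decide

/-- `FF l` behaves on the boundary of the octagon of size `R` as the undeformed quartic does: it is
strictly monotone along the sides, has the right sign in `η`-neighbourhoods of the vertices, and
its homogeneous part of degree four has the right sign in the directions of the vertices. -/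
structure Good (R η : ℝ) (l : Par) : Prop where
  edge : ∀ j : Fin 8, ∀ t ∈ Icc (0 : ℝ) 1, 0 < DD (sv j) l (R • vv j + (t * R) • ee j) (ee j)
  vert : ∀ j : Fin 8, ∀ x, dist x (R • vv j) < η → GG (sv j) l x < 0
  lead : ∀ j : Fin 8, sg (sv j) * ((vv j).1 * (vv j).2 * ((vv j).1 + (vv j).2) *
    ((vv j).2 - (vv j).1) + l 8 * ((vv j).1 ^ 2 * (vv j).2 ^ 2)) < 0

theorem base_vert {R : ℝ} (hR : 0 < R) (j : Fin 8) : GG (sv j) 0 (R • vv j) < 0 := by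
  have h1 := bt_sq
  have h2 := bt_gt
  have h4 : 0 < R ^ 4 := by positivity
  have h3 : bt * 1 * (bt + 1) * (1 - bt) < 0 := by nlinarith
  have : GG (sv j) 0 (R • vv j) = R ^ 4 * (bt * 1 * (bt + 1) * (1 - bt)) := by
    fin_cases j <;> simp [GG, FF, sv, vv, sg] <;> ring
  rw [this]
  exact mul_neg_of_pos_of_neg h4 h3

theorem base_edge {R : ℝ} (hR : 0 < R) (j : Fin 8) {t : ℝ} (ht : t ∈ Icc (0 : ℝ) 1) :
    0 < DD (sv j) 0 (R • vv j + (t * R) • ee j) (ee j) := by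
  have h1 := bt_sq
  have h2 := bt_gt
  obtain ⟨t0, t1⟩ := ht
  have h4 : 0 < R ^ 3 := by positivity
  have h5 : 0 ≤ t * (1 - t) := mul_nonneg t0 (by linarith)
  have key : DD (sv j) 0 (R • vv j + (t * R) • ee j) (ee j) =
      R ^ 3 * (4 + 4 * bt + 24 * bt * (t * (1 - t))) := by
    fin_cases j <;> simp [DD, gx, gy, sv, vv, sg, ee] <;>
      first
      | linear_combination R ^ 3 * (4 + 2 * bt) * h1
      | linear_combination R ^ 3 * (3 + 2 * bt - bt ^ 2 + 6 * bt ^ 2 * t - 6 * bt ^ 2 * t ^ 2 +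
          6 * t - 6 * t ^ 2) * h1
  rw [key]
  have : 0 ≤ bt * (t * (1 - t)) := mul_nonneg (by linarith) h5
  exact mul_pos h4 (by linarith)

/-- All sufficiently small parameters behave well on the boundary of a fixed octagon. -/
theorem good_exists {R : ℝ} (hR : 0 < R) :
    ∃ η > 0, ∃ δ > 0, ∀ l : Par, ‖l‖ < δ → Good R η l := by
  have e1 : ∀ᶠ l : Par in 𝓝 0, ∀ j : Fin 8, ∀ t ∈ Icc (0 : ℝ) 1,
      0 < DD (sv j) l (R • vv j + (t * R) • ee j) (ee j) := by
    rw [eventually_all]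
    intro j
    apply isCompact_Icc.eventually_forall_of_forall_eventually
    intro t ht
    have hm : Continuous fun z : Par × ℝ => (R • vv j + (z.2 * R) • ee j : ℝ × ℝ) := by fun_prop
    have hc : Continuous fun z : Par × ℝ =>
        DD (sv j) z.1 (R • vv j + (z.2 * R) • ee j) (ee j) :=
      continuous_DD_comp (sv j) (ee j) continuous_fst hm
    exact hc.continuousAt.eventually (lt_mem_nhds (base_edge hR j ht))
  have e2 : ∀ᶠ z : Par × ℝ in 𝓝 0 ×ˢ 𝓝[>] 0, ∀ j : Fin 8, ∀ x, dist x (R • vv j) < z.2 →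
      GG (sv j) z.1 x < 0 := by
    rw [eventually_all]
    intro j
    have h1 : ∀ᶠ z : Par × (ℝ × ℝ) in 𝓝 (0, R • vv j), GG (sv j) z.1 z.2 < 0 :=
      (continuous_GG (sv j)).continuousAt.eventually (gt_mem_nhds (base_vert hR j))
    rw [nhds_prod_eq, eventually_prod_iff] at h1
    obtain ⟨pa, hpa, pb, hpb, h⟩ := h1
    obtain ⟨r, hr, hball⟩ := Metric.eventually_nhds_iff.1 hpb
    have h3 : ∀ᶠ t : ℝ in 𝓝[>] 0, t < r := nhdsWithin_le_nhds (gt_mem_nhds hr)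
    refine (hpa.prod_mk h3).mono ?_
    rintro ⟨l, t⟩ ⟨ha, hb⟩ x hx
    exact h ha (hball (hx.trans hb))
  have e3 : ∀ᶠ l : Par in 𝓝 0, ∀ j : Fin 8,
      sg (sv j) * ((vv j).1 * (vv j).2 * ((vv j).1 + (vv j).2) *
      ((vv j).2 - (vv j).1) + l 8 * ((vv j).1 ^ 2 * (vv j).2 ^ 2)) < 0 := by
    rw [eventually_all]
    intro j
    have hc : Continuous fun l : Par => sg (sv j) * ((vv j).1 * (vv j).2 * ((vv j).1 + (vv j).2) *
      ((vv j).2 - (vv j).1) + l 8 * ((vv j).1 ^ 2 * (vv j).2 ^ 2)) := by fun_prop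
    refine (hc.tendsto 0).eventually (gt_mem_nhds ?_)
    simpa [GG, FF] using base_vert one_pos j
  rw [eventually_prod_iff] at e2
  obtain ⟨pa, hpa, pb, hpb, h⟩ := e2
  obtain ⟨η, hη, hη0⟩ := (hpb.and self_mem_nhdsWithin).exists
  obtain ⟨δ, hδ, hball⟩ := Metric.eventually_nhds_iff.1 ((e1.and hpa).and e3)
  refine ⟨η, hη0, δ, hδ, fun l hl => ?_⟩
  obtain ⟨⟨a, b⟩, c⟩ := hball (by simpa using hl : dist l 0 < δ)
  exact ⟨a, h b hη, c⟩

/-- The parameter of the function obtained from `FF l` by the quasihomogeneous rescaling. -/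
noncomputable def scl (c : ℝ) (l : Par) : Par :=
  !₂[c ^ 4 * l 0, c ^ 3 * l 1, c ^ 3 * l 2, c ^ 2 * l 3, c ^ 2 * l 4, c ^ 2 * l 5, c * l 6,
    c * l 7, l 8]

theorem FF_scl (c : ℝ) (l : Par) (p : ℝ × ℝ) : FF (scl c l) (c • p) = c ^ 4 * FF l p := by
  simp [FF, scl]; ring

theorem gx_scl (c : ℝ) (l : Par) (p : ℝ × ℝ) : gx (scl c l) (c • p) = c ^ 3 * gx l p := by
  simp [gx, scl]; ring

theorem gy_scl (c : ℝ) (l : Par) (p : ℝ × ℝ) : gy (scl c l) (c • p) = c ^ 3 * gy l p := by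
  simp [gy, scl]; ring

theorem GG_scl (σ : Bool) (c : ℝ) (l : Par) (p : ℝ × ℝ) :
    GG σ (scl c l) (c • p) = c ^ 4 * GG σ l p := by
  simp only [GG, FF_scl]; ring

theorem DD_scl (σ : Bool) (c : ℝ) (l : Par) (p v : ℝ × ℝ) :
    DD σ (scl c l) (c • p) v = c ^ 3 * DD σ l p v := by
  simp only [DD, gx_scl, gy_scl]; ring

theorem tendsto_scl (l : Par) (hl : l 8 = 0) : Tendsto (fun c => scl c l) (𝓝 0) (𝓝 0) := by
  have hc : Continuous fun c => scl c l := by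
    unfold scl
    refine (PiLp.continuous_toLp 2 _).comp (continuous_pi fun i => ?_)
    fin_cases i <;> simp <;> fun_prop
  have h0 : scl 0 l = 0 := by
    ext i
    fin_cases i <;> simp [scl, hl]
  simpa [h0] using hc.tendsto 0

theorem good_eventually {l : Par} (hl : l 8 = 0) (C : ℝ) : ∀ᶠ R : ℝ in atTop, Good R C l := by
  obtain ⟨η, hη, δ, hδ, hgood⟩ := good_exists one_pos
  have h1 : ∀ᶠ R : ℝ in atTop, ‖scl R⁻¹ l‖ < δ := by
    have := ((tendsto_scl l hl).comp tendsto_inv_atTop_zero).norm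
    simp only [norm_zero] at this
    exact this.eventually (gt_mem_nhds hδ)
  filter_upwards [h1, eventually_gt_atTop 0, eventually_ge_atTop (C / η)] with R h1 hR hC
  have hC' : C ≤ R * η := (div_le_iff₀ hη).1 hC
  have g := hgood _ h1
  have hR' : R⁻¹ * R = 1 := inv_mul_cancel₀ hR.ne'
  refine ⟨fun j t ht => ?_, fun j x hx => ?_, fun j => ?_⟩
  · have := g.edge j t ht
    have e : (1 : ℝ) • vv j + (t * 1) • ee j = R⁻¹ • (R • vv j + (t * R) • ee j) := by
      rw [smul_add, smul_smul, smul_smul, hR', mul_left_comm, hR']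
    rw [e, DD_scl] at this
    exact pos_of_mul_pos_right this (by positivity)
  · have e : (1 : ℝ) • vv j = R⁻¹ • R • vv j := by rw [smul_smul, hR']
    have := g.vert j (R⁻¹ • x) (by
      rw [e, dist_smul₀, Real.norm_of_nonneg (by positivity), inv_mul_lt_iff₀ hR]
      exact hx.trans_le hC')
    rw [GG_scl] at this
    exact neg_of_mul_neg_right this (by positivity)
  · simpa [scl] using g.lead j

end X92

namespace X92

open Set Filter Topology

/-! ### Sign regions and vertex-free components -/

/-- The part of the octagon of size `R` on which `FF l` has the sign opposite to `sg σ`. -/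
def U (R : ℝ) (σ : Bool) (l : Par) : Set (ℝ × ℝ) := neg (Oct R) (GG σ l)

/-- `FF l` has no critical point with value `0` in the octagon. -/
def NoCrit (R : ℝ) (l : Par) : Prop := ∀ p ∈ Oct R, FF l p = 0 → ¬ (gx l p = 0 ∧ gy l p = 0)

theorem GG_not (σ : Bool) (l : Par) (p : ℝ × ℝ) : GG (!σ) l p = -GG σ l p := by
  simp only [GG, sg_not]; ring

theorem DD_not (σ : Bool) (l : Par) (p v : ℝ × ℝ) : DD (!σ) l p v = -DD σ l p v := by
  simp only [DD, sg_not]; ring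

theorem DD_neg (σ : Bool) (l : Par) (p v : ℝ × ℝ) : DD σ l p (-v) = -DD σ l p v := by
  simp only [DD, Prod.fst_neg, Prod.snd_neg]; ring

theorem GG_eq_zero {σ : Bool} {l : Par} {p : ℝ × ℝ} : GG σ l p = 0 ↔ FF l p = 0 := by
  cases σ <;> simp [GG]

theorem continuous_GG_right (σ : Bool) (l : Par) : Continuous (GG σ l) := by
  unfold GG FF; fun_prop

variable {R η : ℝ} {l : Par}

theorem Good.vert_ne (hg : Good R η l) (hη : 0 < η) (j : Fin 8) : FF l (R • vv j) ≠ 0 := by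
  intro h
  have := hg.vert j (R • vv j) (by simpa using hη)
  rw [GG_eq_zero.2 h] at this
  exact this.false

theorem Good.vert_mem (hg : Good R η l) (hη : 0 < η) (hR : 0 < R) (j : Fin 8) :
    R • vv j ∈ U R (sv j) l :=
  ⟨vertex_mem hR.le j, hg.vert j (R • vv j) (by simpa using hη)⟩

theorem Good.vert_notMem (hg : Good R η l) (hη : 0 < η) {σ : Bool} {j : Fin 8} (h : sv j ≠ σ) :
    R • vv j ∉ U R σ l := by
  rintro ⟨_, h1⟩
  have h2 := hg.vert j (R • vv j) (by simpa using hη)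
  have : σ = !sv j := by revert h; cases σ <;> cases sv j <;> simp
  rw [this, GG_not] at h1
  linarith

/-- Interior points of a side lie on no other side. -/
theorem edge_unique (hR : 0 < R) {j k : Fin 8} {t : ℝ} (h0 : 0 < t) (h1 : t < 1)
    (h : ip (nn k) (R • vv j + (t * R) • ee j) = 2 * bt ^ 2 * R) : k = j := by
  rw [ip_add, ip_smul, ip_smul, ee, ip_sub] at h
  have a := nn_vv_le k j
  have b := nn_vv_le k (j + 1)
  have e : R * ((1 - t) * (2 * bt ^ 2 - ip (nn k) (vv j)) +
      t * (2 * bt ^ 2 - ip (nn k) (vv (j + 1)))) = 0 := by linear_combination -h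
  have e' := (mul_eq_zero.1 e).resolve_left hR.ne'
  have a' : ip (nn k) (vv j) = 2 * bt ^ 2 := by
    have p1 : 0 ≤ (1 - t) * (2 * bt ^ 2 - ip (nn k) (vv j)) :=
      mul_nonneg (by linarith) (by linarith)
    have p2 : 0 ≤ t * (2 * bt ^ 2 - ip (nn k) (vv (j + 1))) := mul_nonneg h0.le (by linarith)
    have p3 : (1 - t) * (2 * bt ^ 2 - ip (nn k) (vv j)) = 0 := by linarith
    have := (mul_eq_zero.1 p3).resolve_left (by linarith)
    linarith
  have b' : ip (nn k) (vv (j + 1)) = 2 * bt ^ 2 := by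
    rw [a'] at e'
    have p3 : t * (2 * bt ^ 2 - ip (nn k) (vv (j + 1))) = 0 := by linarith
    have := (mul_eq_zero.1 p3).resolve_left h0.ne'
    linarith
  have c1 : j = k ∨ j = k + 1 := by
    rcases nn_vv k j with h | h
    · exact h.2
    · exact absurd a' h.ne
  have c2 : j + 1 = k ∨ j + 1 = k + 1 := by
    rcases nn_vv k (j + 1) with h | h
    · exact h.2
    · exact absurd b' h.ne
  clear * - c1 c2
  revert j k; decide

/-- Interior zeros are regular as they are not critical. A zero on the boundary is not a vertex, and
one of the two directions along its side is a descent direction that does not leave the octagon. -/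
theorem regular_of_good (hR : 0 < R) (hη : 0 < η) (hg : Good R η l) (hn : NoCrit R l) (σ : Bool) :
    Regular (Oct R) (GG σ l) (DD σ l) := by
  intro x hx h0
  have hF := GG_eq_zero.1 h0
  by_cases hact : ∃ j, ip (nn j) x = 2 * bt ^ 2 * R
  · obtain ⟨j, hj⟩ := hact
    obtain ⟨t, t0, t1, rfl⟩ := exists_edge hR hx hj
    have ht0 : 0 < t := by
      refine lt_of_le_of_ne t0 fun h => hg.vert_ne hη j ?_
      rw [← h] at hF; simpa using hF
    have ht1 : t < 1 := by
      refine lt_of_le_of_ne t1 fun h => hg.vert_ne hη (j + 1) ?_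
      rw [h] at hF; simpa [ee, smul_sub] using hF
    have hd := hg.edge j t ⟨t0, t1⟩
    have hstay : ∀ v : ℝ × ℝ, ip (nn j) v = 0 → ∃ r > 0, ∀ y ∈ Oct R,
        dist y (R • vv j + (t * R) • ee j) < r → ∀ τ : ℝ, 0 ≤ τ → τ ≤ r → y + τ • v ∈ Oct R :=
      fun v hv => tangent_stays hx fun k hk => by rw [edge_unique hR ht0 ht1 hk]; exact hv
    by_cases hs : σ = sv j
    · refine ⟨-ee j, ?_, hstay _ ?_⟩
      · rw [DD_neg, hs]; linarith
      · have := ip_smul (nn j) (ee j) (-1)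
        rw [nn_ee] at this; simpa using this
    · refine ⟨ee j, ?_, hstay _ (nn_ee j)⟩
      have : σ = !sv j := by revert hs; cases σ <;> cases sv j <;> simp
      rw [this, DD_not]; linarith
  · push Not at hact
    refine ⟨(-sg σ) • (gx l x, gy l x), ?_, tangent_stays hx fun j hj => absurd hj (hact j)⟩
    have hne := hn x hx hF
    have h1 : 0 < gx l x ^ 2 + gy l x ^ 2 := by
      by_cases h : gx l x = 0
      · have : gy l x ≠ 0 := fun h' => hne ⟨h, h'⟩
        positivity
      · positivity
    have : DD σ l x ((-sg σ) • (gx l x, gy l x)) = -(sg σ * sg σ) * (gx l x ^ 2 + gy l x ^ 2) := by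
      simp only [DD, Prod.smul_fst, Prod.smul_snd, smul_eq_mul]; ring
    rw [this, sg_mul_self]; linarith

/-- Every boundary point of the octagon in the negative region is joined to a vertex. -/
theorem joined_vertex (hR : 0 < R) (hg : Good R η l) {σ : Bool} {x : ℝ × ℝ} (hx : x ∈ U R σ l)
    {j : Fin 8} (hj : ip (nn j) x = 2 * bt ^ 2 * R) : ∃ k, JoinedIn (U R σ l) x (R • vv k) := by
  obtain ⟨hxO, hx0⟩ := hx
  obtain ⟨t, t0, t1, rfl⟩ := exists_edge hR hxO hj
  set φ : ℝ → ℝ := fun t => GG σ l (R • vv j + t • ((R : ℝ) • ee j)) with hφ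
  have hder : ∀ t, HasDerivAt φ (R * DD σ l (R • vv j + (t * R) • ee j) (ee j)) t := by
    intro t
    have := hasDerivAt_GG σ l (R • vv j) (R • ee j) t
    refine this.congr_deriv ?_
    rw [smul_smul]
    simp only [DD, Prod.smul_fst, Prod.smul_snd, smul_eq_mul]; ring
  have hφx : ∀ t, φ t = GG σ l (R • vv j + (t * R) • ee j) := fun t => by
    simp only [hφ, smul_smul]
  have hcont : ContinuousOn φ (Icc 0 1) := fun t _ => (hder t).continuousAt.continuousWithinAt
  have hpath : ∀ e, 0 ≤ e → e ≤ 1 → (∀ θ ∈ Icc (0 : ℝ) 1, φ (t + θ * (e - t)) ≤ φ t) →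
      JoinedIn (U R σ l) (R • vv j + (t * R) • ee j) (R • vv j + (e * R) • ee j) := by
    intro e e0 e1 he
    apply JoinedIn.of_segment_subset
    intro z hz
    rw [segment_eq_image'] at hz
    obtain ⟨θ, hθ, rfl⟩ := hz
    have hrw : R • vv j + (t * R) • ee j +
        θ • (R • vv j + (e * R) • ee j - (R • vv j + (t * R) • ee j)) =
        R • vv j + ((t + θ * (e - t)) * R) • ee j := by module
    simp only [hrw]
    refine ⟨edge_mem hR.le j ?_ ?_, ?_⟩
    · nlinarith [hθ.1, hθ.2]
    · nlinarith [hθ.1, hθ.2]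
    · rw [← hφx]
      refine (he θ hθ).trans_lt ?_
      rw [hφx]; exact hx0
  by_cases hs : σ = sv j
  · have hmono : StrictMonoOn φ (Icc 0 1) := by
      apply strictMonoOn_of_deriv_pos (convex_Icc _ _) hcont
      intro t ht
      rw [interior_Icc] at ht
      rw [(hder t).deriv, hs]
      exact mul_pos hR (hg.edge j t ⟨ht.1.le, ht.2.le⟩)
    refine ⟨j, ?_⟩
    have := hpath 0 le_rfl zero_le_one fun θ hθ => hmono.monotoneOn
      ⟨by nlinarith [hθ.1, hθ.2], by nlinarith [hθ.1, hθ.2]⟩ ⟨t0, t1⟩ (by nlinarith [hθ.1, hθ.2])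
    simpa using this
  · have hs' : σ = !sv j := by revert hs; cases σ <;> cases sv j <;> simp
    have hanti : StrictAntiOn φ (Icc 0 1) := by
      apply strictAntiOn_of_deriv_neg (convex_Icc _ _) hcont
      intro t ht
      rw [interior_Icc] at ht
      rw [(hder t).deriv, hs', DD_not]
      have := mul_pos hR (hg.edge j t ⟨ht.1.le, ht.2.le⟩)
      linarith
    refine ⟨j + 1, ?_⟩
    have := hpath 1 zero_le_one le_rfl fun θ hθ => hanti.antitoneOn
      ⟨t0, t1⟩ ⟨by nlinarith [hθ.1, hθ.2], by nlinarith [hθ.1, hθ.2]⟩ (by nlinarith [hθ.1, hθ.2])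
    have e : R • vv j + (1 * R) • ee j = R • vv (j + 1) := by rw [ee]; module
    rwa [e] at this

/-- `p` lies in a component of the negative region that contains no vertex. -/
def Bd (R : ℝ) (σ : Bool) (l : Par) (p : ℝ × ℝ) : Prop :=
  p ∈ U R σ l ∧ ∀ j, ¬ JoinedIn (U R σ l) p (R • vv j)

theorem Bd.congr {σ : Bool} {p q : ℝ × ℝ} (h : Bd R σ l p) (hpq : JoinedIn (U R σ l) p q) :
    Bd R σ l q :=
  ⟨hpq.target_mem, fun j hj => h.2 j (hpq.trans hj)⟩

theorem Bd.inactive (hR : 0 < R) (hg : Good R η l) {σ : Bool} {p : ℝ × ℝ} (h : Bd R σ l p)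
    (j : Fin 8) : ip (nn j) p ≠ 2 * bt ^ 2 * R := fun hj =>
  let ⟨k, hk⟩ := joined_vertex hR hg h.1 hj
  h.2 k hk

theorem eventually_mem_oct {x : ℝ × ℝ} (hx : ∀ j, ip (nn j) x < 2 * bt ^ 2 * R) :
    ∀ᶠ y in 𝓝 x, y ∈ Oct R := by
  have : ∀ᶠ y in 𝓝 x, ∀ j, ip (nn j) y < 2 * bt ^ 2 * R := by
    rw [eventually_all]
    exact fun j => (continuous_ip (nn j)).continuousAt.eventually (gt_mem_nhds (hx j))
  exact this.mono fun y hy j => (hy j).le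

/-- A component without vertices contains a local minimum. -/
theorem exists_pit (hR : 0 < R) (hg : Good R η l) {σ : Bool} {p : ℝ × ℝ} (h : Bd R σ l p) :
    ∃ x, JoinedIn (U R σ l) p x ∧ IsLocalMin (GG σ l) x := by
  set C : Set (ℝ × ℝ) := {y | JoinedIn (U R σ l) p y} with hC
  have hpC : p ∈ C := JoinedIn.refl h.1
  have hCO : closure C ⊆ Oct R := by
    have : closure C ⊆ closure (Oct R) := closure_mono fun y hy => hy.target_mem.1
    rwa [(oct_closed R).closure_eq] at this
  have hK : IsCompact (closure C) := (oct_compact R).of_isClosed_subset isClosed_closure hCO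
  obtain ⟨x, hx, hmin⟩ := hK.exists_isMinOn ⟨p, subset_closure hpC⟩
    (continuous_GG_right σ l).continuousOn
  have hx0 : GG σ l x < 0 := (hmin (subset_closure hpC)).trans_lt h.1.2
  obtain ⟨r, hr, hball⟩ := Metric.eventually_nhds_iff.1
    ((continuous_GG_right σ l).continuousAt.eventually (gt_mem_nhds hx0))
  have hjoin : ∀ y ∈ Oct R, dist y x < r → JoinedIn (U R σ l) x y := fun y hy hyx =>
    joined_of_ball (oct_convex R) (fun z _ hz => hball hz) (hCO hx) hy (by simpa using hr) hyx
  have hxC : JoinedIn (U R σ l) p x := by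
    obtain ⟨y, hy, hyx⟩ := Metric.mem_closure_iff.1 hx r hr
    rw [dist_comm] at hyx
    exact JoinedIn.trans hy (hjoin y hy.target_mem.1 hyx).symm
  refine ⟨x, hxC, ?_⟩
  have hin : ∀ j, ip (nn j) x < 2 * bt ^ 2 * R := fun j =>
    lt_of_le_of_ne (hCO hx j) ((h.congr hxC).inactive hR hg j)
  filter_upwards [eventually_mem_oct hin, Metric.ball_mem_nhds x hr] with y hy hyx
  exact hmin (subset_closure (hxC.trans (hjoin y hy hyx)))

theorem ray_exit {x v : ℝ × ℝ} (hx : x ∈ Oct R) (hv : v ≠ 0) :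
    ∃ τ : ℝ, 0 ≤ τ ∧ x + τ • v ∈ Oct R ∧ ∃ j, ip (nn j) (x + τ • v) = 2 * bt ^ 2 * R := by
  set S : Set ℝ := {τ | 0 ≤ τ ∧ x + τ • v ∈ Oct R} with hS
  have hSc : IsClosed S :=
    (isClosed_le continuous_const continuous_id).inter
      ((oct_closed R).preimage (by fun_prop : Continuous fun τ : ℝ => x + τ • v))
  have hSb : BddAbove S := by
    obtain ⟨M, hM⟩ := (oct_compact R).isBounded.exists_norm_le
    refine ⟨(M + ‖x‖) / ‖v‖, fun τ hτ => ?_⟩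
    rw [le_div_iff₀ (norm_pos_iff.2 hv)]
    have h1 := hM _ hτ.2
    have h2 : ‖τ • v‖ ≤ ‖x + τ • v‖ + ‖x‖ := by
      have := norm_sub_le (x + τ • v) x
      rwa [add_sub_cancel_left] at this
    rw [norm_smul, Real.norm_of_nonneg hτ.1] at h2
    linarith
  have h0 : (0 : ℝ) ∈ S := ⟨le_rfl, by simpa using hx⟩
  have hmem := hSc.csSup_mem ⟨0, h0⟩ hSb
  refine ⟨sSup S, hmem.1, hmem.2, ?_⟩
  by_contra hno
  push Not at hno
  obtain ⟨r, hr, h⟩ := tangent_stays (v := v) hmem.2 fun j hj => absurd hj (hno j)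
  have h1 := h _ hmem.2 (by simpa using hr) r hr.le le_rfl
  have h2 : sSup S + r ∈ S := ⟨by linarith [hmem.1], by rwa [add_smul, ← add_assoc]⟩
  linarith [le_csSup hSb h2]

/-- Going from a point of a vertex-free component in any direction one leaves the negative
region inside the octagon. -/
theorem Bd.exit (hR : 0 < R) (hg : Good R η l) {σ : Bool} {p v : ℝ × ℝ} (h : Bd R σ l p)
    (hv : v ≠ 0) : ∃ τ : ℝ, 0 < τ ∧ 0 ≤ GG σ l (p + τ • v) := by
  by_contra hno
  push Not at hno
  obtain ⟨τ, h0, hO, j, hj⟩ := ray_exit h.1.1 hv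
  have hneg : ∀ s : ℝ, 0 ≤ s → GG σ l (p + s • v) < 0 := fun s hs => by
    rcases hs.eq_or_lt with e | e
    · rw [← e]; simpa using h.1.2
    · exact hno s e
  have hj1 : JoinedIn (U R σ l) p (p + τ • v) := by
    apply JoinedIn.of_segment_subset
    intro z hz
    refine ⟨(oct_convex R).segment_subset h.1.1 hO hz, ?_⟩
    rw [segment_eq_image'] at hz
    obtain ⟨θ, hθ, rfl⟩ := hz
    simp only [add_sub_cancel_left, smul_smul]
    exact hneg _ (mul_nonneg hθ.1 h0)
  exact (h.congr hj1).inactive hR hg j hj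

/-- A quartic with negative leading coefficient cannot have signs `+,-,+,-,+` at five increasing
points: all divided differences of order `k` would alternate in sign. -/
theorem quartic_signs {c₀ c₁ c₂ c₃ c₄ : ℝ} (h4 : c₄ < 0) {φ : ℝ → ℝ}
    (hφ : ∀ t, φ t = c₀ + c₁ * t + c₂ * t ^ 2 + c₃ * t ^ 3 + c₄ * t ^ 4) {a b c d e : ℝ}
    (hab : a < b) (hbc : b < c) (hcd : c < d) (hde : d < e)
    (ha : 0 ≤ φ a) (hb : φ b < 0) (hc : 0 ≤ φ c) (hd : φ d < 0) (he : 0 ≤ φ e) : False := by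
  set D1 : ℝ → ℝ → ℝ := fun x y => c₁ + c₂ * (x + y) + c₃ * (x ^ 2 + x * y + y ^ 2) +
    c₄ * (x ^ 3 + x ^ 2 * y + x * y ^ 2 + y ^ 3) with hD1
  set D2 : ℝ → ℝ → ℝ → ℝ := fun x y z => c₂ + c₃ * (x + y + z) +
    c₄ * (x ^ 2 + y ^ 2 + z ^ 2 + x * y + y * z + x * z) with hD2
  set D3 : ℝ → ℝ → ℝ → ℝ → ℝ := fun x y z w => c₃ + c₄ * (x + y + z + w) with hD3
  have e1 : ∀ x y, φ y - φ x = (y - x) * D1 x y := fun x y => by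
    simp only [hφ, hD1]; ring
  have e2 : ∀ x y z, D1 y z - D1 x y = (z - x) * D2 x y z := fun x y z => by
    simp only [hD1, hD2]; ring
  have e3 : ∀ x y z w, D2 y z w - D2 x y z = (w - x) * D3 x y z w := fun x y z w => by
    simp only [hD2, hD3]; ring
  have pos : ∀ {u v w : ℝ}, v = u * w → 0 < u → 0 < v → 0 < w := fun h hu hv => by
    rw [h] at hv; exact pos_of_mul_pos_right hv hu.le
  have ng : ∀ {u v w : ℝ}, v = u * w → 0 < u → v < 0 → w < 0 := fun h hu hv => by
    rw [h] at hv; exact neg_of_mul_neg_right hv hu.le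
  have a1 := ng (e1 a b) (by linarith) (by linarith)
  have a2 := pos (e1 b c) (by linarith) (by linarith)
  have a3 := ng (e1 c d) (by linarith) (by linarith)
  have a4 := pos (e1 d e) (by linarith) (by linarith)
  have b1 := pos (e2 a b c) (by linarith) (by linarith)
  have b2 := ng (e2 b c d) (by linarith) (by linarith)
  have b3 := pos (e2 c d e) (by linarith) (by linarith)
  have g1 := ng (e3 a b c d) (by linarith) (by linarith)
  have g2 := pos (e3 b c d e) (by linarith) (by linarith)
  have : D3 b c d e - D3 a b c d = (e - a) * c₄ := by simp only [hD3]; ring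
  nlinarith

/-- Two points in different vertex-free components are never aligned with a direction in which
the quartic part has the sign of these components. -/
theorem not_aligned (hR : 0 < R) (hg : Good R η l) {σ : Bool} {p q : ℝ × ℝ}
    (hp : Bd R σ l p) (hq : Bd R σ l q) (hpq : ¬ JoinedIn (U R σ l) p q) {j : Fin 8}
    (hj : sv j = σ) (c : ℝ) (h : q = p + c • vv j) : False := by
  wlog hc : 0 < c generalizing p q c with H
  · rcases eq_or_lt_of_le (not_lt.1 hc) with h0 | h0
    · apply hpq
      rw [h, h0, zero_smul, add_zero]
      exact JoinedIn.refl hp.1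
    · exact H hq hp (fun h => hpq h.symm) (-c) (by rw [h]; module) (by linarith)
  have hv : vv j ≠ 0 := by
    intro h0
    have := hg.lead j
    simp [h0] at this
  obtain ⟨τ, hτ, hF⟩ := hp.exit hR hg (neg_ne_zero.2 hv)
  obtain ⟨τ', hτ', hF'⟩ := hq.exit hR hg hv
  obtain ⟨m, hm0, hm1, hm⟩ : ∃ m, 0 < m ∧ m < 1 ∧ 0 ≤ GG σ l (p + (m * c) • vv j) := by
    by_contra hno
    push Not at hno
    apply hpq
    apply JoinedIn.of_segment_subset
    intro z hz
    refine ⟨(oct_convex R).segment_subset hp.1.1 hq.1.1 hz, ?_⟩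
    rw [segment_eq_image'] at hz
    obtain ⟨θ, hθ, rfl⟩ := hz
    rcases hθ.1.eq_or_lt with e | e
    · rw [← e]; simpa using hp.1.2
    rcases hθ.2.eq_or_lt with e' | e'
    · rw [e']; simpa using hq.1.2
    · have := hno θ e e'
      simpa only [h, add_sub_cancel_left, smul_smul] using this
  set x := p.1
  set y := p.2
  set u := (vv j).1
  set w := (vv j).2
  have hlead := hg.lead j
  rw [hj] at hlead
  refine quartic_signs (φ := fun t => GG σ l (p + t • vv j))
    (c₀ := sg σ * FF l p) (c₁ := sg σ * (gx l p * u + gy l p * w))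
    (c₂ := sg σ * ((-3 * x * y) * u ^ 2 + (3 * y ^ 2 - 3 * x ^ 2) * u * w + 3 * x * y * w ^ 2 +
      l 3 * u ^ 2 + l 4 * u * w + l 5 * w ^ 2 + l 6 * (2 * x * u * w + y * u ^ 2) +
      l 7 * (2 * y * u * w + x * w ^ 2) +
      l 8 * (u ^ 2 * y ^ 2 + 4 * x * y * u * w + x ^ 2 * w ^ 2)))
    (c₃ := sg σ * (x * w ^ 3 + 3 * y * u * w ^ 2 - 3 * x * u ^ 2 * w - y * u ^ 3 +
      l 6 * u ^ 2 * w + l 7 * u * w ^ 2 + l 8 * (2 * x * u * w ^ 2 + 2 * y * u ^ 2 * w)))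
    hlead ?_ (a := -τ) (b := 0) (c := m * c) (d := c) (e := c + τ')
    (by linarith) (by positivity) (by nlinarith) (by linarith) ?_ ?_ hm ?_ ?_
  · intro t
    simp only [GG, FF, gx, gy, Prod.fst_add, Prod.snd_add, Prod.smul_fst, Prod.smul_snd,
      smul_eq_mul, x, y, u, w]
    ring
  · simpa using hF
  · simpa using hp.1.2
  · simpa [← h] using hq.1.2
  · simp only [add_smul, ← add_assoc, ← h]
    exact hF'

end X92

namespace X92

open Set Filter Topology

/-! ### Atomic properties and their invariance -/

/-- An indefinite quadratic form whose two isotropic directions are those in which the undeformed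
quartic has the sign of the region `U R σ l`. -/
noncomputable def form (σ : Bool) (w : ℝ × ℝ) : ℝ :=
  if σ then (bt * w.2 + w.1) * (-w.2 + bt * w.1) else (bt * w.1 + w.2) * (-w.1 + bt * w.2)

theorem continuous_form (σ : Bool) : Continuous (form σ) := by
  unfold form
  cases σ <;> simp <;> fun_prop

theorem aligned_of_form {σ : Bool} {w : ℝ × ℝ} (h : form σ w = 0) :
    ∃ j, sv j = σ ∧ ∃ c : ℝ, w = c • vv j := by
  obtain ⟨x, y⟩ := w
  have h2 := bt_gt
  have hb : bt ≠ 0 := by linarith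
  cases σ
  · simp only [form, Bool.false_eq_true, if_false] at h
    rcases mul_eq_zero.1 h with h | h
    · refine ⟨2, by decide, -x, ?_⟩
      ext <;> simp [vv]; linarith
    · refine ⟨0, by decide, y, ?_⟩
      ext <;> simp [vv]; linarith
  · simp only [form, if_true] at h
    rcases mul_eq_zero.1 h with h | h
    · refine ⟨3, by decide, y, ?_⟩
      ext <;> simp [vv]; linarith
    · refine ⟨1, by decide, x, ?_⟩
      ext <;> simp [vv]; linarith

variable {R η : ℝ} {l : Par}

theorem form_ne_zero (hR : 0 < R) (hg : Good R η l) {σ : Bool} {p q : ℝ × ℝ}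
    (hp : Bd R σ l p) (hq : Bd R σ l q) (hpq : ¬ JoinedIn (U R σ l) p q) :
    form σ (q - p) ≠ 0 := by
  intro h
  obtain ⟨j, hj, c, hc⟩ := aligned_of_form h
  exact not_aligned hR hg hp hq hpq hj c (by rw [← hc]; abel)

/-- The sign of the form on the difference of two points only depends on the vertex-free components
containing them. -/
theorem form_sign (hR : 0 < R) (hg : Good R η l) {σ : Bool} {p q p' q' : ℝ × ℝ}
    (hp : Bd R σ l p) (hq : Bd R σ l q) (hpq : ¬ JoinedIn (U R σ l) p q)
    (hpp : JoinedIn (U R σ l) p p') (hqq : JoinedIn (U R σ l) q q') (τ : Bool)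
    (h : 0 < sg τ * form σ (q - p)) : 0 < sg τ * form σ (q' - p') := by
  obtain ⟨γ, hγ⟩ := hpp
  obtain ⟨γ', hγ'⟩ := hqq
  have hj : ∀ t, JoinedIn (U R σ l) p (γ t) := fun t => by
    refine ⟨(γ.truncateOfLE t.2.1).cast (by simp) (by simp), fun s => ?_⟩
    simp only [Path.cast_coe]
    have := γ.truncate_range (t₀ := 0) (t₁ := t) (mem_range_self s)
    obtain ⟨u, hu⟩ := this
    exact hu ▸ hγ u
  have hj' : ∀ t, JoinedIn (U R σ l) q (γ' t) := fun t => by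
    refine ⟨(γ'.truncateOfLE t.2.1).cast (by simp) (by simp), fun s => ?_⟩
    simp only [Path.cast_coe]
    have := γ'.truncate_range (t₀ := 0) (t₁ := t) (mem_range_self s)
    obtain ⟨u, hu⟩ := this
    exact hu ▸ hγ' u
  have hne : ∀ t, sg τ * form σ (γ' t - γ t) ≠ 0 := fun t => by
    have h1 : ¬ JoinedIn (U R σ l) (γ t) (γ' t) := fun h1 =>
      hpq ((hj t).trans (h1.trans (hj' t).symm))
    have := form_ne_zero hR hg (hp.congr (hj t)) (hq.congr (hj' t)) h1
    cases τ <;> simpa using this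
  have hc : Continuous fun t => sg τ * form σ (γ' t - γ t) :=
    continuous_const.mul ((continuous_form σ).comp (γ'.continuous.sub γ.continuous))
  by_contra hneg
  push Not at hneg
  obtain ⟨t, ht⟩ := mem_range_of_exists_le_of_exists_ge (c := (0 : ℝ)) hc
    ⟨1, by simpa using hneg⟩ ⟨0, by simpa using h.le⟩
  exact hne t ht

/-- Elementary topological properties of the pair of regions `U R false l`, `U R true l`:
`sh i`: the vertices adjacent to the vertex `i` are joined;
`bb σ m`: there are more than `m` components of `U R σ l` without vertices;
`sl σ τ`: there are two such components on whose differences `form σ` has the sign `sg τ`. -/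
inductive Atom
  | sh (i : Fin 8)
  | bb (σ : Bool) (m : Fin 3)
  | sl (σ τ : Bool)
  deriving DecidableEq

/-- The property of the parameter `l` expressed by an `Atom`. -/
def Holds (R : ℝ) (l : Par) : Atom → Prop
  | .sh i => JoinedIn (U R (sv (i + 1)) l) (R • vv (i - 1)) (R • vv (i + 1))
  | .bb σ m => ∃ f : Fin (m + 1) → ℝ × ℝ, (∀ i, Bd R σ l (f i)) ∧
      ∀ i j, i ≠ j → ¬ JoinedIn (U R σ l) (f i) (f j)
  | .sl σ τ => ∃ p q, Bd R σ l p ∧ Bd R σ l q ∧ ¬ JoinedIn (U R σ l) p q ∧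
      0 < sg τ * form σ (q - p)

/-- Transfer of an atomic property between two parameters whose regions have the same finite
system of representatives of components. -/
theorem holds_transfer {l' : Par} (hR : 0 < R) (hg : Good R η l) {T : Bool → Set (ℝ × ℝ)}
    (hT' : ∀ σ, T σ ⊆ U R σ l')
    (hrep : ∀ σ, ∀ y ∈ U R σ l, ∃ p ∈ T σ, JoinedIn (U R σ l) y p)
    (hj : ∀ σ, ∀ p ∈ T σ ∪ range (fun j => R • vv j), ∀ q ∈ T σ ∪ range (fun j => R • vv j),
      (JoinedIn (U R σ l) p q ↔ JoinedIn (U R σ l') p q)) (a : Atom) (h : Holds R l a) :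
    Holds R l' a := by
  have hbd : ∀ σ p, Bd R σ l p → ∀ p' ∈ T σ, JoinedIn (U R σ l) p p' → Bd R σ l' p' := by
    intro σ p hp p' hp' hpp'
    refine ⟨hT' σ hp', fun j hjn => (hp.congr hpp').2 j ?_⟩
    exact (hj σ p' (Or.inl hp') _ (Or.inr ⟨j, rfl⟩)).2 hjn
  cases a with
  | sh i => exact (hj _ _ (Or.inr ⟨_, rfl⟩) _ (Or.inr ⟨_, rfl⟩)).1 h
  | bb σ m =>
    obtain ⟨f, hf, hne⟩ := h
    choose g hgT hg' using fun i => hrep σ (f i) (hf i).1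
    refine ⟨g, fun i => hbd σ _ (hf i) _ (hgT i) (hg' i), fun i j hij hc => hne i j hij ?_⟩
    have := (hj σ _ (Or.inl (hgT i)) _ (Or.inl (hgT j))).2 hc
    exact (hg' i).trans (this.trans (hg' j).symm)
  | sl σ τ =>
    obtain ⟨p, q, hp, hq, hpq, hs⟩ := h
    obtain ⟨p', hp', hpp⟩ := hrep σ p hp.1
    obtain ⟨q', hq', hqq⟩ := hrep σ q hq.1
    refine ⟨p', q', hbd σ _ hp _ hp' hpp, hbd σ _ hq _ hq' hqq, fun hc => hpq ?_,
      form_sign hR hg hp hq hpq hpp hqq τ hs⟩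
    have := (hj σ _ (Or.inl hp') _ (Or.inl hq')).2 hc
    exact hpp.trans (this.trans hqq.symm)

/-- Atomic properties are locally constant on any set of parameters that are regular on the
octagon. -/
theorem holds_locally_const (hR : 0 < R) (hη : 0 < η) {S : Set Par}
    (hS : ∀ l ∈ S, Good R η l ∧ NoCrit R l) {l₀ : Par} (h₀ : l₀ ∈ S) (a : Atom) :
    ∀ᶠ l in 𝓝[S] l₀, (Holds R l a ↔ Holds R l₀ a) := by
  have hst : ∀ σ, ∃ T : Set (ℝ × ℝ), T ⊆ U R σ l₀ ∧ ∀ᶠ l in 𝓝 l₀, T ⊆ U R σ l ∧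
      (∀ y ∈ U R σ l, ∃ p ∈ T, JoinedIn (U R σ l) y p) ∧
      ∀ p ∈ T ∪ range (fun j => R • vv j), ∀ q ∈ T ∪ range (fun j => R • vv j),
        (JoinedIn (U R σ l) p q ↔ JoinedIn (U R σ l₀) p q) := fun σ =>
    stable_reps (Q := Oct R) (F := GG σ) (D := DD σ) (oct_convex R) (oct_compact R)
      (continuous_GG σ) (continuous_DD σ) (hasDerivAt_GG σ)
      (regular_of_good hR hη (hS l₀ h₀).1 (hS l₀ h₀).2 σ) (finite_range _) (by
        rintro _ ⟨j, rfl⟩ h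
        exact (hS l₀ h₀).1.vert_ne hη j (GG_eq_zero.1 h))
  choose T hT hev using hst
  have hev' : ∀ᶠ l in 𝓝 l₀, ∀ σ, T σ ⊆ U R σ l ∧
      (∀ y ∈ U R σ l, ∃ p ∈ T σ, JoinedIn (U R σ l) y p) ∧
      ∀ p ∈ T σ ∪ range (fun j => R • vv j), ∀ q ∈ T σ ∪ range (fun j => R • vv j),
        (JoinedIn (U R σ l) p q ↔ JoinedIn (U R σ l₀) p q) := eventually_all.2 hev
  have hself := hev'.self_of_nhds
  filter_upwards [nhdsWithin_le_nhds hev', self_mem_nhdsWithin] with l hl hlS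
  constructor
  · exact holds_transfer hR (hS l hlS).1 hT (fun σ => (hl σ).2.1) (fun σ => (hl σ).2.2) a
  · exact holds_transfer hR (hS l₀ h₀).1 (fun σ => (hl σ).1) (fun σ => (hself σ).2.1)
      (fun σ p hp q hq => ((hl σ).2.2 p hp q hq).symm) a

/-- Atomic properties are constant on connected components. -/
theorem holds_of_connected (hR : 0 < R) (hη : 0 < η) {S : Set Par}
    (hS : ∀ l ∈ S, Good R η l ∧ NoCrit R l) {l₁ l₂ : Par} (h₁ : l₁ ∈ S) (h₂ : l₂ ∈ S)
    (h : connectedComponentIn S l₁ = connectedComponentIn S l₂) (a : Atom) :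
    Holds R l₁ a ↔ Holds R l₂ a := by
  classical
  have hc : ContinuousOn (fun l => decide (Holds R l a)) S := by
    intro l₀ h₀
    have := holds_locally_const hR hη hS h₀ a
    refine Filter.Tendsto.congr' (f₁ := fun _ => decide (Holds R l₀ a)) ?_ tendsto_const_nhds
    filter_upwards [this] with l hl
    rw [decide_eq_decide]; exact hl.symm
  have hpre : IsPreconnected (connectedComponentIn S l₁) := isPreconnected_connectedComponentIn
  have := hpre.constant (hc.mono (connectedComponentIn_subset S l₁))
    (mem_connectedComponentIn h₁) (h ▸ mem_connectedComponentIn h₂)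
  simpa using this

end X92

namespace X92

open Set Filter Topology

/-! ### Symmetries -/

/-- Action on atomic properties of a symmetry permuting the vertices by `π`, exchanging the two
regions if `fs`, and changing the sign of the forms if `ft`. -/
def Atom.act (π : Fin 8 → Fin 8) (fs ft : Bool) : Atom → Atom
  | .sh i => .sh (π i)
  | .bb σ m => .bb (σ ^^ fs) m
  | .sl σ τ => .sl (σ ^^ fs) (τ ^^ ft)

theorem joinedIn_iff {A : (ℝ × ℝ) ≃ₜ (ℝ × ℝ)} {V W : Set (ℝ × ℝ)} (h : ∀ p, A p ∈ W ↔ p ∈ V)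
    (p q : ℝ × ℝ) : JoinedIn W (A p) (A q) ↔ JoinedIn V p q := by
  constructor
  · intro hj
    have := hj.map A.symm.continuous
    simp only [Homeomorph.symm_apply_apply] at this
    refine this.mono ?_
    rintro _ ⟨x, hx, rfl⟩
    rw [← h]; simpa using hx
  · intro hj
    refine (hj.map A.continuous).mono ?_
    rintro _ ⟨x, hx, rfl⟩
    exact (h x).2 hx

theorem holds_act {R R' : ℝ} {l l' : Par} (A : (ℝ × ℝ) ≃ₜ (ℝ × ℝ)) (π : Fin 8 → Fin 8)
    (fs ft : Bool) (hU : ∀ σ p, A p ∈ U R' (σ ^^ fs) l' ↔ p ∈ U R σ l)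
    (hv : ∀ j, A (R • vv j) = R' • vv (π j)) (hπ : Function.Surjective π)
    (hadj : ∀ i, (π (i - 1) = π i - 1 ∧ π (i + 1) = π i + 1) ∨
      (π (i - 1) = π i + 1 ∧ π (i + 1) = π i - 1))
    (hs : ∀ i, sv (π i) = (sv i ^^ fs)) {c : ℝ} (hc : 0 < c)
    (hform : ∀ σ p q, form (σ ^^ fs) (A q - A p) = c * (sg ft * form σ (q - p))) (a : Atom) :
    Holds R' l' (a.act π fs ft) ↔ Holds R l a := by
  have hJ : ∀ σ p q, JoinedIn (U R' (σ ^^ fs) l') (A p) (A q) ↔ JoinedIn (U R σ l) p q :=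
    fun σ p q => joinedIn_iff (hU σ) p q
  have hB : ∀ σ p, Bd R' (σ ^^ fs) l' (A p) ↔ Bd R σ l p := by
    intro σ p
    unfold Bd
    rw [hU]
    refine and_congr_right fun _ => ⟨fun h j hj => ?_, fun h j hj => ?_⟩
    · refine h (π j) ?_
      rw [← hv]; exact (hJ σ _ _).2 hj
    · obtain ⟨k, rfl⟩ := hπ j
      rw [← hv] at hj
      exact h k ((hJ σ _ _).1 hj)
  cases a with
  | sh i =>
    simp only [Atom.act, Holds]
    rw [← hJ, hv, hv]
    have e : sv (π i + 1) = (sv (i + 1) ^^ fs) := by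
      rw [sv_succ, sv_succ, hs]; cases sv i <;> cases fs <;> rfl
    rw [e]
    rcases hadj i with ⟨h1, h2⟩ | ⟨h1, h2⟩
    · rw [h1, h2]
    · rw [h1, h2]; exact ⟨fun h => h.symm, fun h => h.symm⟩
  | bb σ m =>
    simp only [Atom.act, Holds]
    constructor
    · rintro ⟨f, hf, hne⟩
      refine ⟨fun i => A.symm (f i), fun i => ?_, fun i j hij => ?_⟩
      · rw [← hB]; simpa using hf i
      · rw [← hJ]; simpa using hne i j hij
    · rintro ⟨f, hf, hne⟩
      exact ⟨fun i => A (f i), fun i => (hB σ _).2 (hf i),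
        fun i j hij => (hJ σ _ _).not.2 (hne i j hij)⟩
  | sl σ τ =>
    simp only [Atom.act, Holds]
    have hf : ∀ p q, 0 < sg (τ ^^ ft) * form (σ ^^ fs) (A q - A p) ↔
        0 < sg τ * form σ (q - p) := by
      intro p q
      rw [hform, sg_xor]
      have : sg τ * sg ft * (c * (sg ft * form σ (q - p))) = c * (sg τ * form σ (q - p)) := by
        linear_combination c * sg τ * form σ (q - p) * sg_mul_self ft
      rw [this]
      exact mul_pos_iff_of_pos_left hc
    constructor
    · rintro ⟨p, q, h1, h2, h3, h4⟩
      refine ⟨A.symm p, A.symm q, ?_, ?_, ?_, ?_⟩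
      · rw [← hB]; simpa using h1
      · rw [← hB]; simpa using h2
      · rw [← hJ]; simpa using h3
      · rw [← hf]; simpa using h4
    · rintro ⟨p, q, h1, h2, h3, h4⟩
      exact ⟨A p, A q, (hB σ _).2 h1, (hB σ _).2 h2, (hJ σ _ _).not.2 h3, (hf p q).2 h4⟩

/-- `FF l` has no critical point with value `0` in the whole plane. -/
def NC (l : Par) : Prop := ∀ p, FF l p = 0 → ¬ (gx l p = 0 ∧ gy l p = 0)

/-- Rotation of the plane by a right angle. -/
noncomputable def rotA : (ℝ × ℝ) ≃ₜ (ℝ × ℝ) where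
  toFun p := (-p.2, p.1)
  invFun p := (p.2, -p.1)
  left_inv p := by simp
  right_inv p := by simp
  continuous_toFun := by fun_prop
  continuous_invFun := by fun_prop

/-- The reflection of the plane in the diagonal. -/
noncomputable def reflA : (ℝ × ℝ) ≃ₜ (ℝ × ℝ) where
  toFun p := (p.2, p.1)
  invFun p := (p.2, p.1)
  left_inv p := by simp
  right_inv p := by simp
  continuous_toFun := by fun_prop
  continuous_invFun := by fun_prop

/-- Scaling of the plane. -/
noncomputable def sclA (c : ℝ) (hc : c ≠ 0) : (ℝ × ℝ) ≃ₜ (ℝ × ℝ) := Homeomorph.smulOfNeZero c hc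

/-- The parameter of `FF l ∘ rotA.symm`. -/
noncomputable def rot (l : Par) : Par := !₂[l 0, -l 2, l 1, l 5, -l 4, l 3, l 7, -l 6, l 8]

/-- The parameter of `-FF l ∘ reflA.symm`. -/
noncomputable def refl (l : Par) : Par :=
  !₂[-l 0, -l 2, -l 1, -l 5, -l 4, -l 3, -l 7, -l 6, -l 8]

theorem FF_rot (l : Par) (p : ℝ × ℝ) : FF (rot l) (rotA p) = FF l p := by
  simp [FF, rot, rotA]; ring

theorem FF_refl (l : Par) (p : ℝ × ℝ) : FF (refl l) (reflA p) = -FF l p := by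
  simp [FF, refl, reflA]; ring

theorem NC.rot {l : Par} (h : NC l) : NC (rot l) := by
  intro p
  obtain ⟨q, rfl⟩ := rotA.surjective p
  rw [FF_rot]
  rintro h0 ⟨h1, h2⟩
  refine h q h0 ⟨?_, ?_⟩
  · rw [← h2]; simp [gx, gy, X92.rot, rotA]; ring
  · rw [← neg_eq_zero, ← h1]; simp [gx, gy, X92.rot, rotA]; ring

theorem NC.refl {l : Par} (h : NC l) : NC (refl l) := by
  intro p
  obtain ⟨q, rfl⟩ := reflA.surjective p
  rw [FF_refl]
  rintro h0 ⟨h1, h2⟩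
  refine h q (neg_eq_zero.1 h0) ⟨?_, ?_⟩
  · rw [← neg_eq_zero, ← h2]; simp [gx, gy, X92.refl, reflA]; ring
  · rw [← neg_eq_zero, ← h1]; simp [gx, gy, X92.refl, reflA]; ring

theorem NC.scl {l : Par} (h : NC l) {c : ℝ} (hc : 0 < c) : NC (scl c l) := by
  intro p
  obtain ⟨q, rfl⟩ := (sclA c hc.ne').surjective p
  change FF (X92.scl c l) (c • q) = 0 → ¬ (gx (X92.scl c l) (c • q) = 0 ∧
    gy (X92.scl c l) (c • q) = 0)
  rw [FF_scl, gx_scl, gy_scl]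
  have := hc.ne'
  simp only [mul_eq_zero, ne_eq, OfNat.ofNat_ne_zero, not_false_eq_true,
    pow_eq_zero_iff, this, false_or]
  exact h q

theorem rotA_mem_oct {R : ℝ} (p : ℝ × ℝ) : rotA p ∈ Oct R ↔ p ∈ Oct R := by
  have h : ∀ j, ip (nn (j + 2)) (rotA p) = ip (nn j) p := by
    intro j
    fin_cases j <;> simp [ip, nn, vv, rotA] <;> ring
  constructor
  · intro hp j
    rw [← h]; exact hp _
  · intro hp j
    have := h (j - 2)
    rw [show j - 2 + 2 = j by omega] at this
    rw [this]; exact hp _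

theorem reflA_mem_oct {R : ℝ} (p : ℝ × ℝ) : reflA p ∈ Oct R ↔ p ∈ Oct R := by
  have h : ∀ j, ip (nn (-j)) (reflA p) = ip (nn j) p := by
    intro j
    have e : nn (-j) = vv (-j) + vv (-j + 1) := rfl
    have e' : ∀ k, ip (vv (1 - k)) (reflA p) = ip (vv k) p := by
      intro k
      fin_cases k <;> simp [ip, vv, reflA] <;> ring
    have h1 := e' (j + 1)
    have h2 := e' j
    rw [show 1 - (j + 1) = -j by abel] at h1
    rw [show 1 - j = -j + 1 by abel] at h2
    rw [e, show nn j = vv j + vv (j + 1) from rfl]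
    simp only [ip, Prod.fst_add, Prod.snd_add] at h1 h2 ⊢
    linear_combination h1 + h2
  constructor
  · intro hp j
    rw [← h]; exact hp _
  · intro hp j
    have := h (-j)
    rw [neg_neg] at this
    rw [this]; exact hp _

theorem holds_rot {R : ℝ} {l : Par} (a : Atom) :
    Holds R (rot l) (a.act (· + 2) false true) ↔ Holds R l a := by
  refine holds_act rotA (· + 2) false true ?_ ?_ (by decide) (by decide) (by decide)
    one_pos ?_ a
  · intro σ p
    simp only [U, neg, mem_ofPred_eq, rotA_mem_oct, GG, FF_rot, Bool.xor_false]
  · intro j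
    fin_cases j <;> simp [rotA, vv]
  · intro σ p q
    cases σ <;> simp [form, rotA] <;> ring

theorem holds_refl {R : ℝ} {l : Par} (a : Atom) :
    Holds R (refl l) (a.act (1 - ·) true false) ↔ Holds R l a := by
  refine holds_act reflA (1 - ·) true false ?_ ?_ (by decide) (by decide) (by decide)
    one_pos ?_ a
  · intro σ p
    simp only [U, neg, mem_ofPred_eq, reflA_mem_oct, GG, FF_refl, sg_xor, sg_true]
    simp
  · intro j
    fin_cases j <;> simp [reflA, vv]
  · intro σ p q
    cases σ <;> simp [form, reflA]

theorem holds_scl {R c : ℝ} (hc : 0 < c) {l : Par} (a : Atom) :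
    Holds (c * R) (scl c l) a ↔ Holds R l a := by
  have := holds_act (R := R) (R' := c * R) (l := l) (l' := scl c l) (sclA c hc.ne') id false false
    ?_ ?_ Function.surjective_id (by simp) (by simp) (pow_pos hc 2) ?_ a
  · have e : a.act id false false = a := by cases a <;> simp [Atom.act]
    rwa [e] at this
  · intro σ p
    change c • p ∈ U (c * R) _ _ ↔ _
    simp only [U, neg, mem_ofPred_eq, Bool.xor_false, GG_scl, Oct]
    refine and_congr (forall_congr' fun j => ?_) ?_
    · rw [ip_smul, mul_left_comm, mul_le_mul_iff_right₀ hc]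
    · exact ⟨fun h => neg_of_mul_neg_right h (by positivity),
        fun h => mul_neg_of_pos_of_neg (by positivity) h⟩
  · intro j
    change c • R • vv j = _
    rw [smul_smul]; rfl
  · intro σ p q
    change form _ (c • q - c • p) = _
    cases σ <;> simp [form] <;> ring

/-- The parameter `l` defines a function without critical zeros for which, on all sufficiently
large octagons, the atomic properties listed in `L` have the listed truth values. -/
def Facts (l : Par) (L : List (Atom × Bool)) : Prop :=
  l 8 = 0 ∧ NC l ∧ ∀ x ∈ L, ∀ᶠ R : ℝ in atTop, (Holds R l x.1 ↔ x.2 = true)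

/-- Action of the rotation on lists of atomic properties. -/
def rotL (L : List (Atom × Bool)) : List (Atom × Bool) :=
  L.map fun x => (x.1.act (· + 2) false true, x.2)

/-- Action of the reflection on lists of atomic properties. -/
def reflL (L : List (Atom × Bool)) : List (Atom × Bool) :=
  L.map fun x => (x.1.act (1 - ·) true false, x.2)

theorem Facts.rot {l : Par} {L : List (Atom × Bool)} (h : Facts l L) :
    Facts (rot l) (rotL L) := by
  refine ⟨by simpa [X92.rot] using h.1, h.2.1.rot, fun x hx => ?_⟩
  obtain ⟨y, hy, rfl⟩ := List.mem_map.1 hx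
  filter_upwards [h.2.2 y hy] with R hR
  rw [holds_rot]; exact hR

theorem Facts.refl {l : Par} {L : List (Atom × Bool)} (h : Facts l L) :
    Facts (refl l) (reflL L) := by
  refine ⟨by simpa [X92.refl] using h.1, h.2.1.refl, fun x hx => ?_⟩
  obtain ⟨y, hy, rfl⟩ := List.mem_map.1 hx
  filter_upwards [h.2.2 y hy] with R hR
  rw [holds_refl]; exact hR

end X92

namespace X92

open Set Filter Topology

/-! ### Quartics with an axis of symmetry -/

/-- Coefficients of the quartics
`s⁴ - 6s²t² + t⁴ + A s³ + B s t² + P s² + Q t² + M s + E`, even in `t`. -/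
structure Cf where
  A : ℝ
  B : ℝ
  P : ℝ
  Q : ℝ
  M : ℝ
  E : ℝ

/-- The quartic with coefficients `k`. -/
def Cf.G (k : Cf) (s t : ℝ) : ℝ :=
  s ^ 4 - 6 * s ^ 2 * t ^ 2 + t ^ 4 + k.A * s ^ 3 + k.B * (s * t ^ 2) + k.P * s ^ 2 + k.Q * t ^ 2 +
    k.M * s + k.E

/-- Partial derivative of `k.G` in `s`. -/
def Cf.Gs (k : Cf) (s t : ℝ) : ℝ :=
  4 * s ^ 3 - 12 * (s * t ^ 2) + 3 * k.A * s ^ 2 + k.B * t ^ 2 + 2 * k.P * s + k.M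

/-- Partial derivative of `k.G` in `t`. -/
def Cf.Gt (k : Cf) (s t : ℝ) : ℝ :=
  t * (4 * t ^ 2 - 12 * s ^ 2 + 2 * k.B * s + 2 * k.Q)

/-- Half of the second differential of `k.G` at `(s, t)` on the vector `(a, b)`. -/
def Cf.H (k : Cf) (s t a b : ℝ) : ℝ :=
  a ^ 2 * (6 * s ^ 2 - 6 * t ^ 2 + 3 * k.A * s + k.P) + a * b * (t * (2 * k.B - 24 * s)) +
    b ^ 2 * (6 * t ^ 2 - 6 * s ^ 2 + k.B * s + k.Q)

/-- The affine coordinates `(s, t)` on the plane with axes directed to the vertices `1` and `7`. -/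
noncomputable def Ph (c : ℝ × ℝ) (s t : ℝ) : ℝ × ℝ := (c.1 + s + bt * t, c.2 + bt * s - t)

/-- First coordinate function inverse to `Ph c`. -/
noncomputable def sc (c p : ℝ × ℝ) : ℝ := ((3 - bt) * (p.1 - c.1) + (bt - 1) * (p.2 - c.2)) / 4

/-- Second coordinate function inverse to `Ph c`. -/
noncomputable def tc (c p : ℝ × ℝ) : ℝ := ((bt - 1) * (p.1 - c.1) - (3 - bt) * (p.2 - c.2)) / 4

theorem sc_Ph (c : ℝ × ℝ) (s t : ℝ) : sc c (Ph c s t) = s := by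
  simp only [sc, Ph]; linear_combination (s - t) / 4 * bt_sq

theorem tc_Ph (c : ℝ × ℝ) (s t : ℝ) : tc c (Ph c s t) = t := by
  simp only [tc, Ph]; linear_combination (s + t) / 4 * bt_sq

theorem Ph_sc_tc (c p : ℝ × ℝ) : Ph c (sc c p) (tc c p) = p := by
  ext
  · simp only [sc, tc, Ph]; linear_combination (p.1 - c.1 + (p.2 - c.2)) / 4 * bt_sq
  · simp only [sc, tc, Ph]; linear_combination (p.2 - c.2 - (p.1 - c.1)) / 4 * bt_sq

theorem continuous_sc (c : ℝ × ℝ) : Continuous (sc c) := by unfold sc; fun_prop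

theorem continuous_tc (c : ℝ × ℝ) : Continuous (tc c) := by unfold tc; fun_prop

/-- In the coordinates `Ph c` the function `FF l` is `k.G`, up to a positive factor. -/
structure NF (l : Par) (c : ℝ × ℝ) (k : Cf) : Prop where
  zero : l 8 = 0
  eq : ∀ s t, FF l (Ph c s t) = (4 * bt + 2) * k.G s t

/-- A deformation of `f₀ = xy(y² - x²)` by terms of lower degree is brought to the family by a
translation, which absorbs the monomials `x³` and `y³`. -/
theorem shift_exists (a b C21 C12 C20 C11 C02 C10 C01 C00 : ℝ) :
    ∃ l : Par, l 8 = 0 ∧ ∀ x y, FF l (a + x, b + y) =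
      x * y * (x + y) * (y - x) - b * x ^ 3 + a * y ^ 3 + C21 * (x ^ 2 * y) + C12 * (x * y ^ 2) +
        C20 * x ^ 2 + C11 * (x * y) + C02 * y ^ 2 + C10 * x + C01 * y + C00 := by
  refine ⟨!₂[C00 - C01 * b + C02 * b ^ 2 - C10 * a + C11 * a * b - C12 * a * b ^ 2 + C20 * a ^ 2 -
      C21 * a ^ 2 * b,
    C10 - C11 * b + C12 * b ^ 2 - 2 * C20 * a + 2 * C21 * a * b - b ^ 3,
    C01 - 2 * C02 * b - C11 * a + 2 * C12 * a * b + C21 * a ^ 2 + a ^ 3,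
    C20 - C21 * b,
    C11 - 2 * C12 * b - 2 * C21 * a - 3 * a ^ 2 + 3 * b ^ 2,
    C02 - C12 * a, C21 + 3 * a, C12 - 3 * b, 0], by simp, fun x y => ?_⟩
  simp [FF]
  ring

theorem nf_exists (k : Cf) : ∃ l c, NF l c k := by
  obtain ⟨l, h8, h⟩ := shift_exists
    (k.A * (1 / 16 + 3 / 16 * bt) + k.B * (-1 / 16 + 1 / 16 * bt))
    (-(k.A * (3 / 16 - 1 / 16 * bt) + k.B * (1 / 16 + 1 / 16 * bt)))
    (k.A * (-3 / 16 + 3 / 16 * bt) + k.B * (3 / 16 + 1 / 16 * bt))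
    (k.A * (3 / 16 + 3 / 16 * bt) + k.B * (1 / 16 - 3 / 16 * bt))
    (k.P * (1 / 4) + k.Q * (1 / 4 + 1 / 2 * bt))
    (k.P * (1 / 2 * bt) - k.Q * (1 / 2 * bt))
    (k.P * (1 / 4 + 1 / 2 * bt) + k.Q * (1 / 4))
    (k.M * (1 / 2 + 1 / 2 * bt)) (k.M * (1 / 2 + 3 / 2 * bt)) (k.E * (4 * bt + 2))
  refine ⟨l, (k.A * (1 / 16 + 3 / 16 * bt) + k.B * (-1 / 16 + 1 / 16 * bt),
    -(k.A * (3 / 16 - 1 / 16 * bt) + k.B * (1 / 16 + 1 / 16 * bt))), h8, fun s t => ?_⟩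
  have h' := h (s + bt * t) (bt * s - t)
  rw [← add_assoc, ← add_sub_assoc] at h'
  rw [Ph, h', Cf.G]
  linear_combination (-2 * bt * s * t ^ 3 - 6 * bt * s ^ 2 * t ^ 2 + 2 * bt * s ^ 3 * t +
      bt * s ^ 4 + bt * t ^ 4 - bt ^ 2 * s * t ^ 3 + bt ^ 2 * s ^ 3 * t + s * t ^ 3 -
      12 * s ^ 2 * t ^ 2 - s ^ 3 * t + 2 * s ^ 4 + 2 * t ^ 4 +
    k.A * (-3 / 8 * bt * s * t ^ 2 + 3 / 8 * bt * s ^ 2 * t + 5 / 8 * bt * s ^ 3 -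
      1 / 8 * bt * t ^ 3 + 3 / 16 * bt ^ 2 * s * t ^ 2 + 3 / 16 * bt ^ 2 * s ^ 2 * t +
      3 / 16 * bt ^ 2 * s ^ 3 - 1 / 16 * bt ^ 2 * t ^ 3 - 3 / 16 * s * t ^ 2 -
      3 / 16 * s ^ 2 * t + 29 / 16 * s ^ 3 + 1 / 16 * t ^ 3) +
    k.B * (7 / 8 * bt * s * t ^ 2 - 3 / 8 * bt * s ^ 2 * t - 1 / 8 * bt * s ^ 3 +
      1 / 8 * bt * t ^ 3 + 1 / 16 * bt ^ 2 * s * t ^ 2 - 3 / 16 * bt ^ 2 * s ^ 2 * t +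
      1 / 16 * bt ^ 2 * s ^ 3 + 1 / 16 * bt ^ 2 * t ^ 3 + 31 / 16 * s * t ^ 2 +
      3 / 16 * s ^ 2 * t - 1 / 16 * s ^ 3 - 1 / 16 * t ^ 3) +
    k.P * (1 / 2 * bt * s * t + 1 / 2 * bt * s ^ 2 + 7 / 4 * s ^ 2 - 1 / 4 * t ^ 2) +
    k.Q * (-1 / 2 * bt * s * t + 1 / 2 * bt * t ^ 2 - 1 / 4 * s ^ 2 + 7 / 4 * t ^ 2) +
    k.M * (3 / 2 * s + 1 / 2 * t)) * bt_sq

theorem NF.GG_eq {l : Par} {c : ℝ × ℝ} {k : Cf} (h : NF l c k) (σ : Bool) (s t : ℝ) :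
    GG σ l (Ph c s t) = (4 * bt + 2) * (sg σ * k.G s t) := by
  rw [GG, h.eq]; ring

theorem NF.neg_iff {l : Par} {c : ℝ × ℝ} {k : Cf} (h : NF l c k) (σ : Bool) (s t : ℝ) :
    GG σ l (Ph c s t) < 0 ↔ sg σ * k.G s t < 0 := by
  have := bt_gt
  rw [h.GG_eq]
  exact ⟨fun h => neg_of_mul_neg_right h (by linarith),
    fun h => mul_neg_of_pos_of_neg (by linarith) h⟩

theorem mem_oct_eventually (p : ℝ × ℝ) : ∀ᶠ R : ℝ in atTop, p ∈ Oct R := by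
  have : ∀ᶠ R : ℝ in atTop, ∀ j, ip (nn j) p ≤ 2 * bt ^ 2 * R := by
    rw [eventually_all]
    intro j
    have h2 := bt_gt
    exact (tendsto_id.const_mul_atTop (by positivity)).eventually_ge_atTop _
  exact this

/-! ### Certificates for adjacent vertices -/

theorem ray_join {l : Par} (hl : l 8 = 0) {a : ℝ × ℝ} {j : Fin 8}
    (h : ∀ τ : ℝ, 0 ≤ τ → GG (sv j) l (a + τ • vv j) < 0) :
    ∀ᶠ R : ℝ in atTop, JoinedIn (U R (sv j) l) a (R • vv j) := by
  obtain ⟨C, hC⟩ := (mem_oct_eventually a).exists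
  filter_upwards [good_eventually hl (dist a (C • vv j) + 1), eventually_ge_atTop C,
    eventually_ge_atTop 0] with R hg hR hR0
  have hmem : ∀ τ : ℝ, 0 ≤ τ → τ ≤ R - C → a + τ • vv j ∈ Oct R := by
    intro τ h0 h1 i
    rw [ip_add, ip_smul]
    have h2 := bt_gt
    nlinarith [hC i, mul_le_mul_of_nonneg_left (nn_vv_le i j) h0,
      mul_le_mul_of_nonneg_left h1 (by positivity : 0 ≤ 2 * bt ^ 2)]
  have h1 : JoinedIn (U R (sv j) l) a (a + (R - C) • vv j) := by
    apply JoinedIn.of_segment_subset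
    rw [segment_eq_image']
    rintro _ ⟨θ, ⟨h0, h1⟩, rfl⟩
    beta_reduce
    rw [add_sub_cancel_left, smul_smul]
    have hRC : 0 ≤ R - C := by linarith
    exact ⟨hmem _ (by positivity) (by nlinarith), h _ (by positivity)⟩
  refine h1.trans (joined_of_ball (oct_convex R) (c := R • vv j) (r := dist a (C • vv j) + 1)
    (fun z _ hz => hg.vert j z hz) (hmem _ (by linarith) le_rfl) (vertex_mem hR0 j) ?_ ?_)
  · have : dist (a + (R - C) • vv j) (R • vv j) = dist a (C • vv j) := by
      rw [dist_eq_norm, dist_eq_norm]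
      congr 1
      rw [sub_smul]; abel
    rw [this]; linarith
  · rw [dist_self]; positivity

theorem ip_vv_pos (i : Fin 8) : 0 < ip (vv (i + 1)) (vv i) ∧ 0 < ip (vv (i - 1)) (vv i) ∧
    ip (vv (i + 1)) (vv (i - 2)) < 0 ∧ ip (vv (i - 1)) (vv (i + 2)) < 0 := by
  have h2 := bt_gt
  refine ⟨?_, ?_, ?_, ?_⟩ <;> fin_cases i <;> simp [ip, vv] <;> nlinarith

/-- Two orthogonal rays from `a` directed to the vertices `i ± 1` and disjoint from the region of
the vertex `i` cut off the component of this vertex. -/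
theorem cone_cert {l : Par} (hl : l 8 = 0) {a : ℝ × ℝ} {i : Fin 8}
    (h1 : ∀ τ : ℝ, 0 ≤ τ → GG (sv (i - 1)) l (a + τ • vv (i - 1)) < 0)
    (h2 : ∀ τ : ℝ, 0 ≤ τ → GG (sv (i + 1)) l (a + τ • vv (i + 1)) < 0) :
    ∀ᶠ R : ℝ in atTop, Holds R l (.sh i) ∧ ¬ Holds R l (.sh (i + 1)) ∧
      ¬ Holds R l (.sh (i - 1)) := by
  have hdec : ∀ p, p = a + (ip (vv (i - 1)) (p - a) / (2 * bt + 2)) • vv (i - 1) +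
      (ip (vv (i + 1)) (p - a) / (2 * bt + 2)) • vv (i + 1) := by
    intro p
    have hb := bt_gt
    have hb' : 2 * bt + 2 ≠ 0 := by linarith
    have hsq := bt_sq
    generalize hw : p - a = w
    obtain rfl : p = a + w := by rw [← hw]; abel
    rw [add_assoc, add_right_inj]
    obtain ⟨x, y⟩ := w
    fin_cases i <;> ext <;> simp [ip, vv] <;> field_simp <;> grind
  set g : ℝ × ℝ → ℝ := fun p => min (ip (vv (i - 1)) (p - a)) (ip (vv (i + 1)) (p - a)) with hgdef
  have hgc : Continuous g :=
    ((continuous_ip _).comp (continuous_id.sub continuous_const)).min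
      ((continuous_ip _).comp (continuous_id.sub continuous_const))
  have hb : 0 < 2 * bt + 2 := by linarith [bt_gt]
  have hg0 : ∀ R, ∀ x ∈ U R (sv i) l, g x ≠ 0 := by
    intro R x hx h0
    have hn := hx.2
    rw [hdec x] at hn
    rcases le_total (ip (vv (i - 1)) (x - a)) (ip (vv (i + 1)) (x - a)) with hle | hle
    · have h0' : ip (vv (i - 1)) (x - a) = 0 := by rw [← h0]; exact (min_eq_left hle).symm
      rw [h0'] at hn hle
      have := h2 _ (div_nonneg hle hb.le)
      rw [sv_succ, GG_not] at this
      simp only [zero_div, zero_smul, add_zero] at hn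
      linarith
    · have h0' : ip (vv (i + 1)) (x - a) = 0 := by rw [← h0]; exact (min_eq_right hle).symm
      rw [h0'] at hn hle
      have := h1 _ (div_nonneg hle hb.le)
      rw [sv_pred, GG_not] at this
      simp only [zero_div, zero_smul, add_zero] at hn
      linarith
  obtain ⟨p1, p2, p3, p4⟩ := ip_vv_pos i
  have hlim : ∀ j k : Fin 8, ∀ R : ℝ,
      ip (vv j) (R • vv k - a) = R * ip (vv j) (vv k) - ip (vv j) a := by
    intro j k R
    rw [ip_sub, ip_smul]
  have e1 : ∀ᶠ R : ℝ in atTop, 0 < g (R • vv i) := by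
    have a1 := (tendsto_id.atTop_mul_const p1).eventually_gt_atTop (ip (vv (i + 1)) a)
    have a2 := (tendsto_id.atTop_mul_const p2).eventually_gt_atTop (ip (vv (i - 1)) a)
    filter_upwards [a1, a2] with R b1 b2
    simp only [hgdef, hlim, lt_min_iff]
    exact ⟨sub_pos.2 b2, sub_pos.2 b1⟩
  have e2 : ∀ᶠ R : ℝ in atTop, g (R • vv (i + 2)) < 0 := by
    filter_upwards [(tendsto_id.atTop_mul_const_of_neg p4).eventually_lt_atBot
      (ip (vv (i - 1)) a)] with R b1
    refine (min_le_left _ _).trans_lt ?_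
    rw [hlim]; exact sub_neg.2 b1
  have e3 : ∀ᶠ R : ℝ in atTop, g (R • vv (i - 2)) < 0 := by
    filter_upwards [(tendsto_id.atTop_mul_const_of_neg p3).eventually_lt_atBot
      (ip (vv (i + 1)) a)] with R b1
    refine (min_le_right _ _).trans_lt ?_
    rw [hlim]; exact sub_neg.2 b1
  filter_upwards [ray_join hl h1, ray_join hl h2, e1, e2, e3] with R j1 j2 b1 b2 b3
  refine ⟨?_, ?_, ?_⟩
  · simp only [Holds]
    rw [sv_pred, ← sv_succ] at j1
    exact j1.symm.trans j2
  · simp only [Holds]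
    rw [sv_succ, sv_succ, Bool.not_not, add_sub_cancel_right, show i + 1 + 1 = i + 2 by
      rw [add_assoc]; rfl]
    exact fun h => not_joined_of_sep hgc b2 b1 (hg0 R) h.symm
  · simp only [Holds]
    rw [sub_add_cancel, show i - 1 - 1 = i - 2 by rw [sub_sub]; rfl]
    exact fun h => not_joined_of_sep hgc b3 b1 (hg0 R) h

/-- Positive multiples of the vertices in the coordinates `(s, t)`. -/
noncomputable def dir : Fin 8 → ℝ × ℝ :=
  ![(1, 1), (1, 0), (1, -1), (0, -1), (-1, -1), (-1, 0), (-1, 1), (0, 1)]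

theorem vv_dir (j : Fin 8) : ∃ κ : ℝ, 0 < κ ∧ ∀ c s t (τ : ℝ),
    Ph c s t + τ • vv j = Ph c (s + κ * τ * (dir j).1) (t + κ * τ * (dir j).2) := by
  have h1 := bt_sq
  have h2 := bt_gt
  refine ⟨if sv j then 1 else (bt - 1) / 2, by split_ifs <;> linarith, fun c s t τ => ?_⟩
  fin_cases j <;> ext <;> simp [Ph, vv, dir, sv] <;> grind

theorem NF.cone {l : Par} {c : ℝ × ℝ} {k : Cf} (h : NF l c k) (i : Fin 8) (s t : ℝ)
    (h1 : ∀ τ : ℝ, 0 ≤ τ →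
      sg (sv (i - 1)) * k.G (s + τ * (dir (i - 1)).1) (t + τ * (dir (i - 1)).2) < 0)
    (h2 : ∀ τ : ℝ, 0 ≤ τ →
      sg (sv (i + 1)) * k.G (s + τ * (dir (i + 1)).1) (t + τ * (dir (i + 1)).2) < 0) :
    ∀ᶠ R : ℝ in atTop, Holds R l (.sh i) ∧ ¬ Holds R l (.sh (i + 1)) ∧
      ¬ Holds R l (.sh (i - 1)) := by
  refine cone_cert h.zero (a := Ph c s t) (fun τ hτ => ?_) (fun τ hτ => ?_)
  · obtain ⟨κ, hκ, e⟩ := vv_dir (i - 1)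
    rw [e, h.neg_iff]
    exact h1 _ (by positivity)
  · obtain ⟨κ, hκ, e⟩ := vv_dir (i + 1)
    rw [e, h.neg_iff]
    exact h2 _ (by positivity)

theorem sc_vertex (c : ℝ × ℝ) (j : Fin 8) : ∃ κ : ℝ, 0 < κ ∧ ∀ R : ℝ,
    sc c (R • vv j) = sc c 0 + R * (κ * (dir j).1) ∧
    tc c (R • vv j) = tc c 0 + R * (κ * (dir j).2) := by
  obtain ⟨κ, hκ, e⟩ := vv_dir j
  refine ⟨κ, hκ, fun R => ?_⟩
  have := e c (sc c 0) (tc c 0) R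
  rw [Ph_sc_tc, zero_add] at this
  rw [this, sc_Ph, tc_Ph]
  constructor <;> ring

end X92

namespace X92

open Set Filter Topology

variable {l : Par} {c : ℝ × ℝ} {k : Cf}

/-! ### Certificates for vertex-free components -/

theorem vertex_far (c : ℝ × ℝ) (C : ℝ) : ∀ᶠ R : ℝ in atTop, ∀ j : Fin 8,
    C < |sc c (R • vv j)| ∨ C < |tc c (R • vv j)| := by
  rw [eventually_all]
  intro j
  obtain ⟨κ, hκ, e⟩ := sc_vertex c j
  have key : ∀ x y : ℝ, x = 1 ∨ x = -1 → ∀ᶠ R : ℝ in atTop, C < |y + R * (κ * x)| := by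
    intro x y hx
    have h1 := (tendsto_id (α := ℝ)).atTop_mul_const hκ
    filter_upwards [h1.eventually_gt_atTop (C + |y|)] with R hR
    simp only [id] at hR
    rcases hx with rfl | rfl
    · rw [lt_abs]; left; have := neg_abs_le y; linarith
    · rw [lt_abs]; right; have := le_abs_self y; linarith
  have hd : ((dir j).1 = 1 ∨ (dir j).1 = -1) ∨ ((dir j).2 = 1 ∨ (dir j).2 = -1) := by
    fin_cases j <;> simp [dir]
  rcases hd with hd | hd
  · filter_upwards [key _ (sc c 0) hd] with R hR
    left; rw [(e R).1]; exact hR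
  · filter_upwards [key _ (tc c 0) hd] with R hR
    right; rw [(e R).2]; exact hR

/-- The region of sign `σ` avoids the boundary of the rectangle `[a, b] × [u, v]`. -/
def IsBox (k : Cf) (σ : Bool) (a b u v : ℝ) : Prop :=
  ∀ s t, a ≤ s → s ≤ b → u ≤ t → t ≤ v → s = a ∨ s = b ∨ t = u ∨ t = v → 0 ≤ sg σ * k.G s t

theorem NF.box_sep (h : NF l c k) {σ : Bool} {a b u v : ℝ} (hbox : IsBox k σ a b u v) {s t : ℝ}
    (hs : a < s ∧ s < b) (ht : u < t ∧ t < v) {q : ℝ × ℝ}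
    (hq : sc c q < a ∨ b < sc c q ∨ tc c q < u ∨ v < tc c q) (R : ℝ) :
    ¬ JoinedIn (U R σ l) (Ph c s t) q := by
  set g : ℝ × ℝ → ℝ := fun p => max (max (a - sc c p) (sc c p - b)) (max (u - tc c p) (tc c p - v))
    with hg
  have hgc : Continuous g :=
    ((continuous_const.sub (continuous_sc c)).max ((continuous_sc c).sub continuous_const)).max
      ((continuous_const.sub (continuous_tc c)).max ((continuous_tc c).sub continuous_const))
  refine not_joined_of_sep hgc ?_ ?_ ?_
  · simp only [hg, sc_Ph, tc_Ph, max_lt_iff]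
    exact ⟨⟨by linarith, by linarith⟩, by linarith, by linarith⟩
  · simp only [hg, lt_max_iff]
    rcases hq with h | h | h | h
    · left; left; linarith
    · left; right; linarith
    · right; left; linarith
    · right; right; linarith
  · intro x hx h0
    have hn := hx.2
    rw [← Ph_sc_tc c x, h.neg_iff] at hn
    refine absurd (hbox (sc c x) (tc c x) ?_ ?_ ?_ ?_ ?_) (not_le.2 hn)
    · have : a - sc c x ≤ g x := (le_max_left _ _).trans (le_max_left _ _)
      linarith
    · have : sc c x - b ≤ g x := (le_max_right _ _).trans (le_max_left _ _)
      linarith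
    · have : u - tc c x ≤ g x := (le_max_left _ _).trans (le_max_right _ _)
      linarith
    · have : tc c x - v ≤ g x := (le_max_right _ _).trans (le_max_right _ _)
      linarith
    · by_contra hne
      push Not at hne
      obtain ⟨n1, n2, n3, n4⟩ := hne
      rcases max_choice (max (a - sc c x) (sc c x - b)) (max (u - tc c x) (tc c x - v)) with e | e
      · rcases max_choice (a - sc c x) (sc c x - b) with e' | e'
        · exact n1 (by have := e.trans e'; simp only [hg] at h0; linarith)
        · exact n2 (by have := e.trans e'; simp only [hg] at h0; linarith)
      · rcases max_choice (u - tc c x) (tc c x - v) with e' | e'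
        · exact n3 (by have := e.trans e'; simp only [hg] at h0; linarith)
        · exact n4 (by have := e.trans e'; simp only [hg] at h0; linarith)

theorem NF.box_bd (h : NF l c k) {σ : Bool} {a b u v : ℝ} (hbox : IsBox k σ a b u v) {s t : ℝ}
    (hs : a < s ∧ s < b) (ht : u < t ∧ t < v) (hneg : sg σ * k.G s t < 0) :
    ∀ᶠ R : ℝ in atTop, Bd R σ l (Ph c s t) := by
  filter_upwards [mem_oct_eventually (Ph c s t),
    vertex_far c (max (max (|a|) (|b|)) (max (|u|) (|v|)))] with R hO hfar
  refine ⟨⟨hO, (h.neg_iff σ s t).2 hneg⟩, fun j => h.box_sep hbox hs ht ?_ R⟩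
  rcases hfar j with h1 | h1
  · simp only [max_lt_iff] at h1
    rcases lt_abs.1 h1.1.2 with h2 | h2
    · right; left; exact (le_abs_self b).trans_lt h2
    · rcases lt_abs.1 h1.1.1 with h3 | h3
      · right; left
        linarith [neg_abs_le a, le_abs_self a, abs_nonneg b, neg_abs_le b]
      · left; linarith [neg_abs_le a]
  · simp only [max_lt_iff] at h1
    rcases lt_abs.1 h1.2.2 with h2 | h2
    · right; right; right; exact (le_abs_self v).trans_lt h2
    · rcases lt_abs.1 h1.2.1 with h3 | h3
      · right; right; right
        linarith [neg_abs_le u, le_abs_self u, abs_nonneg v, neg_abs_le v]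
      · right; right; left; linarith [neg_abs_le u]

/-- A system of boxes containing distinct components. -/
theorem NF.boxes (h : NF l c k) {σ : Bool} {m : Fin 3} (s t a b u v : Fin (m + 1) → ℝ)
    (hbox : ∀ i, IsBox k σ (a i) (b i) (u i) (v i)) (hs : ∀ i, a i < s i ∧ s i < b i)
    (ht : ∀ i, u i < t i ∧ t i < v i) (hneg : ∀ i, sg σ * k.G (s i) (t i) < 0)
    (hout : ∀ i j, i ≠ j → s j < a i ∨ b i < s j ∨ t j < u i ∨ v i < t j) :
    ∀ᶠ R : ℝ in atTop, Holds R l (.bb σ m) := by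
  have : ∀ᶠ R : ℝ in atTop, ∀ i, Bd R σ l (Ph c (s i) (t i)) := by
    rw [eventually_all]
    exact fun i => h.box_bd (hbox i) (hs i) (ht i) (hneg i)
  filter_upwards [this] with R hR
  refine ⟨fun i => Ph c (s i) (t i), hR, fun i j hij => h.box_sep (hbox i) (hs i) (ht i) ?_ R⟩
  rw [sc_Ph, tc_Ph]
  exact hout i j hij

theorem holds_bb_mono {R : ℝ} {σ : Bool} {m n : Fin 3} (hmn : m ≤ n) (h : Holds R l (.bb σ n)) :
    Holds R l (.bb σ m) := by
  obtain ⟨f, hf, hne⟩ := h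
  have hle : (m : ℕ) + 1 ≤ n + 1 := Nat.succ_le_succ hmn
  refine ⟨fun i => f (Fin.castLE hle i), fun i => hf _, fun i j hij => hne _ _ ?_⟩
  exact fun e => hij (Fin.castLE_injective hle e)

/-! ### Local extrema -/

theorem poly_min {c₁ c₂ c₃ c₄ : ℝ}
    (h : ∀ᶠ x : ℝ in 𝓝 0, 0 ≤ c₁ * x + c₂ * x ^ 2 + c₃ * x ^ 3 + c₄ * x ^ 4) :
    c₁ = 0 ∧ 0 ≤ c₂ := by
  have h1 : c₁ = 0 := by
    have hd : HasDerivAt (fun x : ℝ => c₁ * x + c₂ * x ^ 2 + c₃ * x ^ 3 + c₄ * x ^ 4) c₁ 0 := by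
      have := (((hasDerivAt_id (0 : ℝ)).const_mul c₁).add
        (((hasDerivAt_id (0 : ℝ)).pow 2).const_mul c₂)).add
        (((hasDerivAt_id (0 : ℝ)).pow 3).const_mul c₃) |>.add
        (((hasDerivAt_id (0 : ℝ)).pow 4).const_mul c₄)
      refine HasDerivAt.congr_deriv this ?_
      simp
    refine IsLocalMin.hasDerivAt_eq_zero (f := fun x : ℝ =>
      c₁ * x + c₂ * x ^ 2 + c₃ * x ^ 3 + c₄ * x ^ 4) ?_ hd
    filter_upwards [h] with x hx
    simpa using hx
  refine ⟨h1, ?_⟩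
  have ht : Tendsto (fun x : ℝ => c₂ + c₃ * x + c₄ * x ^ 2) (𝓝[≠] 0) (𝓝 c₂) := by
    have hc : Continuous (fun x : ℝ => c₂ + c₃ * x + c₄ * x ^ 2) := by fun_prop
    have := hc.tendsto 0
    simp only [mul_zero, add_zero, ne_eq, OfNat.ofNat_ne_zero, not_false_eq_true, zero_pow] at this
    exact this.mono_left nhdsWithin_le_nhds
  refine ge_of_tendsto ht ?_
  filter_upwards [h.filter_mono nhdsWithin_le_nhds, self_mem_nhdsWithin] with x hx hx0
  have hx0 : x ≠ 0 := hx0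
  have hx2 : 0 < x ^ 2 := by positivity
  rw [h1] at hx
  by_contra hneg
  push Not at hneg
  nlinarith

/-- Necessary conditions for `(s, t)` to be a local minimum of `sg σ * k.G` with negative value. -/
structure PitC (k : Cf) (σ : Bool) (s t : ℝ) : Prop where
  neg : sg σ * k.G s t < 0
  gs : k.Gs s t = 0
  gt : k.Gt s t = 0
  hess : ∀ a b, 0 ≤ sg σ * k.H s t a b

theorem G_expand (k : Cf) (s t a b x : ℝ) : k.G (s + x * a) (t + x * b) = k.G s t +
    (a * k.Gs s t + b * k.Gt s t) * x + k.H s t a b * x ^ 2 +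
    (4 * s * a ^ 3 - 12 * s * a * b ^ 2 - 12 * t * a ^ 2 * b + 4 * t * b ^ 3 + k.A * a ^ 3 +
      k.B * a * b ^ 2) * x ^ 3 + (a ^ 4 - 6 * a ^ 2 * b ^ 2 + b ^ 4) * x ^ 4 := by
  simp only [Cf.G, Cf.Gs, Cf.Gt, Cf.H]; ring

theorem NF.pit (h : NF l c k) {σ : Bool} {s t : ℝ} (hn : sg σ * k.G s t < 0)
    (hm : IsLocalMin (GG σ l) (Ph c s t)) : PitC k σ s t := by
  have hK : 0 < 4 * bt + 2 := by linarith [bt_gt]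
  have key : ∀ a b, sg σ * (a * k.Gs s t + b * k.Gt s t) = 0 ∧ 0 ≤ sg σ * k.H s t a b := by
    intro a b
    have hc : Continuous (fun x : ℝ => Ph c (s + x * a) (t + x * b)) := by unfold Ph; fun_prop
    have h0 : Tendsto (fun x : ℝ => Ph c (s + x * a) (t + x * b)) (𝓝 0) (𝓝 (Ph c s t)) := by
      have := hc.tendsto 0
      simpa using this
    refine poly_min (c₃ := sg σ * (4 * s * a ^ 3 - 12 * s * a * b ^ 2 - 12 * t * a ^ 2 * b +
      4 * t * b ^ 3 + k.A * a ^ 3 + k.B * a * b ^ 2))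
      (c₄ := sg σ * (a ^ 4 - 6 * a ^ 2 * b ^ 2 + b ^ 4)) ?_
    filter_upwards [h0.eventually hm] with x hx
    rw [h.GG_eq, h.GG_eq, G_expand] at hx
    have := le_of_mul_le_mul_left hx hK
    linarith
  have hσ : sg σ ≠ 0 := by cases σ <;> simp
  refine ⟨hn, ?_, ?_, fun a b => (key a b).2⟩
  · have := (key 1 0).1
    simpa [hσ] using this
  · have := (key 0 1).1
    simpa [hσ] using this

theorem NF.exists_pit (h : NF l c k) {R η : ℝ} (hR : 0 < R) (hg : Good R η l) {σ : Bool}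
    {p : ℝ × ℝ} (hp : Bd R σ l p) :
    ∃ s t, JoinedIn (U R σ l) p (Ph c s t) ∧ PitC k σ s t := by
  obtain ⟨x, hx, hm⟩ := X92.exists_pit hR hg hp
  rw [← Ph_sc_tc c x] at hx hm
  exact ⟨_, _, hx, h.pit ((h.neg_iff _ _ _).1 hx.target_mem.2) hm⟩

theorem NF.not_bb_zero (h : NF l c k) {σ : Bool} (hp : ∀ s t, ¬ PitC k σ s t) :
    ∀ᶠ R : ℝ in atTop, ¬ Holds R l (.bb σ 0) := by
  filter_upwards [good_eventually h.zero 1, eventually_gt_atTop 0] with R hg hR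
  rintro ⟨f, hf, -⟩
  obtain ⟨s, t, -, hpit⟩ := h.exists_pit hR hg (hf 0)
  exact hp s t hpit

/-- If the possible local minima are distinguished by a colouring with `m` colours, there are at
most `m` vertex-free components. -/
theorem NF.not_bb (h : NF l c k) {σ : Bool} {m : Fin 3} (col : ℝ → ℝ → Fin m)
    (hp : ∀ s t s' t', PitC k σ s t → PitC k σ s' t' → col s t = col s' t' → s = s' ∧ t = t') :
    ∀ᶠ R : ℝ in atTop, ¬ Holds R l (.bb σ m) := by
  filter_upwards [good_eventually h.zero 1, eventually_gt_atTop 0] with R hg hR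
  rintro ⟨f, hf, hne⟩
  choose s t hj hpit using fun i => h.exists_pit hR hg (hf i)
  obtain ⟨i, j, hij, e⟩ := Fintype.exists_ne_map_eq_of_card_lt (fun i => col (s i) (t i)) (by simp)
  obtain ⟨e1, e2⟩ := hp _ _ _ _ (hpit i) (hpit j) e
  refine hne i j hij ((hj i).trans ?_)
  rw [e1, e2]
  exact (hj j).symm

/-! ### Critical points on the zero level -/

theorem NF.nc (h : NF l c k) (hk : ∀ s t, k.G s t = 0 → k.Gs s t = 0 → k.Gt s t = 0 → False) :
    NC l := by
  intro p h0 hgr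
  have hK : 4 * bt + 2 ≠ 0 := by linarith [bt_gt]
  obtain ⟨s, t, rfl⟩ : ∃ s t, p = Ph c s t := ⟨_, _, (Ph_sc_tc c p).symm⟩
  have key : ∀ a b, a * k.Gs s t + b * k.Gt s t = 0 := by
    intro a b
    have h1 := hasDerivAt_FF l (Ph c s t) (a + bt * b, bt * a - b) 0
    rw [zero_smul, add_zero, hgr.1, hgr.2, zero_mul, zero_mul, add_zero] at h1
    have e : ∀ x : ℝ, Ph c s t + x • (a + bt * b, bt * a - b) = Ph c (s + x * a) (t + x * b) := by
      intro x; ext <;> simp [Ph] <;> ring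
    simp only [e, h.eq, G_expand] at h1
    have h2 := (((((hasDerivAt_id (0 : ℝ)).const_mul (a * k.Gs s t + b * k.Gt s t)).const_add
      (k.G s t)).add (((hasDerivAt_id (0 : ℝ)).pow 2).const_mul (k.H s t a b))).add
      (((hasDerivAt_id (0 : ℝ)).pow 3).const_mul (4 * s * a ^ 3 - 12 * s * a * b ^ 2 -
        12 * t * a ^ 2 * b + 4 * t * b ^ 3 + k.A * a ^ 3 + k.B * a * b ^ 2))).add
      (((hasDerivAt_id (0 : ℝ)).pow 4).const_mul (a ^ 4 - 6 * a ^ 2 * b ^ 2 + b ^ 4))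
      |>.const_mul (4 * bt + 2)
    have h3 := h1.unique h2
    simpa [hK] using h3.symm
  rw [h.eq] at h0
  refine hk s t ((mul_eq_zero.1 h0).resolve_left hK) ?_ ?_
  · simpa using key 1 0
  · simpa using key 0 1

end X92

namespace X92

open Set Filter Topology

/-! ### Patterns of joined vertices and critical points -/

variable {l : Par} {c : ℝ × ℝ} {k : Cf}

theorem G_neg (k : Cf) (s t : ℝ) : k.G s (-t) = k.G s t := by
  simp only [Cf.G]; ring

/-- The truth values of the properties `sh i` when they hold exactly for `i ∈ I`. A vertex `i` with
`sh i`, that is, one whose two neighbours are joined, is called shielded. -/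
def shL (I : List (Fin 8)) : List (Atom × Bool) :=
  (List.finRange 8).map fun i => (Atom.sh i, decide (i ∈ I))

/-- Assembles the facts about a parameter in normal form. -/
theorem NF.facts (h : NF l c k) (hnc : NC l) {I : List (Fin 8)}
    (hsh : ∀ᶠ R : ℝ in atTop, ∀ i : Fin 8, Holds R l (.sh i) ↔ i ∈ I) {L : List (Atom × Bool)}
    (hL : ∀ x ∈ L, ∀ᶠ R : ℝ in atTop, (Holds R l x.1 ↔ x.2 = true)) : Facts l (shL I ++ L) := by
  refine ⟨h.zero, hnc, fun x hx => ?_⟩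
  rcases List.mem_append.1 hx with hx | hx
  · obtain ⟨i, -, rfl⟩ := List.mem_map.1 hx
    filter_upwards [hsh] with R hR
    rw [hR i]; simp
  · exact hL x hx

/-- Four cones with apexes `(±a, ±b)`. -/
theorem NF.sh_star (h : NF l c k) (hev : ∀ s t, k.G (-s) t = k.G s t) (a b : ℝ)
    (h1 : ∀ τ : ℝ, 0 ≤ τ → 0 < k.G a (b + τ)) (h2 : ∀ τ : ℝ, 0 ≤ τ → 0 < k.G (a + τ) b) :
    ∀ᶠ R : ℝ in atTop, ∀ i : Fin 8, Holds R l (.sh i) ↔ i ∈ [(0 : Fin 8), 2, 4, 6] := by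
  have c0 := h.cone 0 a b
    (fun τ hτ => by have := h1 τ hτ; simpa [dir, sv] using this)
    (fun τ hτ => by have := h2 τ hτ; simpa [dir, sv] using this)
  have c2 := h.cone 2 a (-b)
    (fun τ hτ => by have := h2 τ hτ; rw [← G_neg] at this; simpa [dir, sv] using this)
    (fun τ hτ => by
      have := h1 τ hτ; rw [← G_neg, neg_add] at this; simpa [dir, sv] using this)
  have c4 := h.cone 4 (-a) (-b)
    (fun τ hτ => by
      have := h1 τ hτ; rw [← G_neg, ← hev, neg_add] at this; simpa [dir, sv] using this)
    (fun τ hτ => by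
      have := h2 τ hτ; rw [← G_neg, ← hev, neg_add] at this; simpa [dir, sv] using this)
  have c6 := h.cone 6 (-a) b
    (fun τ hτ => by
      have := h2 τ hτ; rw [← hev, neg_add] at this; simpa [dir, sv] using this)
    (fun τ hτ => by have := h1 τ hτ; rw [← hev] at this; simpa [dir, sv] using this)
  filter_upwards [c0, c2, c4, c6] with R d0 d2 d4 d6 i
  fin_cases i
  · simpa using d0.1
  · simpa using d0.2.1
  · simpa using d2.1
  · simpa using d2.2.1
  · simpa using d4.1
  · simpa using d4.2.1
  · simpa using d6.1
  · simpa using d6.2.1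

/-- Cones `0` and `2` with apex `(a, 0)` and cone `5` with apex `(b, 0)`. -/
theorem NF.sh_tripod (h : NF l c k) (a b : ℝ)
    (h1 : ∀ τ : ℝ, 0 ≤ τ → 0 < k.G a τ) (h2 : ∀ τ : ℝ, 0 ≤ τ → 0 < k.G (a + τ) 0)
    (h3 : ∀ τ : ℝ, 0 ≤ τ → k.G (b - τ) τ < 0) :
    ∀ᶠ R : ℝ in atTop, ∀ i : Fin 8, Holds R l (.sh i) ↔ i ∈ [(0 : Fin 8), 2, 5] := by
  have c0 := h.cone 0 a 0
    (fun τ hτ => by have := h1 τ hτ; simpa [dir, sv] using this)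
    (fun τ hτ => by have := h2 τ hτ; simpa [dir, sv] using this)
  have c2 := h.cone 2 a 0
    (fun τ hτ => by have := h2 τ hτ; simpa [dir, sv] using this)
    (fun τ hτ => by have := h1 τ hτ; rw [← G_neg] at this; simpa [dir, sv] using this)
  have c5 := h.cone 5 b 0
    (fun τ hτ => by
      have := h3 τ hτ; rw [← G_neg, sub_eq_add_neg] at this; simpa [dir, sv] using this)
    (fun τ hτ => by
      have := h3 τ hτ; rw [sub_eq_add_neg] at this; simpa [dir, sv] using this)
  filter_upwards [c0, c2, c5] with R d0 d2 d5 i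
  fin_cases i
  · simpa using d0.1
  · simpa using d0.2.1
  · simpa using d2.1
  · simpa using d2.2.1
  · simpa using d5.2.2
  · simpa using d5.1
  · simpa using d5.2.1
  · have : ¬ Holds R l (.sh 7) := d0.2.2
    simpa using this

/-- Cones `7` and `3` with apexes `(0, ±a)`, separated by the line `t = 0`. -/
theorem NF.sh_path (h : NF l c k) (hev : ∀ s t, k.G (-s) t = k.G s t) (a : ℝ)
    (h1 : ∀ τ : ℝ, 0 ≤ τ → k.G τ (a + τ) < 0) (h2 : ∀ s, 0 < k.G s 0) :
    ∀ᶠ R : ℝ in atTop, ∀ i : Fin 8, Holds R l (.sh i) ↔ i ∈ [(3 : Fin 8), 7] := by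
  have c7 := h.cone 7 0 a
    (fun τ hτ => by have := h1 τ hτ; rw [← hev] at this; simpa [dir, sv] using this)
    (fun τ hτ => by have := h1 τ hτ; simpa [dir, sv] using this)
  have c3 := h.cone 3 0 (-a)
    (fun τ hτ => by
      have := h1 τ hτ; rw [← G_neg, neg_add] at this; simpa [dir, sv] using this)
    (fun τ hτ => by
      have := h1 τ hτ; rw [← G_neg, ← hev, neg_add] at this; simpa [dir, sv] using this)
  have hsep : ∀ R : ℝ, ∀ x ∈ U R false l, tc c x ≠ 0 := by
    intro R x hx h0
    have hn := hx.2
    rw [← Ph_sc_tc c x, h.neg_iff, h0] at hn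
    have := h2 (sc c x)
    simp only [sg_false, one_mul] at hn
    linarith
  have hpos : ∀ j : Fin 8, (dir j).2 = 1 → ∀ᶠ R : ℝ in atTop, 0 < tc c (R • vv j) := by
    intro j hj
    obtain ⟨κ, hκ, e⟩ := sc_vertex c j
    filter_upwards [((tendsto_id (α := ℝ)).atTop_mul_const hκ).eventually_gt_atTop (-tc c 0)]
      with R hR
    rw [(e R).2, hj, mul_one]
    simp only [id] at hR
    linarith
  have hneg : ∀ j : Fin 8, (dir j).2 = -1 → ∀ᶠ R : ℝ in atTop, tc c (R • vv j) < 0 := by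
    intro j hj
    obtain ⟨κ, hκ, e⟩ := sc_vertex c j
    filter_upwards [((tendsto_id (α := ℝ)).atTop_mul_const hκ).eventually_gt_atTop (tc c 0)]
      with R hR
    rw [(e R).2, hj]
    simp only [id] at hR
    linarith
  filter_upwards [c7, c3, hpos 0 (by simp [dir]), hneg 2 (by simp [dir]), hneg 4 (by simp [dir]),
    hpos 6 (by simp [dir])] with R d7 d3 p0 p2 p4 p6 i
  fin_cases i
  · simpa using d7.2.1
  · have : ¬ Holds R l (.sh 1) := fun hj =>
      not_joined_of_sep (continuous_tc c) p2 p0 (hsep R) (JoinedIn.symm hj)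
    simpa using this
  · simpa using d3.2.2
  · simpa using d3.1
  · simpa using d3.2.1
  · have : ¬ Holds R l (.sh 5) := fun hj =>
      not_joined_of_sep (continuous_tc c) p4 p6 (hsep R) hj
    simpa using this
  · simpa using d7.2.2
  · simpa using d7.1

/-- The relative position of vertex-free components can be read off from local minima in them. -/
theorem NF.not_sl (h : NF l c k) {σ τ : Bool} (hp : ∀ s t s' t', PitC k σ s t → PitC k σ s' t' →
    sg τ * form σ (Ph c s' t' - Ph c s t) ≤ 0) :
    ∀ᶠ R : ℝ in atTop, ¬ Holds R l (.sl σ τ) := by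
  filter_upwards [good_eventually h.zero 1, eventually_gt_atTop 0] with R hg hR
  rintro ⟨p, q, b1, b2, hpq, hf⟩
  obtain ⟨s, t, j1, p1⟩ := h.exists_pit hR hg b1
  obtain ⟨s', t', j2, p2⟩ := h.exists_pit hR hg b2
  exact absurd (form_sign hR hg b1 b2 hpq j1 j2 τ hf) (not_lt.2 (hp _ _ _ _ p1 p2))

/-- A point where the `t`-derivative of `k.G` vanishes lies on the axis `t = 0` or on the curve where
`k.G` is minimal in `t` off the axis. -/
theorem crit_split {s t : ℝ} (h : k.Gt s t = 0) :
    t = 0 ∨ (t ≠ 0 ∧ t ^ 2 = 3 * s ^ 2 - k.B * s / 2 - k.Q / 2) := by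
  rcases mul_eq_zero.1 h with h | h
  · exact Or.inl h
  · by_cases ht : t = 0
    · exact Or.inl ht
    · exact Or.inr ⟨ht, by linear_combination h / 4⟩

/-- There is no critical point on the zero level if two quartics in `s` have no double real root: the
restriction of `k.G` to the axis, and its restriction to the curve of partial minima in `t` off the
axis. In the applications this is certified by a Bezout identity between the quartic and its
derivative. -/
theorem nc_cert (h : NF l c k)
    (hv : ∀ s : ℝ, s ^ 4 + k.A * s ^ 3 + k.P * s ^ 2 + k.M * s + k.E = 0 →
      4 * s ^ 3 + 3 * k.A * s ^ 2 + 2 * k.P * s + k.M = 0 → False)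
    (hw : ∀ s : ℝ, -8 * s ^ 4 + (k.A + 3 * k.B) * s ^ 3 + (k.P - k.B ^ 2 / 4 + 3 * k.Q) * s ^ 2 +
        (k.M - k.B * k.Q / 2) * s + (k.E - k.Q ^ 2 / 4) = 0 →
      -32 * s ^ 3 + 3 * (k.A + 3 * k.B) * s ^ 2 + 2 * (k.P - k.B ^ 2 / 4 + 3 * k.Q) * s +
        (k.M - k.B * k.Q / 2) = 0 → False) : NC l := by
  refine h.nc fun s t h0 h1 h2 => ?_
  rcases crit_split h2 with rfl | ⟨-, ht⟩
  · refine hv s ?_ ?_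
    · rw [← h0, Cf.G]; ring
    · rw [← h1, Cf.Gs]; ring
  · refine hw s ?_ ?_
    · rw [← h0, Cf.G]
      linear_combination
        (6 * s ^ 2 - k.B * s - k.Q - (t ^ 2 + (3 * s ^ 2 - k.B * s / 2 - k.Q / 2))) * ht
    · rw [← h1, Cf.Gs]
      linear_combination (12 * s - k.B) * ht

/-- At a local minimum off the axis, the partial minimum of `k.G` in `t` has a critical point with
non-negative second derivative. -/
theorem PitC.off {s t : ℝ} (h : PitC k false s t) (ht : t ≠ 0)
    (hT : t ^ 2 = 3 * s ^ 2 - k.B * s / 2 - k.Q / 2) :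
    -32 * s ^ 3 + 3 * (k.A + 3 * k.B) * s ^ 2 + 2 * (k.P - k.B ^ 2 / 4 + 3 * k.Q) * s +
        (k.M - k.B * k.Q / 2) = 0 ∧
    0 ≤ -96 * s ^ 2 + 6 * (k.A + 3 * k.B) * s + 2 * (k.P - k.B ^ 2 / 4 + 3 * k.Q) := by
  constructor
  · rw [← h.gs, Cf.Gs]
    linear_combination (12 * s - k.B) * hT
  · -- the direction tangent to the curve where `k.G` is minimal in `t`
    have h1 := h.hess (4 * t) (12 * s - k.B)
    simp only [Cf.H, sg_false, one_mul] at h1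
    have h2 : 0 < t ^ 2 := by positivity
    have e : (4 * t) ^ 2 * (6 * s ^ 2 - 6 * t ^ 2 + 3 * k.A * s + k.P) +
        4 * t * (12 * s - k.B) * (t * (2 * k.B - 24 * s)) +
        (12 * s - k.B) ^ 2 * (6 * t ^ 2 - 6 * s ^ 2 + k.B * s + k.Q) = 8 * t ^ 2 *
        (-96 * s ^ 2 + 6 * (k.A + 3 * k.B) * s + 2 * (k.P - k.B ^ 2 / 4 + 3 * k.Q)) := by
      linear_combination (-96 * t ^ 2 + 2 * (12 * s - k.B) ^ 2) * hT
    rw [e] at h1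
    by_contra hn
    push Not at hn
    nlinarith

end X92

namespace X92

open Set Filter Topology

/-! ### Examples with four or two shielded vertices -/

theorem ev_true {a : Atom} {l : Par} (h : ∀ᶠ R : ℝ in atTop, Holds R l a) :
    ∀ᶠ R : ℝ in atTop, (Holds R l (a, true).1 ↔ (a, true).2 = true) := by
  filter_upwards [h] with R hR
  simpa using hR

theorem ev_false {a : Atom} {l : Par} (h : ∀ᶠ R : ℝ in atTop, ¬ Holds R l a) :
    ∀ᶠ R : ℝ in atTop, (Holds R l (a, false).1 ↔ (a, false).2 = true) := by
  filter_upwards [h] with R hR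
  simpa using hR

/-- Labels of four shielded vertices and no vertex-free component. -/
def star0 : List (Atom × Bool) := shL [0, 2, 4, 6] ++ [(.bb false 0, false)]

/-- Labels of four shielded vertices and one vertex-free component. -/
def star1 : List (Atom × Bool) := shL [0, 2, 4, 6] ++ [(.bb false 0, true), (.bb false 1, false)]

/-- Labels of four shielded vertices and two vertex-free components in a definite position. -/
def star2 : List (Atom × Bool) := shL [0, 2, 4, 6] ++
  [(.bb false 0, true), (.bb false 1, true), (.sl false true, true), (.sl false false, false)]

/-- Labels of two opposite shielded vertices. -/
def path2 : List (Atom × Bool) := shL [3, 7] ++ []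

theorem facts_star0 : ∃ l, Facts l star0 := by
  obtain ⟨l, c, h⟩ := nf_exists ⟨0, 0, 0, 0, 0, 1⟩
  have hcr : ∀ s t : ℝ, Cf.Gs ⟨0, 0, 0, 0, 0, 1⟩ s t = 0 → Cf.Gt ⟨0, 0, 0, 0, 0, 1⟩ s t = 0 →
      0 < Cf.G ⟨0, 0, 0, 0, 0, 1⟩ s t := by
    intro s t h1 h2
    simp only [Cf.G, Cf.Gs, Cf.Gt] at *
    -- Euler's identity for the quartic form
    have : s ^ 4 - 6 * s ^ 2 * t ^ 2 + t ^ 4 = 0 := by linear_combination s * h1 / 4 + t * h2 / 4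
    linarith
  refine ⟨l, h.facts (h.nc fun s t h0 h1 h2 => (hcr s t h1 h2).ne' h0)
    (h.sh_star (fun s t => by simp only [Cf.G]; ring) 0 0 ?_ ?_) ?_⟩
  · intro τ hτ; simp only [Cf.G]; ring_nf; positivity
  · intro τ hτ; simp only [Cf.G]; ring_nf; positivity
  · simp only [List.forall_mem_singleton]
    refine ev_false (h.not_bb_zero fun s t hp => ?_)
    have := hp.neg
    simp only [sg_false, one_mul] at this
    exact absurd (hcr s t hp.gs hp.gt) (not_lt.2 this.le)

theorem facts_star1 : ∃ l, Facts l star1 := by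
  obtain ⟨l, c, h⟩ := nf_exists ⟨0, 0, 4, 4, 0, -2⟩
  have hcr : ∀ s t : ℝ, Cf.Gs ⟨0, 0, 4, 4, 0, -2⟩ s t = 0 → Cf.Gt ⟨0, 0, 4, 4, 0, -2⟩ s t = 0 →
      (s = 0 ∧ t = 0) ∨ Cf.G ⟨0, 0, 4, 4, 0, -2⟩ s t = 2 := by
    intro s t h1 h2
    simp only [Cf.G, Cf.Gs, Cf.Gt] at *
    by_cases hs : s = 0
    · subst hs
      have : t * (t ^ 2 + 2) = 0 := by linear_combination h2 / 4
      rcases mul_eq_zero.1 this with h | h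
      · exact Or.inl ⟨rfl, h⟩
      · nlinarith [sq_nonneg t]
    by_cases ht : t = 0
    · subst ht
      have : s * (s ^ 2 + 2) = 0 := by linear_combination h1 / 4
      rcases mul_eq_zero.1 this with h | h
      · exact Or.inl ⟨h, rfl⟩
      · nlinarith [sq_nonneg s]
    have e1 : s ^ 2 - 3 * t ^ 2 + 2 = 0 :=
      mul_left_cancel₀ hs (by linear_combination h1 / 4)
    have e2 : t ^ 2 - 3 * s ^ 2 + 2 = 0 :=
      mul_left_cancel₀ ht (by linear_combination h2 / 4)
    have es : s ^ 2 = 1 := by linarith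
    have et : t ^ 2 = 1 := by linarith
    right
    have : s ^ 4 = 1 := by rw [show s ^ 4 = (s ^ 2) ^ 2 by ring, es]; norm_num
    have : t ^ 4 = 1 := by rw [show t ^ 4 = (t ^ 2) ^ 2 by ring, et]; norm_num
    rw [mul_assoc, es, et]; linarith
  refine ⟨l, h.facts (h.nc fun s t h0 h1 h2 => ?_)
    (h.sh_star (fun s t => by simp only [Cf.G]; ring) 1 1 ?_ ?_) ?_⟩
  · rcases hcr s t h1 h2 with ⟨rfl, rfl⟩ | h'
    · norm_num [Cf.G] at h0
    · linarith
  · intro τ hτ; simp only [Cf.G]; nlinarith [sq_nonneg ((1 + τ) ^ 2 - 1)]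
  · intro τ hτ; simp only [Cf.G]; nlinarith [sq_nonneg ((1 + τ) ^ 2 - 1)]
  · repeat rw [List.forall_mem_cons]
    refine ⟨ev_true ?_, ev_false ?_, by simp⟩
    · refine h.boxes (m := 0) (fun _ => 0) (fun _ => 0) (fun _ => -1) (fun _ => 1) (fun _ => -1)
        (fun _ => 1) (fun _ => ?_) (by norm_num) (by norm_num) (by norm_num [Cf.G])
        (fun i j hij => absurd (Subsingleton.elim (α := Fin 1) i j) hij)
      rintro s t - - - - (rfl | rfl | rfl | rfl) <;> simp only [Cf.G, sg_false, one_mul]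
      · nlinarith [sq_nonneg (t ^ 2 - 1)]
      · nlinarith [sq_nonneg (t ^ 2 - 1)]
      · nlinarith [sq_nonneg (s ^ 2 - 1)]
      · nlinarith [sq_nonneg (s ^ 2 - 1)]
    · refine h.not_bb (m := 1) (fun _ _ => (0 : Fin 1)) fun s t s' t' hp hp' _ => ?_
      have a := hp.neg
      have b := hp'.neg
      simp only [sg_false, one_mul] at a b
      rcases hcr s t hp.gs hp.gt with ⟨rfl, rfl⟩ | h'
      · rcases hcr s' t' hp'.gs hp'.gt with ⟨rfl, rfl⟩ | h'
        · exact ⟨rfl, rfl⟩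
        · linarith
      · linarith

theorem facts_star2 : ∃ l, Facts l star2 := by
  obtain ⟨l, c, h⟩ := nf_exists ⟨0, 0, 28, -4, 0, 2⟩
  have hcr : ∀ s t : ℝ, Cf.Gs ⟨0, 0, 28, -4, 0, 2⟩ s t = 0 → Cf.Gt ⟨0, 0, 28, -4, 0, 2⟩ s t = 0 →
      (s = 0 ∧ t = 0) ∨ (s = 0 ∧ t ^ 2 = 2) ∨ (s ^ 2 = 1 ∧ t ^ 2 = 5) := by
    intro s t h1 h2
    simp only [Cf.Gs, Cf.Gt] at *
    by_cases hs : s = 0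
    · subst hs
      have : t * (t ^ 2 - 2) = 0 := by linear_combination h2 / 4
      rcases mul_eq_zero.1 this with h | h
      · exact Or.inl ⟨rfl, h⟩
      · exact Or.inr (Or.inl ⟨rfl, by linarith⟩)
    have e1 : s ^ 2 - 3 * t ^ 2 + 14 = 0 :=
      mul_left_cancel₀ hs (by linear_combination h1 / 4)
    by_cases ht : t = 0
    · subst ht
      nlinarith [sq_nonneg s]
    have e2 : t ^ 2 - 3 * s ^ 2 - 2 = 0 :=
      mul_left_cancel₀ ht (by linear_combination h2 / 4)
    exact Or.inr (Or.inr ⟨by linarith, by linarith⟩)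
  have hpit : ∀ s t : ℝ, PitC ⟨0, 0, 28, -4, 0, 2⟩ false s t → s = 0 ∧ t ^ 2 = 2 := by
    intro s t hp
    rcases hcr s t hp.gs hp.gt with ⟨rfl, rfl⟩ | h' | ⟨h1, h2⟩
    · have := hp.neg
      norm_num [Cf.G] at this
    · exact h'
    · have := hp.hess 10 (s * t)
      simp only [Cf.H, sg_false, one_mul] at this
      have e : (s * t) * (t * (2 * 0 - 24 * s)) = -24 * (s ^ 2 * t ^ 2) := by ring
      rw [mul_assoc 10 (s * t), e, mul_pow, h1, h2] at this
      norm_num at this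
  have hf : ∀ t t' : ℝ, form false (Ph c 0 t' - Ph c 0 t) =
      -(2 * bt * (bt ^ 2 - 1)) * (t' - t) ^ 2 := by
    intro t t'
    simp only [form, Ph, Prod.fst_sub, Prod.snd_sub, Bool.false_eq_true, if_false]
    ring
  have hb : 0 < 2 * bt * (bt ^ 2 - 1) := by nlinarith [bt_gt, bt_sq]
  have hbox : ∀ v : ℝ, v = 0 ∨ v ^ 2 = 4 → ∀ s : ℝ, 0 ≤ Cf.G ⟨0, 0, 28, -4, 0, 2⟩ s v := by
    rintro v (rfl | hv) s
    · simp only [Cf.G]; ring_nf; positivity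
    · have : v ^ 4 = 16 := by rw [show v ^ 4 = (v ^ 2) ^ 2 by ring, hv]; norm_num
      simp only [Cf.G, hv, this]; ring_nf; positivity
  have hbox' : ∀ s : ℝ, s ^ 2 = 1 → ∀ v : ℝ, 0 ≤ Cf.G ⟨0, 0, 28, -4, 0, 2⟩ s v := by
    intro s hs v
    have : s ^ 4 = 1 := by rw [show s ^ 4 = (s ^ 2) ^ 2 by ring, hs]; norm_num
    simp only [Cf.G, hs, this]
    nlinarith [sq_nonneg (v ^ 2 - 5)]
  have hB1 : IsBox ⟨0, 0, 28, -4, 0, 2⟩ false (-1) 1 0 2 := by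
    rintro s t - - - - (rfl | rfl | rfl | rfl) <;> simp only [sg_false, one_mul]
    exacts [hbox' _ (by norm_num) _, hbox' _ (by norm_num) _, hbox _ (by norm_num) _,
      hbox _ (by norm_num) _]
  have hB2 : IsBox ⟨0, 0, 28, -4, 0, 2⟩ false (-1) 1 (-2) 0 := by
    rintro s t - - - - (rfl | rfl | rfl | rfl) <;> simp only [sg_false, one_mul]
    exacts [hbox' _ (by norm_num) _, hbox' _ (by norm_num) _, hbox _ (by norm_num) _,
      hbox _ (by norm_num) _]
  have hbb : ∀ᶠ R : ℝ in atTop, Holds R l (.bb false 1) := by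
    refine h.boxes (m := 1) (fun _ => 0) ![1, -1] (fun _ => -1) (fun _ => 1) ![0, -2] ![2, 0]
      ?_ ?_ ?_ ?_ ?_
    · intro i; fin_cases i
      exacts [hB1, hB2]
    · norm_num
    · intro i; fin_cases i <;> norm_num
    · intro i; fin_cases i <;> norm_num [Cf.G]
    · intro i j hij; fin_cases i <;> fin_cases j <;> norm_num at *
  refine ⟨l, h.facts (h.nc fun s t h0 h1 h2 => ?_)
    (h.sh_star (fun s t => by simp only [Cf.G]; ring) 1 2 ?_ ?_) ?_⟩
  · simp only [Cf.G] at h0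
    rcases hcr s t h1 h2 with ⟨rfl, rfl⟩ | ⟨rfl, h'⟩ | ⟨h', h''⟩
    · norm_num at h0
    · rw [show t ^ 4 = (t ^ 2) ^ 2 by ring, h'] at h0; norm_num at h0
    · rw [show t ^ 4 = (t ^ 2) ^ 2 by ring, show s ^ 4 = (s ^ 2) ^ 2 by ring, h', h''] at h0
      norm_num at h0
  · intro τ hτ; simp only [Cf.G]; nlinarith [sq_nonneg ((2 + τ) ^ 2 - 5)]
  · intro τ hτ; simp only [Cf.G]; ring_nf; positivity
  · repeat rw [List.forall_mem_cons]
    refine ⟨ev_true ?_, ev_true hbb, ev_true ?_, ev_false ?_, by simp⟩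
    · filter_upwards [hbb] with R hR using holds_bb_mono (by decide) hR
    · have d1 := h.box_bd hB1 (s := 0) (t := 1) (by norm_num) (by norm_num) (by norm_num [Cf.G])
      have d2 := h.box_bd hB2 (s := 0) (t := -1) (by norm_num) (by norm_num) (by norm_num [Cf.G])
      filter_upwards [d1, d2] with R e1 e2
      refine ⟨_, _, e1, e2, h.box_sep hB1 (by norm_num) (by norm_num) ?_ R, ?_⟩
      · rw [sc_Ph, tc_Ph]; norm_num
      · rw [hf]; simp only [sg]; norm_num; nlinarith
    · refine h.not_sl fun s t s' t' hp hp' => ?_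
      rw [(hpit _ _ hp).1, (hpit _ _ hp').1, hf, sg_false]
      nlinarith [sq_nonneg (t' - t)]

theorem facts_path2 : ∃ l, Facts l path2 := by
  obtain ⟨l, c, h⟩ := nf_exists ⟨0, 0, 4, -4, 0, 1⟩
  refine ⟨l, h.facts (h.nc fun s t h0 h1 h2 => ?_)
    (h.sh_path (fun s t => by simp only [Cf.G]; ring) (7 / 5) ?_ ?_) (by simp)⟩
  · simp only [Cf.G, Cf.Gs, Cf.Gt] at *
    by_cases hs : s = 0
    · subst hs
      have : t * (t ^ 2 - 2) = 0 := by linear_combination h2 / 4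
      rcases mul_eq_zero.1 this with h | h
      · subst h; norm_num at h0
      · nlinarith
    have e1 : s ^ 2 - 3 * t ^ 2 + 2 = 0 :=
      mul_left_cancel₀ hs (by linear_combination h1 / 4)
    by_cases ht : t = 0
    · subst ht
      nlinarith [sq_nonneg s]
    have e2 : t ^ 2 - 3 * s ^ 2 - 2 = 0 :=
      mul_left_cancel₀ ht (by linear_combination h2 / 4)
    nlinarith [sq_nonneg s, sq_nonneg t]
  · intro τ hτ; simp only [Cf.G]
    have : 0 ≤ τ ^ 3 := by positivity
    have : 0 ≤ τ ^ 4 := by positivity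
    nlinarith
  · intro s; simp only [Cf.G]; ring_nf; positivity

end X92

namespace X92

open Set Filter Topology

/-! ### Examples with three shielded vertices -/

/-- Labels of three shielded vertices and no vertex-free component. -/
def tri0 : List (Atom × Bool) := shL [0, 2, 5] ++ [(.bb false 0, false), (.bb true 0, false)]

/-- Labels of three shielded vertices and one vertex-free negative component. -/
def tri1 : List (Atom × Bool) := shL [0, 2, 5] ++ [(.bb false 0, true), (.bb false 1, false)]

/-- Labels of three shielded vertices and two vertex-free negative components. -/
def tri2 : List (Atom × Bool) := shL [0, 2, 5] ++
  [(.bb false 0, true), (.bb false 1, true), (.bb false 2, false)]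

/-- Labels of three shielded vertices and three vertex-free negative components. -/
def tri3 : List (Atom × Bool) := shL [0, 2, 5] ++
  [(.bb false 0, true), (.bb false 1, true), (.bb false 2, true)]

/-- Labels of three shielded vertices and a vertex-free positive component. -/
def triN : List (Atom × Bool) := shL [0, 2, 5] ++ [(.bb false 0, false), (.bb true 0, true)]

theorem facts_tri0 : ∃ l, Facts l tri0 := by
  obtain ⟨l, c, h⟩ := nf_exists ⟨0, 0, 0, 0, 8, 1⟩
  have hno : ∀ s t : ℝ, t ^ 2 = s ^ 2 → Cf.Gs ⟨0, 0, 0, 0, 8, 1⟩ s t = 0 →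
      Cf.Gt ⟨0, 0, 0, 0, 8, 1⟩ s t = 0 → False := by
    intro s t hT h1 h2
    simp only [Cf.Gs, Cf.Gt, hT] at h1 h2
    have e1 : s ^ 3 = 1 := by linear_combination -h1 / 8
    have e2 : t * s ^ 2 = 0 := by linear_combination -h2 / 8
    rcases mul_eq_zero.1 e2 with h0 | h0
    · rw [h0] at hT
      have : s = 0 := pow_eq_zero_iff two_ne_zero |>.1 (by rw [← hT]; norm_num)
      rw [this] at e1; norm_num at e1
    · have : s = 0 := pow_eq_zero_iff two_ne_zero |>.1 h0
      rw [this] at e1; norm_num at e1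
  refine ⟨l, h.facts (nc_cert h ?_ ?_) (h.sh_tripod 1 (-1) ?_ ?_ ?_) ?_⟩
  · intro s h1 h2
    dsimp only at h1 h2
    have e : s = -1 / 6 := by linear_combination h1 / 6 - s * h2 / 24
    rw [e] at h2; norm_num at h2
  · intro s h1 h2
    dsimp only at h1 h2
    have e : s = -1 / 6 := by linear_combination h1 / 6 - s * h2 / 24
    rw [e] at h2; norm_num at h2
  · intro τ hτ; simp only [Cf.G]; nlinarith [sq_nonneg (τ ^ 2 - 3)]
  · intro τ hτ; simp only [Cf.G]; ring_nf; positivity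
  · intro τ hτ; simp only [Cf.G]
    have : 0 ≤ τ ^ 3 := by positivity
    have : 0 ≤ τ ^ 4 := by positivity
    nlinarith
  · repeat rw [List.forall_mem_cons]
    refine ⟨ev_false ?_, ev_false ?_, by simp⟩ <;> refine h.not_bb_zero fun s t hp => ?_
    all_goals
      refine hno s t ?_ hp.gs hp.gt
      have a := hp.hess 1 0
      have b := hp.hess 0 1
      simp only [Cf.H, sg] at a b
      norm_num at a b
      linarith

theorem facts_tri1 : ∃ l, Facts l tri1 := by
  obtain ⟨l, c, h⟩ := nf_exists ⟨0, 0, -14, 48, 24, -19 / 2⟩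
  have hpit : ∀ s t : ℝ, PitC ⟨0, 0, -14, 48, 24, -19 / 2⟩ false s t → s = 2 ∧ t = 0 := by
    intro s t hp
    rcases crit_split hp.gt with rfl | ⟨ht, hT⟩
    · have h1 := hp.gs
      have h2 := hp.hess 1 0
      have h3 := hp.hess 0 1
      simp only [Cf.Gs, Cf.H, sg_false, one_mul] at h1 h2 h3
      norm_num at h2 h3
      have : (s - 1) * ((s - 2) * (s + 3)) = 0 := by linear_combination h1 / 4
      rcases mul_eq_zero.1 this with h | h
      · obtain rfl : s = 1 := by linarith
        norm_num at h2
      rcases mul_eq_zero.1 h with h | h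
      · exact ⟨by linarith, rfl⟩
      · obtain rfl : s = -3 := by linarith
        norm_num at h3
    · have := (hp.off ht hT).2
      dsimp only at this hT
      nlinarith [sq_nonneg t]
  refine ⟨l, h.facts (nc_cert h ?_ ?_) (h.sh_tripod 3 (-3) ?_ ?_ ?_) ?_⟩
  · intro s h1 h2
    dsimp only at h1 h2
    have : (1 : ℝ) = 0 := by
      linear_combination
        ((354/253) + (-328/759) * s + (-76/253) * s ^ 2) * h1 + ((452/759) + (-443/506) * s +
        (82/759) * s ^ 2 + (19/253) * s ^ 3) * h2
    norm_num at this
  · intro s h1 h2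
    dsimp only at h1 h2
    have : (1 : ℝ) = 0 := by
      linear_combination
        ((-3102/12098509) + (584864/36295527) * s + (57648/12098509) * s ^ 2) * h1 +
        ((1285286/36295527) + (117873/12098509) * s + (-146216/36295527) * s ^ 2 +
        (-14412/12098509) * s ^ 3) * h2
    norm_num at this
  · intro τ hτ; simp only [Cf.G]; nlinarith [sq_nonneg (τ ^ 2 - 3)]
  · intro τ hτ; simp only [Cf.G]; ring_nf; positivity
  · intro τ hτ; simp only [Cf.G]
    have : 0 ≤ τ ^ 3 := by positivity
    nlinarith [sq_nonneg (τ ^ 2 - 17 / 4)]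
  · repeat rw [List.forall_mem_cons]
    refine ⟨ev_true ?_, ev_false ?_, by simp⟩
    · refine h.boxes (m := 0) (fun _ => 2) (fun _ => 0) (fun _ => 1) (fun _ => 3) (fun _ => -4)
        (fun _ => 4) (fun _ => ?_) (by norm_num) (by norm_num) (by norm_num [Cf.G])
        (fun i j hij => absurd (Subsingleton.elim (α := Fin 1) i j) hij)
      rintro s t h1 h2 - - (rfl | rfl | rfl | rfl) <;> simp only [Cf.G, sg_false, one_mul]
      · ring_nf; positivity
      · nlinarith [sq_nonneg (t ^ 2 - 3)]
      · nlinarith [sq_nonneg (s ^ 2)]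
      · nlinarith [sq_nonneg (s ^ 2)]
    · refine h.not_bb (m := 1) (fun _ _ => (0 : Fin 1)) fun s t s' t' hp hp' _ => ?_
      rw [(hpit _ _ hp).1, (hpit _ _ hp').1, (hpit _ _ hp).2, (hpit _ _ hp').2]
      exact ⟨rfl, rfl⟩

/-- Off the axis, local minima on the same side of it coincide: the partial minimum of `k.G` in
`t` is a quartic in `s` with negative leading coefficient, hence has at most one local minimum. -/
theorem PitC.off_unique {k : Cf} {s t s' t' : ℝ} (h : PitC k false s t) (h' : PitC k false s' t')
    (ht : t ≠ 0) (hT : t ^ 2 = 3 * s ^ 2 - k.B * s / 2 - k.Q / 2)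
    (ht' : t' ≠ 0) (hT' : t' ^ 2 = 3 * s' ^ 2 - k.B * s' / 2 - k.Q / 2)
    (hside : 0 < t ↔ 0 < t') : s = s' ∧ t = t' := by
  obtain ⟨a, b⟩ := h.off ht hT
  obtain ⟨a', b'⟩ := h'.off ht' hT'
  have hs : s = s' := by
    by_contra hne
    have hd : s - s' ≠ 0 := sub_ne_zero.2 hne
    have e : -32 * (s ^ 2 + s * s' + s' ^ 2) + 3 * (k.A + 3 * k.B) * (s + s') +
        2 * (k.P - k.B ^ 2 / 4 + 3 * k.Q) = 0 :=
      mul_left_cancel₀ hd (by linear_combination a - a')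
    have : 0 < (s - s') ^ 2 := by positivity
    nlinarith
  refine ⟨hs, ?_⟩
  subst hs
  rcases sq_eq_sq_iff_eq_or_eq_neg.1 (hT.trans hT'.symm) with e | e
  · exact e
  · rcases ht.lt_or_gt with h | h
    · have := hside.2 (by linarith); linarith
    · have := hside.1 h; linarith

/-- The shielded vertices are `0`, `2`, `5` for all members of a family in which only the constant term
varies. -/
theorem tri_sh {l : Par} {c : ℝ × ℝ} {e : ℝ} (he : 1 ≤ e) (he' : e ≤ 3)
    (h : NF l c ⟨1000, -60, 0, 8, -30, e⟩) :
    ∀ᶠ R : ℝ in atTop, ∀ i : Fin 8, Holds R l (.sh i) ↔ i ∈ [(0 : Fin 8), 2, 5] := by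
  refine h.sh_tripod 1 (-1) ?_ ?_ ?_ <;> intro τ hτ <;> simp only [Cf.G] <;>
    have h3 : 0 ≤ τ ^ 3 := by positivity
  all_goals have h4 : 0 ≤ τ ^ 4 := by positivity
  · nlinarith [sq_nonneg (τ ^ 2 - 29)]
  · nlinarith
  · nlinarith

/-- In the same family, `k.G` is non-negative on the boundary of boxes in the strip
`3 / 20 ≤ s ≤ 1` bounded by two of the lines `t = 0` and `t = ±10`. -/
theorem tri_box {e : ℝ} (he : 17 / 10 ≤ e) {u v : ℝ} (hu : u = 0 ∨ u ^ 2 = 100)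
    (hv : v = 0 ∨ v ^ 2 = 100) : IsBox ⟨1000, -60, 0, 8, -30, e⟩ false (3 / 20) 1 u v := by
  have key : ∀ u : ℝ, u = 0 ∨ u ^ 2 = 100 → ∀ s : ℝ, 3 / 20 ≤ s → s ≤ 1 →
      0 ≤ Cf.G ⟨1000, -60, 0, 8, -30, e⟩ s u := by
    rintro u (rfl | hu) s h1 h2
    · simp only [Cf.G]
      have : 0 ≤ s ^ 4 := by positivity
      nlinarith [mul_nonneg (sub_nonneg.2 h1) (sub_nonneg.2 h1),
        mul_nonneg (mul_nonneg (sub_nonneg.2 h1) (sub_nonneg.2 h1)) (sub_nonneg.2 h1)]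
    · have h4 : u ^ 4 = 10000 := by rw [show u ^ 4 = (u ^ 2) ^ 2 by ring, hu]; norm_num
      simp only [Cf.G, hu, h4]
      have : 0 ≤ s ^ 4 := by positivity
      have : 0 ≤ s ^ 3 := by positivity
      nlinarith
  rintro s t h1 h2 - - (rfl | rfl | rfl | rfl) <;> simp only [sg_false, one_mul]
  · simp only [Cf.G]; nlinarith [sq_nonneg (t ^ 2 - 227 / 400)]
  · simp only [Cf.G]; nlinarith [sq_nonneg (t ^ 2 - 29)]
  · exact key _ hu s h1 h2
  · exact key _ hv s h1 h2

theorem facts_tri2 : ∃ l, Facts l tri2 := by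
  obtain ⟨l, c, h⟩ := nf_exists ⟨1000, -60, 0, 8, -30, 3⟩
  have hbb : ∀ᶠ R : ℝ in atTop, Holds R l (.bb false 1) := by
    refine h.boxes (m := 1) (fun _ => 2 / 5) ![3, -3] (fun _ => 3 / 20) (fun _ => 1) ![0, -10]
      ![10, 0] ?_ ?_ ?_ ?_ ?_
    · intro i; fin_cases i <;> exact tri_box (by norm_num) (by norm_num) (by norm_num)
    · norm_num
    · intro i; fin_cases i <;> norm_num
    · intro i; fin_cases i <;> norm_num [Cf.G]
    · intro i j hij; fin_cases i <;> fin_cases j <;> norm_num at *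
  have hax : ∀ s t : ℝ, PitC ⟨1000, -60, 0, 8, -30, 3⟩ false s t →
      t ≠ 0 ∧ t ^ 2 = 3 * s ^ 2 - -60 * s / 2 - 8 / 2 := by
    intro s t hp
    rcases crit_split hp.gt with rfl | h'
    · exfalso
      have h1 := hp.neg
      have h2 := hp.hess 1 0
      have h3 := hp.hess 0 1
      simp only [Cf.G, Cf.H, sg_false, one_mul] at h1 h2 h3
      norm_num at h1 h2 h3
      have hs : 0 ≤ s := by
        by_contra hn
        push Not at hn
        have : s ≤ -500 := by by_contra hm; push Not at hm; nlinarith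
        nlinarith
      nlinarith [mul_nonneg (sq_nonneg (10 * s - 1)) (by linarith : (0 : ℝ) ≤ 10 * s + 2),
        sq_nonneg (s ^ 2)]
    · exact h'
  refine ⟨l, h.facts (nc_cert h ?_ ?_) (tri_sh (by norm_num) (by norm_num) h) ?_⟩
  · intro s h1 h2
    dsimp only at h1 h2
    have : (1 : ℝ) = 0 := by
      linear_combination
        ((562493639984/937612291827) + (1249999749960/312537430609) * s + (4998999100/937612291827)
        * s ^ 2) * h1 + ((49991241875/1875224583654) + (-187493714996/937612291827) * s +
        (-1249937256220/937612291827) * s ^ 2 + (-1249749775/937612291827) * s ^ 3) * h2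
    norm_num at this
  · intro s h1 h2
    dsimp only at h1 h2
    have : (1 : ℝ) = 0 := by
      linear_combination
        ((67590331603/75499304045) + (-627201314628/377496520225) * s + (8177343264/377496520225) *
        s ^ 2) * h1 + ((22718419402/377496520225) + (-187241878481/377496520225) * s +
        (209186433942/377496520225) * s ^ 2 + (-2044335816/377496520225) * s ^ 3) * h2
    norm_num at this
  · repeat rw [List.forall_mem_cons]
    refine ⟨ev_true ?_, ev_true hbb, ev_false ?_, by simp⟩
    · filter_upwards [hbb] with R hR using holds_bb_mono (by decide) hR
    · classical
      refine h.not_bb (m := 2) (fun _ t => if 0 < t then (0 : Fin 2) else (1 : Fin 2))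
        fun s t s' t' hp hp' hc => ?_
      obtain ⟨ht, hT⟩ := hax s t hp
      obtain ⟨ht', hT'⟩ := hax s' t' hp'
      refine hp.off_unique hp' ht hT ht' hT' ?_
      by_cases a : 0 < t <;> by_cases b : 0 < t' <;> simp [a, b] at hc ⊢

theorem facts_tri3 : ∃ l, Facts l tri3 := by
  obtain ⟨l, c, h⟩ := nf_exists ⟨1000, -60, 0, 8, -30, 17 / 10⟩
  have hB : IsBox ⟨1000, -60, 0, 8, -30, 17 / 10⟩ false (-1 / 10) (3 / 20) (-10) 10 := by
    rintro s t h1 h2 - - (rfl | rfl | rfl | rfl) <;> simp only [Cf.G, sg_false, one_mul]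
    · nlinarith [sq_nonneg t, sq_nonneg (t ^ 2)]
    · nlinarith [sq_nonneg (t ^ 2 - 227 / 400)]
    · nlinarith [sq_nonneg (s ^ 2), sq_nonneg s, mul_nonneg (sq_nonneg s)
        (by linarith : (0 : ℝ) ≤ s + 1 / 10)]
    · nlinarith [sq_nonneg (s ^ 2), sq_nonneg s, mul_nonneg (sq_nonneg s)
        (by linarith : (0 : ℝ) ≤ s + 1 / 10)]
  have hbb : ∀ᶠ R : ℝ in atTop, Holds R l (.bb false 2) := by
    refine h.boxes (m := 2) ![2 / 5, 2 / 5, 1 / 10] ![3, -3, 0] ![3 / 20, 3 / 20, -1 / 10]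
      ![1, 1, 3 / 20] ![0, -10, -10] ![10, 0, 10] ?_ ?_ ?_ ?_ ?_
    · intro i; fin_cases i
      · exact tri_box (by norm_num) (by norm_num) (by norm_num)
      · exact tri_box (by norm_num) (by norm_num) (by norm_num)
      · exact hB
    · intro i; fin_cases i <;> norm_num
    · intro i; fin_cases i <;> norm_num
    · intro i; fin_cases i <;> norm_num [Cf.G]
    · intro i j hij; fin_cases i <;> fin_cases j <;> norm_num at *
  refine ⟨l, h.facts (nc_cert h ?_ ?_) (tri_sh (by norm_num) (by norm_num) h) ?_⟩
  · intro s h1 h2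
    dsimp only at h1 h2
    have : (1 : ℝ) = 0 := by
      linear_combination
        ((-358586648619220/234068865450451) + (-4218749156173500/234068865450451) * s +
        (-5624361487500/234068865450451) * s ^ 2) * h1 + ((-3308494776875/27537513582406) +
        (119524196436055/234068865450451) * s + (1406209882012125/234068865450451) * s ^ 2 +
        (1406090371875/234068865450451) * s ^ 3) * h2
    norm_num at this
  · intro s h1 h2
    dsimp only at h1 h2
    have : (1 : ℝ) = 0 := by
      linear_combination
        ((874172197741610/162979668063977) + (-1567999603722000/162979668063977) * s +
        (20438259206400/162979668063977) * s ^ 2) * h1 + ((60303057598900/162979668063977) +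
        (-477845709265190/162979668063977) * s + (522932498971500/162979668063977) * s ^ 2 +
        (-5109564801600/162979668063977) * s ^ 3) * h2
    norm_num at this
  · repeat rw [List.forall_mem_cons]
    refine ⟨ev_true ?_, ev_true ?_, ev_true hbb, by simp⟩ <;>
    · filter_upwards [hbb] with R hR using holds_bb_mono (by decide) hR

theorem facts_triN : ∃ l, Facts l triN := by
  obtain ⟨l, c, h⟩ := nf_exists ⟨0, 13, -2, -8, 0, 1 / 2⟩
  refine ⟨l, h.facts (nc_cert h ?_ ?_) (h.sh_tripod (17 / 10) (-1) ?_ ?_ ?_) ?_⟩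
  · intro s h1 h2
    dsimp only at h1 h2
    have : (1 : ℝ) = 0 := by
      linear_combination
        (2 + -4 * s ^ 2) * h1 + ((-3/2) * s + 1 * s ^ 3) * h2
    norm_num at this
  · intro s h1 h2
    dsimp only at h1 h2
    have : (1 : ℝ) = 0 := by
      linear_combination
        ((5554462/1166623) + (-448500/37633) * s + (6953856/1166623) * s ^ 2) * h1 + ((54132/37633)
        + (-5293783/1166623) * s + (5594628/1166623) * s ^ 2 + (-1738464/1166623) * s ^ 3) * h2
    norm_num at this
  · intro τ hτ; simp only [Cf.G]; nlinarith [sq_nonneg (τ ^ 2 - 81 / 50)]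
  · intro τ hτ; simp only [Cf.G]
    have : 0 ≤ τ ^ 3 := by positivity
    have : 0 ≤ τ ^ 4 := by positivity
    nlinarith
  · intro τ hτ; simp only [Cf.G]
    have : 0 ≤ τ ^ 3 := by positivity
    have : 0 ≤ τ ^ 4 := by positivity
    nlinarith
  · repeat rw [List.forall_mem_cons]
    refine ⟨ev_false ?_, ev_true ?_, by simp⟩
    · refine h.not_bb_zero fun s t hp => ?_
      rcases crit_split hp.gt with rfl | ⟨ht, hT⟩
      · have := hp.hess 0 1
        simp only [Cf.H, sg_false, one_mul] at this
        nlinarith [sq_nonneg (s - 13 / 12)]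
      · obtain ⟨h1, h2⟩ := hp.off ht hT
        dsimp only at h1 h2
        have hs : 9 / 10 ≤ s := by by_contra hn; push Not at hn; nlinarith
        nlinarith [mul_nonneg (sub_nonneg.2 hs) h2, sq_nonneg (s - 52 / 51)]
    · refine h.boxes (m := 0) (fun _ => 0) (fun _ => 0) (fun _ => -1) (fun _ => 1) (fun _ => -1)
        (fun _ => 1) (fun _ => ?_) (by norm_num) (by norm_num) (by norm_num [Cf.G, sg])
        (fun i j hij => absurd (Subsingleton.elim (α := Fin 1) i j) hij)
      have hsq : ∀ x : ℝ, -1 ≤ x → x ≤ 1 → 0 ≤ x ^ 2 ∧ x ^ 2 ≤ 1 ∧ x ^ 4 ≤ x ^ 2 := by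
        intro x h1 h2
        have : x ^ 2 ≤ 1 := by nlinarith
        exact ⟨sq_nonneg x, this, by nlinarith [sq_nonneg x]⟩
      rintro s t h1 h2 h3 h4 (rfl | rfl | rfl | rfl) <;> simp only [Cf.G, sg] <;> norm_num
      · obtain ⟨a, b, d⟩ := hsq t h3 h4; nlinarith
      · obtain ⟨a, b, d⟩ := hsq t h3 h4; nlinarith
      · obtain ⟨a, b, d⟩ := hsq s h1 h2; nlinarith [sq_nonneg (s - 13 / 14)]
      · obtain ⟨a, b, d⟩ := hsq s h1 h2; nlinarith [sq_nonneg (s - 13 / 14)]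

end X92

namespace X92

open Set Filter Topology

/-! ### The 52 types -/

/-- Some atomic property has opposite truth values in the two lists. -/
def conflict (L L' : List (Atom × Bool)) : Bool := L.any fun x => L'.contains (x.1, !x.2)

/-- The lists of truth values obtained from the basic ones by the symmetries. -/
def labels : List (List (Atom × Bool)) :=
  let r := fun L => [L, reflL L]
  let d := fun L => [L, rotL L]
  let q := fun L => [L, rotL L, rotL (rotL L), rotL (rotL (rotL L))]
  [star0, star1].flatMap r ++ ([star2, path2].flatMap d).flatMap r ++
    ([tri0, tri1, tri2, tri3, triN].flatMap q).flatMap r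

theorem labels_conflict : labels.Pairwise fun L L' => conflict L L' = true := by
  decide +kernel

theorem labels_length : labels.length = 52 := by decide +kernel

theorem labels_facts : ∀ L ∈ labels, ∃ l, Facts l L := by
  have hr : ∀ {L}, (∃ l, Facts l L) → ∃ l, Facts l (rotL L) := fun ⟨l, h⟩ => ⟨rot l, h.rot⟩
  have hm : ∀ {A : List (List (Atom × Bool))}, (∀ L ∈ A, ∃ l, Facts l L) →
      ∀ L ∈ A.flatMap fun L => [L, reflL L], ∃ l, Facts l L := by
    intro A hA L hL
    obtain ⟨B, hB, hL⟩ := List.mem_flatMap.1 hL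
    obtain ⟨l, h⟩ := hA B hB
    simp only [List.mem_cons, List.not_mem_nil, or_false] at hL
    rcases hL with rfl | rfl
    exacts [⟨l, h⟩, ⟨refl l, h.refl⟩]
  intro L hL
  simp only [labels, List.mem_append] at hL
  rcases hL with (hL | hL) | hL
  · refine hm ?_ L hL
    intro L hL
    simp only [List.mem_cons, List.not_mem_nil, or_false] at hL
    rcases hL with rfl | rfl
    exacts [facts_star0, facts_star1]
  · refine hm ?_ L hL
    intro L hL
    obtain ⟨B, hB, hL⟩ := List.mem_flatMap.1 hL
    have h : ∃ l, Facts l B := by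
      simp only [List.mem_cons, List.not_mem_nil, or_false] at hB
      rcases hB with rfl | rfl
      exacts [facts_star2, facts_path2]
    simp only [List.mem_cons, List.not_mem_nil, or_false] at hL
    rcases hL with rfl | rfl
    exacts [h, hr h]
  · refine hm ?_ L hL
    intro L hL
    obtain ⟨B, hB, hL⟩ := List.mem_flatMap.1 hL
    have h : ∃ l, Facts l B := by
      simp only [List.mem_cons, List.not_mem_nil, or_false] at hB
      rcases hB with rfl | rfl | rfl | rfl | rfl
      exacts [facts_tri0, facts_tri1, facts_tri2, facts_tri3, facts_triN]
    simp only [List.mem_cons, List.not_mem_nil, or_false] at hL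
    rcases hL with rfl | rfl | rfl | rfl
    exacts [h, hr h, hr (hr h), hr (hr (hr h))]

/-! ### Passage to the local discriminant -/

theorem X92Def_eq (p : EuclideanSpace ℝ (Fin 2)) (l : Par) : X92Def p l = FF l (p 0, p 1) := by
  simp only [X92Def, FF]

theorem fderiv_eq_zero_iff (l : Par) (p : EuclideanSpace ℝ (Fin 2)) :
    fderiv ℝ (fun q => X92Def q l) p = 0 ↔ gx l (p 0, p 1) = 0 ∧ gy l (p 0, p 1) = 0 := by
  have hd : DifferentiableAt ℝ (fun q => X92Def q l) p := by unfold X92Def; fun_prop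
  have hv : ∀ v : EuclideanSpace ℝ (Fin 2), fderiv ℝ (fun q => X92Def q l) p v =
      gx l (p 0, p 1) * v 0 + gy l (p 0, p 1) * v 1 := by
    intro v
    rw [← hd.lineDeriv_eq_fderiv, lineDeriv]
    have := (hasDerivAt_FF l (p 0, p 1) (v 0, v 1) 0).deriv
    simp only [zero_smul, add_zero] at this
    simpa [X92Def_eq] using this
  constructor
  · intro h
    have h0 := hv (EuclideanSpace.single 0 1)
    have h1 := hv (EuclideanSpace.single 1 1)
    rw [h] at h0 h1
    simp at h0 h1
    exact ⟨h0.symm, h1.symm⟩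
  · rintro ⟨h0, h1⟩
    ext v
    simp [hv, h0, h1]

/-- Rescaling moves a function with known labels into a prescribed neighbourhood of the
singularity, with a prescribed size of the octagon. -/
theorem Facts.small {l : Par} {L : List (Atom × Bool)} (h : Facts l L) {ρ δ : ℝ} (hρ : 0 < ρ)
    (hδ : 0 < δ) : ∃ l' : Par, ‖l'‖ < δ ∧ NC l' ∧ ∀ x ∈ L, (Holds ρ l' x.1 ↔ x.2 = true) := by
  obtain ⟨h8, hnc, hL⟩ := h
  have e1 : ∀ᶠ c : ℝ in 𝓝[>] 0, ‖scl c l‖ < δ := by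
    have := (tendsto_scl l h8).norm
    simp only [norm_zero] at this
    exact nhdsWithin_le_nhds (this.eventually (gt_mem_nhds hδ))
  have e2 : Tendsto (fun c : ℝ => ρ / c) (𝓝[>] 0) atTop := by
    simp only [div_eq_mul_inv]
    exact tendsto_inv_nhdsGT_zero.const_mul_atTop hρ
  have e3 : ∀ᶠ R : ℝ in atTop, ∀ x ∈ L, (Holds R l x.1 ↔ x.2 = true) := by
    have := (eventually_all_finite (l := atTop) (List.finite_toSet L)).2 hL
    exact this
  obtain ⟨c, c1, c2, c3⟩ := (e1.and ((e2.eventually e3).and self_mem_nhdsWithin)).exists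
  have hc : 0 < c := c3
  refine ⟨scl c l, c1, hnc.scl hc, fun x hx => ?_⟩
  rw [← c2 x hx, ← holds_scl (R := ρ / c) hc, mul_div_cancel₀ ρ hc.ne']

end X92

/-- The complement of the local discriminant of the `X₉²` singularity has at least 52
connected components. -/
theorem X92_discriminant_complement_components :
    ∃ ε₀ : ℝ, 0 < ε₀ ∧ ∀ ε : ℝ, 0 < ε → ε ≤ ε₀ → ∃ δ : ℝ, 0 < δ ∧
      ∃ pts : Fin 52 → EuclideanSpace ℝ (Fin 9),
        (∀ i, pts i ∈ ({l : EuclideanSpace ℝ (Fin 9) | ‖l‖ < δ} \ X92Disc ε δ)) ∧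
        Function.Injective (fun i =>
          connectedComponentIn ({l : EuclideanSpace ℝ (Fin 9) | ‖l‖ < δ} \ X92Disc ε δ)
            (pts i)) := by
  open X92 in
  refine ⟨1, one_pos, fun ε hε _ => ?_⟩
  -- the octagon of size `ε / 5` lies in the disc of radius `ε`
  have hρ : 0 < ε / 5 := by positivity
  obtain ⟨η, hη, δ, hδ, hgood⟩ := good_exists hρ
  refine ⟨δ, hδ, ?_⟩
  have hS : ∀ l ∈ {l : EuclideanSpace ℝ (Fin 9) | ‖l‖ < δ} \ X92Disc ε δ,
      Good (ε / 5) η l ∧ NoCrit (ε / 5) l := by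
    rintro l ⟨hl, hd⟩
    refine ⟨hgood l hl, fun p hp h0 hg => hd ⟨hl, !₂[p.1, p.2], ?_, ?_, ?_⟩⟩
    · obtain ⟨a, b⟩ := oct_abs hp
      have hb := bt_lt
      have a' : p.1 ^ 2 ≤ (bt * (ε / 5)) ^ 2 := sq_le_sq' (abs_le.1 a).1 (abs_le.1 a).2
      have b' : p.2 ^ 2 ≤ (bt * (ε / 5)) ^ 2 := sq_le_sq' (abs_le.1 b).1 (abs_le.1 b).2
      have hb2 : bt ^ 2 ≤ 6 := by rw [bt_sq]; linarith
      rw [EuclideanSpace.norm_eq, Real.sqrt_le_left hε.le]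
      simp [Fin.sum_univ_two]
      nlinarith [sq_nonneg ε]
    · simpa [X92Def_eq] using h0
    · exact (fderiv_eq_zero_iff l _).2 hg
  have hex : ∀ i : Fin 52, ∃ l' : Par, ‖l'‖ < δ ∧ NC l' ∧
      ∀ x ∈ labels.get (i.cast labels_length.symm), (Holds (ε / 5) l' x.1 ↔ x.2 = true) := by
    intro i
    obtain ⟨l, hl⟩ := labels_facts _ (List.get_mem labels (i.cast labels_length.symm))
    exact hl.small hρ hδ
  choose pts h1 h2 h3 using hex
  have hmem : ∀ i, pts i ∈ {l : EuclideanSpace ℝ (Fin 9) | ‖l‖ < δ} \ X92Disc ε δ := by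
    refine fun i => ⟨h1 i, ?_⟩
    rintro ⟨-, p, -, h0, hd⟩
    exact h2 i _ ((X92Def_eq p _).symm.trans h0) ((fderiv_eq_zero_iff _ p).1 hd)
  refine ⟨pts, hmem, ?_⟩
  have hne : ∀ i j : Fin 52, i < j →
      connectedComponentIn ({l : EuclideanSpace ℝ (Fin 9) | ‖l‖ < δ} \ X92Disc ε δ) (pts i) ≠
      connectedComponentIn ({l : EuclideanSpace ℝ (Fin 9) | ‖l‖ < δ} \ X92Disc ε δ) (pts j) := by
    intro i j hij e
    have hc := List.pairwise_iff_get.1 labels_conflict (i.cast labels_length.symm)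
      (j.cast labels_length.symm) hij
    obtain ⟨⟨a, b⟩, hx, hx'⟩ := List.any_eq_true.1 hc
    have hj := h3 j _ (List.contains_iff_mem.1 hx')
    rw [← holds_of_connected hρ hη hS (hmem i) (hmem j) e, h3 i _ hx] at hj
    cases b <;> simp at hj
  intro i j e
  rcases lt_trichotomy i j with h | h | h
  · exact absurd e (hne i j h)
  · exact h
  · exact absurd e.symm (hne j i h)
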